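/- arXiv:math/0502270 — 3 statements merged into one kernel-verified Lean document; each statement's English description precedes it below -/
import Mathlib

section
/- Let (W,S) be a Coxeter system satisfying: (0) for all s,t ∈ S with m(s,t) even, m(s,t) = 2; (1) for all s ≠ t ∈ S with m(s,t) odd, {s,t} is a maximal spherical subset of S; (2) there is no three-element subset {s,t,u} ⊆ S such that m(s,t) and m(t,u) are both odd; (3) for all s ≠ t ∈ S with m(s,t) odd, the number of maximal spherical subsets of S intersecting {s,t} is at most two. Then the Coxeter group W is rigid: for every Coxeter generating set S' for W, there exists a bijection ψ : S → S' such that m(s,t) = m'(ψ(s),ψ(t)) for all s,t ∈ S, where m' denotes orders with respect to the system (W,S'). -/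
/-!
The proof rests on the Tits representation of a Coxeter group on `B → ℝ`: the simple reflections act
as orthogonal reflections for the form `⟨αᵢ, αⱼ⟩ = -cos (π / M i j)`, and every root is positive or
negative (`rep_nonneg`).  Positivity yields three facts: `sᵢ sⱼ` has order exactly `M i j`
(`orderOf_simple_mul`), every finite subgroup is conjugate into a spherical parabolic subgroup
(`finite_subgroup_conj`), and a maximal spherical parabolic subgroup is not conjugate into another
spherical one (`maxSpherical_unique`).  So for two Coxeter generating sets `S`, `S'` of `W`, conjugacy
of parabolic subgroups is a bijection between maximal spherical subsets (`exists_equiv`).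

Under (0) and (1) a maximal spherical subset is either a pair `{s, t}` with `m(s,t)` odd or a set of
commuting generators.  A spherical subset of `S'` is conjugate into one of these groups, and three
simple reflections never lie in an odd dihedral group (`not_commute_triple`), so (0) and (1) hold for
`S'` as well (`Good.transfer`), and corresponding pairs have the same odd exponent (`Conj.odd`).

Call two generators equivalent if they are joined by a path of odd exponents.  Homomorphisms
`W → {1, -1}` are arbitrary sign functions on the classes, and such a homomorphism is trivial on `W_T`
exactly when it is trivial on the classes meeting `T`.  Hence, for every family of maximal spherical
subsets, the number of classes meeting none of them is an invariant of `W`: it is the logarithm of the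
number of characters trivial on these subgroups and their conjugates.  Möbius inversion produces a
bijection between the classes of `S` and of `S'` compatible with the maximal spherical subsets
(`exists_cls_equiv`).

By (2) a class has one or two elements, two exactly when it is a pair with odd exponent.  By (3) at most
one commuting maximal spherical subset meets such a pair, and it contains just one of the two elements.
Conditions (2) and (3) pass to `S'`, so corresponding classes can be matched element by element,
compatibly with commuting maximal spherical subsets (`Matching.exists_fiber_equiv`).  The resulting
bijection preserves odd exponents by construction, and the others because distinct `s`, `t` with
`m(s,t)` not odd have `m(s,t) = 2` exactly when a commuting maximal spherical subset contains both,
and `m(s,t) = ∞` otherwise (`rigid_matrix`).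
-/

/-- The standard parabolic subgroup `W_T` of a Coxeter system, generated by the
simple reflections indexed by `T`. -/
def CoxeterSystem.parabolic {B W : Type*} [Group W] {M : CoxeterMatrix B}
    (cs : CoxeterSystem M W) (T : Set B) : Subgroup W :=
  Subgroup.closure (cs.simple '' T)

/-- `T` is a spherical subset: the parabolic subgroup `W_T` is finite. -/
def CoxeterSystem.IsSpherical {B W : Type*} [Group W] {M : CoxeterMatrix B}
    (cs : CoxeterSystem M W) (T : Set B) : Prop :=
  Finite (cs.parabolic T)

/-- `T` is a maximal spherical subset: spherical and maximal under inclusion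
among spherical subsets. -/
def CoxeterSystem.IsMaxSpherical {B W : Type*} [Group W] {M : CoxeterMatrix B}
    (cs : CoxeterSystem M W) (T : Set B) : Prop :=
  cs.IsSpherical T ∧ ∀ U : Set B, cs.IsSpherical U → T ⊆ U → U = T

/-- The conjugate subgroup `g H g⁻¹`. -/
def conjSubgroup {G : Type*} [Group G] (g : G) (H : Subgroup G) : Subgroup G :=
  Subgroup.map (MulAut.conj g).toMonoidHom H

set_option linter.unusedSectionVars false

namespace CoxRigid

open Real Module

/-! ### The Tits form and its reflections -/

section Rep

variable {B : Type*} [Fintype B] [DecidableEq B] (M : CoxeterMatrix B)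

/-- The Tits form on `B → ℝ`, with `⟨αᵢ, αⱼ⟩ = -cos (π / M i j)`.  For `M i j = 0` (infinite order)
the junk value `π / 0 = 0` gives the customary `-1`. -/
noncomputable def form : LinearMap.BilinForm ℝ (B → ℝ) :=
  Matrix.toBilin' (Matrix.of fun i j => -cos (π / M i j))

/-- The simple root `αᵢ`, a standard basis vector of `B → ℝ`. -/
def sroot (i : B) : B → ℝ := Pi.single i 1

lemma form_sroot (i j : B) : form M (sroot i) (sroot j) = -cos (π / M i j) := by
  simp [form, sroot]

lemma form_comm (u v : B → ℝ) : form M u v = form M v u := by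
  have h : (form M).IsSymm := by
    rw [form, Matrix.isSymm_toBilin'_iff_isSymm]
    ext i j
    simp [M.symmetric i j]
  exact h.eq u v

lemma form_sroot_self (i : B) : form M (sroot i) (sroot i) = 1 := by
  simp [form_sroot]

lemma two_form_self (i : B) : ((2 : ℝ) • form M (sroot i)) (sroot i) = 2 := by
  simp [form_sroot_self]

/-- The simple reflection `v ↦ v - 2⟨αᵢ, v⟩ αᵢ`. -/
noncomputable def srefl (i : B) : (B → ℝ) ≃ₗ[ℝ] (B → ℝ) := reflection (two_form_self M i)

lemma srefl_apply (i : B) (v : B → ℝ) :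
    srefl M i v = v - (2 * form M (sroot i) v) • sroot i := by
  simp [srefl, reflection_apply]

lemma S_mul_sin (θ : ℝ) (k : ℤ) :
    (Polynomial.Chebyshev.S ℝ k).eval (2 * cos θ) * sin θ = sin ((k + 1) * θ) := by
  exact_mod_cast Polynomial.Chebyshev.S_two_mul_real_cos θ k

/-- With `θ = 2π / (2n)`, the polynomial `S_{n-1}` vanishes at `2 cos θ`. -/
lemma S_eval_even {n : ℕ} (hn : 2 ≤ n) {θ : ℝ} (hθ : n * θ = π) :
    (Polynomial.Chebyshev.S ℝ (n - 1)).eval (2 * cos θ) = 0 := by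
  have hn0 : (2 : ℝ) ≤ n := by exact_mod_cast hn
  have hθ0 : 0 < θ := by
    by_contra! h
    nlinarith [pi_pos]
  have hsin : 0 < sin θ := sin_pos_of_pos_of_lt_pi hθ0 (by nlinarith)
  have h := S_mul_sin θ (n - 1)
  have e : (((n - 1 : ℤ) : ℝ) + 1) * θ = π := by push_cast; linarith
  rw [e, sin_pi, mul_eq_zero] at h
  exact h.resolve_right hsin.ne'

/-- With `θ = 2π / (2n + 1)`, the polynomial `S_n + S_{n-1}` vanishes at `2 cos θ`. -/
lemma S_eval_odd {n : ℕ} (hn : 1 ≤ n) {θ : ℝ} (hθ : (2 * n + 1) * θ = 2 * π) :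
    (Polynomial.Chebyshev.S ℝ n).eval (2 * cos θ) +
      (Polynomial.Chebyshev.S ℝ (n - 1)).eval (2 * cos θ) = 0 := by
  have hn0 : (1 : ℝ) ≤ n := by exact_mod_cast hn
  have hθ0 : 0 < θ := by
    by_contra! h
    nlinarith [pi_pos]
  have hsin : 0 < sin θ := sin_pos_of_pos_of_lt_pi hθ0 (by nlinarith)
  have h := S_mul_sin θ (n - 1)
  have h' := S_mul_sin θ n
  have e : (((n - 1 : ℤ) : ℝ) + 1) * θ = 2 * π - (((n : ℤ) : ℝ) + 1) * θ := by
    push_cast; linarith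
  rw [e, sin_two_pi_sub] at h
  refine (mul_eq_zero.1 (?_ : _ * sin θ = 0)).resolve_right hsin.ne'
  rw [add_mul, h, h']
  ring

/-- The simple reflections satisfy the Coxeter relations, by the expression of the powers of a product
of two reflections through Chebyshev polynomials `S`. -/
lemma srefl_liftable : M.IsLiftable (srefl M) := by
  intro i j
  by_cases hij : i = j
  · subst hij
    rw [M.diagonal, pow_one]
    ext v : 1
    rw [LinearEquiv.mul_apply]
    exact involutive_reflection (two_form_self M i) v
  have h1 : M i j ≠ 1 := M.off_diagonal i j hij
  rcases Nat.lt_or_ge (M i j) 3 with h3 | h3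
  · interval_cases hm : M i j
    · simp
    · exact absurd rfl h1
    · have hc : form M (sroot i) (sroot j) = 0 := by rw [form_sroot, hm]; simp
      have hc' : form M (sroot j) (sroot i) = 0 := by rw [form_comm, hc]
      have e1 := form_sroot_self M i
      have e2 := form_sroot_self M j
      refine LinearEquiv.ext fun v => ?_
      simp only [pow_two, LinearEquiv.mul_apply, srefl_apply, map_sub, map_smul, hc, hc', e1, e2]
      simp only [LinearEquiv.coe_one, id]
      module
  · set m := M i j with hm
    have hm0 : (0 : ℝ) < m := by exact_mod_cast (by omega : 0 < m)
    set θ : ℝ := 2 * π / m with hθ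
    have ht : 2 * cos θ = ((2 : ℝ) • form M (sroot i)) (sroot j) *
        ((2 : ℝ) • form M (sroot j)) (sroot i) - 2 := by
      simp only [LinearMap.smul_apply, form_sroot, smul_eq_mul, M.symmetric j i, ← hm]
      rw [hθ, show 2 * π / (m : ℝ) = 2 * (π / m) by ring, cos_two_mul]
      ring
    refine LinearEquiv.ext fun v => ?_
    have key := reflection_mul_reflection_pow_apply (two_form_self M i) (two_form_self M j) m v
      (2 * cos θ) ht
    have hmθ : m * θ = 2 * π := by rw [hθ]; field_simp
    have c1 : (Polynomial.Chebyshev.S ℝ (((m : ℤ) - 2) / 2)).eval (2 * cos θ) *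
        ((Polynomial.Chebyshev.S ℝ (((m : ℤ) - 1) / 2)).eval (2 * cos θ) +
        (Polynomial.Chebyshev.S ℝ (((m : ℤ) - 3) / 2)).eval (2 * cos θ)) = 0 := by
      rcases Nat.even_or_odd' m with ⟨n, hn | hn⟩
      · have hmn : (m : ℝ) = 2 * n := by exact_mod_cast hn
        rw [show ((m : ℤ) - 2) / 2 = n - 1 by omega,
          S_eval_even (by omega) (by rw [hmn] at hmθ; linarith), zero_mul]
      · have hmn : (m : ℝ) = 2 * n + 1 := by exact_mod_cast hn
        rw [show ((m : ℤ) - 1) / 2 = n by omega, show ((m : ℤ) - 3) / 2 = n - 1 by omega,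
          S_eval_odd (by omega) (by rw [← hmn, hmθ]), mul_zero]
    have c2 : (Polynomial.Chebyshev.S ℝ (((m : ℤ) - 1) / 2)).eval (2 * cos θ) *
        ((Polynomial.Chebyshev.S ℝ ((m : ℤ) / 2)).eval (2 * cos θ) +
        (Polynomial.Chebyshev.S ℝ (((m : ℤ) - 2) / 2)).eval (2 * cos θ)) = 0 := by
      rcases Nat.even_or_odd' m with ⟨n, hn | hn⟩
      · have hmn : (m : ℝ) = 2 * n := by exact_mod_cast hn
        rw [show ((m : ℤ) - 1) / 2 = n - 1 by omega,
          S_eval_even (by omega) (by rw [hmn] at hmθ; linarith), zero_mul]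
      · have hmn : (m : ℝ) = 2 * n + 1 := by exact_mod_cast hn
        rw [show (m : ℤ) / 2 = n by omega, show ((m : ℤ) - 2) / 2 = n - 1 by omega,
          S_eval_odd (by omega) (by rw [← hmn, hmθ]), mul_zero]
    rw [c1, c2] at key
    rw [srefl, srefl, key]
    simp

end Rep

/-! ### Positivity of roots and orders of products of simple reflections -/

section Pos

variable {B : Type*} [Fintype B] [DecidableEq B] {M : CoxeterMatrix B} {W : Type*} [Group W]
  (cs : CoxeterSystem M W)

/-- The geometric (Tits) representation of a Coxeter group. -/
noncomputable def rep : W →* ((B → ℝ) ≃ₗ[ℝ] (B → ℝ)) := cs.lift ⟨srefl M, srefl_liftable M⟩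

lemma rep_simple (i : B) : rep cs (cs.simple i) = srefl M i :=
  cs.lift_apply_simple (srefl_liftable M) i

lemma rep_simple_apply (i : B) (v : B → ℝ) :
    rep cs (cs.simple i) v = v - (2 * form M (sroot i) v) • sroot i := by
  rw [rep_simple, srefl_apply]

lemma rep_mul_apply (w w' : W) (v : B → ℝ) : rep cs (w * w') v = rep cs w (rep cs w' v) := by
  rw [map_mul, LinearEquiv.mul_apply]

@[simp] lemma rep_one_apply (v : B → ℝ) : rep cs 1 v = v := by simp

@[simp] lemma rep_inv_apply (w : W) (v : B → ℝ) : rep cs w⁻¹ (rep cs w v) = v := by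
  rw [← rep_mul_apply]; simp

@[simp] lemma rep_apply_inv (w : W) (v : B → ℝ) : rep cs w (rep cs w⁻¹ v) = v := by
  rw [← rep_mul_apply]; simp

lemma rep_simple_sroot (i : B) : rep cs (cs.simple i) (sroot i) = -sroot i := by
  rw [rep_simple_apply, form_sroot_self]; module

lemma rep_simple_of_ne (i j : B) (v : B → ℝ) (h : j ≠ i) : rep cs (cs.simple i) v j = v j := by
  rw [rep_simple_apply]; simp [sroot, h]

lemma form_rep (w : W) (u v : B → ℝ) : form M (rep cs w u) (rep cs w v) = form M u v := by
  induction w using cs.simple_induction_left generalizing u v with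
  | one => simp
  | mul_simple_left w i ih =>
    rw [rep_mul_apply, rep_mul_apply, ← ih u v]
    simp only [rep_simple_apply, map_sub, map_smul, LinearMap.sub_apply, LinearMap.smul_apply,
      smul_eq_mul, form_sroot_self, form_comm M _ (sroot i)]
    ring

/-- Coefficients of roots in a dihedral subsystem: `p 0 = 0`, `p 1 = 1`,
`p (k + 2) = 2 c p (k + 1) - p k`, where `c = cos (π / m)`. -/
noncomputable def dcoef (m : ℕ) : ℕ → ℝ
  | 0 => 0
  | 1 => 1
  | k + 2 => 2 * cos (π / m) * dcoef m (k + 1) - dcoef m k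

lemma dcoef_zero (k : ℕ) : dcoef 0 k = k := by
  induction k using Nat.twoStepInduction with
  | zero => simp [dcoef]
  | one => simp [dcoef]
  | more k h1 h2 => rw [dcoef, h1, h2]; push_cast; simp; ring

lemma dcoef_mul_sin (m k : ℕ) : dcoef m k * sin (π / m) = sin (k * (π / m)) := by
  induction k using Nat.twoStepInduction with
  | zero => simp [dcoef]
  | one => simp [dcoef]
  | more k h1 h2 =>
    rw [dcoef, sub_mul, h1, mul_assoc, h2]
    have e1 : ((k + 2 : ℕ) : ℝ) * (π / m) = (k + 1 : ℕ) * (π / m) + π / m := by push_cast; ring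
    have e2 : (k : ℝ) * (π / m) = (k + 1 : ℕ) * (π / m) - π / m := by push_cast; ring
    rw [e1, e2, sin_add, sin_sub]
    ring

lemma sin_pi_div_pos {m : ℕ} (hm : 2 ≤ m) : 0 < sin (π / m) := by
  have : (2 : ℝ) ≤ m := by exact_mod_cast hm
  refine sin_pos_of_pos_of_lt_pi (by positivity) ?_
  rw [div_lt_iff₀ (by linarith)]
  nlinarith [pi_pos]

lemma dcoef_nonneg {m k : ℕ} (hm : m ≠ 1) (hk : m ≠ 0 → k ≤ m) : 0 ≤ dcoef m k := by
  rcases Nat.eq_zero_or_pos m with rfl | h0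
  · rw [dcoef_zero]; positivity
  · have hm2 : 2 ≤ m := by omega
    have hs := sin_pi_div_pos hm2
    have hkm : (k : ℝ) ≤ m := by exact_mod_cast hk h0.ne'
    have h0' : (0 : ℝ) < m := by exact_mod_cast h0
    have : 0 ≤ sin (k * (π / m)) := by
      refine sin_nonneg_of_nonneg_of_le_pi (by positivity) ?_
      rw [mul_div_assoc', div_le_iff₀ h0']
      nlinarith [pi_pos]
    rw [← dcoef_mul_sin] at this
    exact nonneg_of_mul_nonneg_left this hs

/-- The image of `αᵢ` under the alternating word of length `k` in `i`, `j` ending in `j`. -/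
lemma rep_alternating (i j : B) (k : ℕ) :
    rep cs (cs.wordProd (CoxeterSystem.alternatingWord i j k)) (sroot i) =
      if Even k then dcoef (M i j) (k + 1) • sroot i + dcoef (M i j) k • sroot j
      else dcoef (M i j) k • sroot i + dcoef (M i j) (k + 1) • sroot j := by
  induction k with
  | zero => simp [CoxeterSystem.alternatingWord, dcoef]
  | succ k ih =>
    rw [CoxeterSystem.alternatingWord_succ', cs.wordProd_cons, rep_mul_apply, ih]
    by_cases hk : Even k
    · have hk' : ¬ Even (k + 1) := by rwa [Nat.even_add_one, not_not]
      simp only [hk, hk', if_true, if_false, rep_simple_apply, map_add, map_smul,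
        form_sroot_self, form_sroot M j i, M.symmetric j i, dcoef]
      module
    · have hk' : Even (k + 1) := by rwa [Nat.even_add_one]
      simp only [hk, hk', if_true, if_false, rep_simple_apply, map_add, map_smul,
        form_sroot_self, form_sroot M i j, dcoef]
      module

lemma sroot_nonneg (i : B) : 0 ≤ sroot i := by
  intro j; by_cases h : j = i <;> simp [sroot, h]

/-- The fundamental positivity theorem: if `ℓ (w sᵢ) > ℓ w` then `w αᵢ` is a positive root.  The
proof splits off the longest alternating suffix of `w` in `i` and a right descent `j`. -/
theorem rep_nonneg (w : W) (i : B) (hw : ¬ cs.IsRightDescent w i) :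
    0 ≤ rep cs w (sroot i) := by
  induction hn : cs.length w using Nat.strong_induction_on generalizing w i with
  | _ n ih =>
  by_cases h1 : w = 1
  · subst h1; simpa using sroot_nonneg i
  obtain ⟨j, hj⟩ := cs.exists_rightDescent_of_ne_one h1
  have hij : i ≠ j := by rintro rfl; exact hw hj
  let u : ℕ → W := fun k => cs.wordProd (CoxeterSystem.alternatingWord i j k)
  let P : ℕ → Prop := fun k => cs.length (w * (u k)⁻¹) + k = cs.length w
  have hu : ∀ k, u (k + 1) = cs.simple (if Even k then j else i) * u k := by
    intro k
    simp only [u]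
    rw [CoxeterSystem.alternatingWord_succ', cs.wordProd_cons]
  have hP0 : P 0 := by simp [P, u, CoxeterSystem.alternatingWord]
  have hP1 : P 1 := by
    have := (cs.isRightDescent_iff).1 hj
    simpa [P, u, CoxeterSystem.alternatingWord] using this
  have hex : ∃ k, ¬ P (k + 1) := ⟨cs.length w, by simp only [P]; omega⟩
  classical
  let k := Nat.find hex
  have hk : ¬ P (k + 1) := Nat.find_spec hex
  have hle : ∀ l, l ≤ k → P l := by
    intro l hl
    cases l with
    | zero => exact hP0
    | succ l => exact not_not.1 (Nat.find_min hex (show l < k by omega))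
  have hk1 : 1 ≤ k := by
    by_contra h
    have : k = 0 := by omega
    rw [this] at hk
    exact hk hP1
  obtain ⟨v, hv⟩ : ∃ v, v = w * (u k)⁻¹ := ⟨_, rfl⟩
  have hPk : cs.length v + k = cs.length w := by rw [hv]; exact hle k le_rfl
  have hstep : ∀ l, w * (u (l + 1))⁻¹ = w * (u l)⁻¹ * cs.simple (if Even l then j else i) := by
    intro l; rw [hu, mul_inv_rev, cs.inv_simple, mul_assoc]
  -- neither `i` nor `j` is a right descent of `v`
  have hd1 : ¬ cs.IsRightDescent v (if Even k then j else i) := by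
    intro h
    rw [cs.isRightDescent_iff, hv, ← hstep] at h
    apply hk
    have := hle k le_rfl
    simp only [P] at this ⊢
    omega
  have hd2 : ¬ cs.IsRightDescent v (if Even k then i else j) := by
    intro h
    obtain ⟨l, hl⟩ : ∃ l, k = l + 1 := ⟨k - 1, by omega⟩
    have e : (if Even k then i else j) = (if Even l then j else i) := by
      rw [hl]
      by_cases hl' : Even l <;> simp [hl', Nat.even_add_one]
    rw [cs.isRightDescent_iff, e, hv, hl, hstep, cs.simple_mul_simple_cancel_right, ← hstep] at h
    have h1 := hle l (by omega)
    have h2 := hle (l + 1) (by omega)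
    simp only [P] at h1 h2
    omega
  have hvi : ¬ cs.IsRightDescent v i := by
    by_cases he : Even k <;> simp_all
  have hvj : ¬ cs.IsRightDescent v j := by
    by_cases he : Even k <;> simp_all
  have hlt : cs.length v < n := by omega
  have pi := ih _ hlt v i hvi rfl
  have pj := ih _ hlt v j hvj rfl
  -- the alternating suffix is shorter than `M i j`: otherwise `w` has a suffix ending in `i`
  have hkm : M i j ≠ 0 → k + 1 ≤ M i j := by
    intro hm
    by_contra hlt
    have hPm := hle (M i j) (by omega)
    simp only [P] at hPm
    apply hw
    obtain ⟨l, hl⟩ : ∃ l, M i j = l + 1 := ⟨M i j - 1, by omega⟩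
    have hb : u (M i j) =
        cs.wordProd (CoxeterSystem.alternatingWord i j l) * cs.simple i := by
      have := cs.wordProd_braidWord_eq i j
      simp only [CoxeterSystem.braidWord] at this
      simp only [u]
      rw [this, M.symmetric j i, hl, CoxeterSystem.alternatingWord_succ, cs.wordProd_concat]
    have e : w * cs.simple i =
        w * (u (M i j))⁻¹ * cs.wordProd (CoxeterSystem.alternatingWord i j l) := by
      rw [hb]; simp [mul_assoc]
    have h3 := cs.length_mul_le (w * (u (M i j))⁻¹)
      (cs.wordProd (CoxeterSystem.alternatingWord i j l))
    have h4 := cs.length_wordProd_le (CoxeterSystem.alternatingWord i j l)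
    rw [CoxeterSystem.length_alternatingWord] at h4
    rw [CoxeterSystem.IsRightDescent, e]
    omega
  have hm1 : M i j ≠ 1 := M.off_diagonal i j hij
  have c1 : 0 ≤ dcoef (M i j) k := dcoef_nonneg hm1 fun h => by have := hkm h; omega
  have c2 : 0 ≤ dcoef (M i j) (k + 1) := dcoef_nonneg hm1 hkm
  have hwv : w = v * u k := by rw [hv]; simp
  rw [hwv, rep_mul_apply]
  simp only [u]
  rw [rep_alternating]
  split_ifs
  · rw [map_add, map_smul, map_smul]
    exact add_nonneg (smul_nonneg c2 pi) (smul_nonneg c1 pj)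
  · rw [map_add, map_smul, map_smul]
    exact add_nonneg (smul_nonneg c1 pi) (smul_nonneg c2 pj)

theorem rep_nonpos (w : W) (i : B) (hw : cs.IsRightDescent w i) :
    rep cs w (sroot i) ≤ 0 := by
  rw [cs.isRightDescent_iff_not_isRightDescent_mul] at hw
  have := rep_nonneg cs _ i hw
  rw [rep_mul_apply, rep_simple_sroot, map_neg] at this
  exact neg_nonneg.1 this

lemma sroot_ne_zero (i : B) : sroot i ≠ 0 := by simp [sroot]

lemma rep_ne_zero (w : W) {v : B → ℝ} (hv : v ≠ 0) : rep cs w v ≠ 0 := by simpa using hv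

/-- The exponents of the presentation are the actual orders: if `(sᵢ sⱼ) ^ k = 1`, comparing the
coefficients of `(sᵢ sⱼ) ^ k αᵢ = αᵢ` gives `M i j ∣ k`. -/
theorem orderOf_simple_mul (i j : B) : orderOf (cs.simple i * cs.simple j) = M i j := by
  by_cases hij : i = j
  · subst hij; simp
  have hm1 := M.off_diagonal i j hij
  refine Nat.dvd_antisymm (orderOf_dvd_of_pow_eq_one (cs.simple_mul_simple_pow i j)) ?_
  obtain ⟨k, hk⟩ : ∃ k, k = orderOf (cs.simple i * cs.simple j) := ⟨_, rfl⟩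
  rw [← hk]
  have h1 : (cs.simple i * cs.simple j) ^ k = 1 := hk ▸ pow_orderOf_eq_one _
  have h2 := rep_alternating cs i j (2 * k)
  rw [cs.prod_alternatingWord_eq_mul_pow] at h2
  simp only [even_two, Even.mul_right, if_true, one_mul] at h2
  rw [Nat.mul_div_cancel_left k two_pos, h1, rep_one_apply] at h2
  have e1 : dcoef (M i j) (2 * k) = 0 := by
    have := congrFun h2 j
    simpa [sroot, Pi.single_apply, hij, Ne.symm hij] using this.symm
  have e2 : dcoef (M i j) (2 * k + 1) = 1 := by
    have := congrFun h2 i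
    simpa [sroot, Pi.single_apply, hij, Ne.symm hij] using this.symm
  generalize M i j = m at *
  rcases Nat.eq_zero_or_pos m with rfl | h0
  · rw [dcoef_zero] at e1
    have : k = 0 := by exact_mod_cast (by simpa using e1 : (k : ℝ) = 0)
    simp [this]
  have hs := sin_pi_div_pos (show 2 ≤ m by omega)
  have f1 := dcoef_mul_sin m (2 * k)
  have f2 := dcoef_mul_sin m (2 * k + 1)
  rw [e1, zero_mul] at f1
  rw [e2, one_mul] at f2
  have e3 : ((2 * k + 1 : ℕ) : ℝ) * (π / m) = (2 * k : ℕ) * (π / m) + π / m := by push_cast; ring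
  rw [e3, sin_add, ← f1, zero_mul, zero_add] at f2
  have hc : cos ((2 * k : ℕ) * (π / m)) = 1 := by
    have : (cos ((2 * k : ℕ) * (π / m)) - 1) * sin (π / m) = 0 := by linarith
    rcases mul_eq_zero.1 this with h | h
    · linarith
    · exact absurd h hs.ne'
  obtain ⟨n, hn⟩ := (cos_eq_one_iff _).1 hc
  have hm : (m : ℝ) ≠ 0 := by exact_mod_cast h0.ne'
  have : (n : ℝ) * m = k := by
    have hpi := pi_ne_zero
    push_cast at hn
    field_simp at hn
    linarith
  have : (k : ℤ) = m * n := by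
    have h : n * (m : ℤ) = k := by exact_mod_cast this
    rw [← h, mul_comm]
  exact Int.natCast_dvd_natCast.1 ⟨n, this⟩

end Pos

/-! ### Roots, finite subgroups and spherical parabolic subgroups -/

section Roots

variable {B : Type*} [Fintype B] [DecidableEq B] {M : CoxeterMatrix B} {W : Type*} [Group W]
  (cs : CoxeterSystem M W)

/-- Roots are the images of the simple roots under the Tits representation. -/
def IsRoot (β : B → ℝ) : Prop := ∃ w i, β = rep cs w (sroot i)

variable {cs}

lemma isRoot_sroot (i : B) : IsRoot cs (sroot i) := ⟨1, i, by simp⟩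

lemma IsRoot.rep {β : B → ℝ} (h : IsRoot cs β) (w : W) : IsRoot cs (rep cs w β) := by
  obtain ⟨v, i, rfl⟩ := h
  exact ⟨w * v, i, by rw [rep_mul_apply]⟩

lemma IsRoot.nonneg_or_nonpos {β : B → ℝ} (h : IsRoot cs β) : 0 ≤ β ∨ β ≤ 0 := by
  obtain ⟨v, i, rfl⟩ := h
  by_cases hd : cs.IsRightDescent v i
  · exact Or.inr (rep_nonpos cs v i hd)
  · exact Or.inl (rep_nonneg cs v i hd)

lemma IsRoot.ne_zero {β : B → ℝ} (h : IsRoot cs β) : β ≠ 0 := by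
  obtain ⟨v, i, rfl⟩ := h
  exact rep_ne_zero cs v (sroot_ne_zero i)

lemma IsRoot.form_self {β : B → ℝ} (h : IsRoot cs β) : form M β β = 1 := by
  obtain ⟨v, i, rfl⟩ := h
  rw [form_rep, form_sroot_self]

lemma eq_sum_sroot (v : B → ℝ) : v = ∑ i, v i • sroot i := by
  ext j; simp [sroot, Pi.single_apply]

/-- The only positive root made negative by `sᵢ` is `αᵢ`. -/
lemma IsRoot.eq_sroot {β : B → ℝ} (h : IsRoot cs β) (h0 : 0 ≤ β) {i : B}
    (hi : CoxRigid.rep cs (cs.simple i) β ≤ 0) : β = sroot i := by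
  have hj : ∀ j, j ≠ i → β j = 0 := by
    intro j hj
    have h1 := hi j
    rw [rep_simple_of_ne cs i j β hj] at h1
    exact le_antisymm h1 (h0 j)
  have e : β = β i • sroot i := by
    ext j
    by_cases hji : j = i
    · subst hji; simp [sroot]
    · simp [sroot, hji, hj j hji]
  have hf := h.form_self
  rw [e] at hf
  simp only [map_smul, LinearMap.smul_apply, form_sroot_self, smul_eq_mul, mul_one] at hf
  have h1 : β i = 1 := by
    have := h0 i
    simp only [Pi.zero_apply] at this
    nlinarith
  rw [e, h1, one_smul]

variable (cs) in
/-- The positive roots made negative by `w`. -/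
def inv (w : W) : Set (B → ℝ) := {β | IsRoot cs β ∧ 0 ≤ β ∧ rep cs w β ≤ 0}

lemma inv_finite (w : W) : (inv cs w).Finite := by
  induction w using cs.simple_induction_left with
  | one =>
    convert Set.finite_empty
    ext β
    simp only [inv, rep_one_apply, Set.mem_ofPred_eq, Set.mem_empty_iff_false, iff_false]
    rintro ⟨h, h0, h1⟩
    exact h.ne_zero (le_antisymm h1 h0)
  | mul_simple_left w i ih =>
    refine (ih.insert (rep cs w⁻¹ (sroot i))).subset ?_
    rintro β ⟨h, h0, h1⟩
    rcases (h.rep w).nonneg_or_nonpos with h2 | h2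
    · left
      rw [rep_mul_apply] at h1
      rw [← (h.rep w).eq_sroot h2 h1, rep_inv_apply]
    · exact Or.inr ⟨h, h0, h2⟩

lemma nonneg_of_comb (f : (B → ℝ) →ₗ[ℝ] ℝ) {v : B → ℝ} (hv : 0 ≤ v)
    (hf : ∀ i, v i ≠ 0 → 0 ≤ f (sroot i)) : 0 ≤ f v := by
  rw [eq_sum_sroot v, map_sum]
  refine Finset.sum_nonneg fun i _ => ?_
  rw [map_smul, smul_eq_mul]
  by_cases h : v i = 0
  · simp [h]
  · exact mul_nonneg (hv i) (hf i h)

lemma rep_nonneg_of_comb (w : W) {v : B → ℝ} (hv : 0 ≤ v)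
    (hf : ∀ i, v i ≠ 0 → 0 ≤ rep cs w (sroot i)) : 0 ≤ rep cs w v := by
  intro j
  exact nonneg_of_comb ((LinearMap.proj j).comp (rep cs w).toLinearMap) hv fun i hi => hf i hi j

lemma simple_mem_parabolic {T : Set B} {i : B} (hi : i ∈ T) : cs.simple i ∈ cs.parabolic T :=
  Subgroup.subset_closure ⟨i, hi, rfl⟩

/-- Elements of `W_T` change only the coordinates in `T`. -/
lemma parabolic_coord {T : Set B} {g : W} (hg : g ∈ cs.parabolic T) {i : B} (hi : i ∉ T)
    (v : B → ℝ) : rep cs g v i = v i := by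
  induction hg using Subgroup.closure_induction generalizing v with
  | mem x hx =>
    obtain ⟨j, hj, rfl⟩ := hx
    exact rep_simple_of_ne cs j i v (by rintro rfl; exact hi hj)
  | one => simp
  | mul x y _ _ hx hy => rw [rep_mul_apply, hx, hy]
  | inv x _ hx => rw [← hx (rep cs x⁻¹ v), rep_apply_inv]

lemma parabolic_eq_one {T : Set B} {g : W} (hg : g ∈ cs.parabolic T)
    (h : ∀ t ∈ T, 0 ≤ rep cs g (sroot t)) : g = 1 := by
  by_contra h1
  obtain ⟨i, hi⟩ := cs.exists_rightDescent_of_ne_one h1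
  have hn := rep_nonpos cs g i hi
  by_cases hT : i ∈ T
  · exact rep_ne_zero cs g (sroot_ne_zero i) (le_antisymm hn (h i hT))
  · have := hn i
    rw [parabolic_coord hg hT] at this
    simp [sroot] at this
    linarith

variable (cs) in
/-- The positive roots supported on `T`. -/
def posRoots (T : Set B) : Set (B → ℝ) := {β | IsRoot cs β ∧ 0 ≤ β ∧ ∀ i, i ∉ T → β i = 0}

lemma isSpherical_of_finite {T : Set B} (h : (posRoots cs T).Finite) : cs.IsSpherical T := by
  let X : Set (B → ℝ) := posRoots cs T ∪ Neg.neg '' posRoots cs T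
  have hX : X.Finite := h.union (h.image _)
  have := hX.to_subtype
  have hmem : ∀ (g : cs.parabolic T) (t : T), rep cs g (sroot (t : B)) ∈ X := by
    intro g t
    have hr : IsRoot cs (rep cs g (sroot (t : B))) := (isRoot_sroot _).rep _
    have h0 : ∀ i, i ∉ T → rep cs g (sroot (t : B)) i = 0 := by
      intro i hi
      rw [parabolic_coord g.2 hi]
      have : i ≠ t := by rintro rfl; exact hi t.2
      simp [sroot, this]
    rcases hr.nonneg_or_nonpos with h1 | h1
    · exact Or.inl ⟨hr, h1, h0⟩
    · refine Or.inr ⟨-rep cs g (sroot (t : B)), ⟨?_, neg_nonneg.2 h1, ?_⟩, neg_neg _⟩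
      · refine ⟨g * cs.simple t, t, ?_⟩
        rw [rep_mul_apply, rep_simple_sroot, map_neg]
      · intro i hi; simp [h0 i hi]
  refine Finite.of_injective
    (fun (g : cs.parabolic T) (t : T) => (⟨rep cs g (sroot (t : B)), hmem g t⟩ : X)) ?_
  intro g g' hgg
  have : ∀ t ∈ T, rep cs (g : W) (sroot t) = rep cs (g' : W) (sroot t) := by
    intro t ht
    have := congrFun hgg ⟨t, ht⟩
    simpa using this
  have h1 : (g : W)⁻¹ * g' = 1 := by
    refine parabolic_eq_one (T := T) (mul_mem (inv_mem g.2) g'.2) fun t ht => ?_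
    rw [rep_mul_apply, ← this t ht, rep_inv_apply]
    exact sroot_nonneg t
  exact Subtype.ext (inv_mul_eq_one.1 h1)

/-- The longest element of a finite parabolic subgroup makes its simple roots negative. -/
lemma exists_longest {T : Set B} (h : cs.IsSpherical T) :
    ∃ w : W, ∀ t ∈ T, rep cs w (sroot t) ≤ 0 := by
  have : Finite (cs.parabolic T) := h
  obtain ⟨w, hw⟩ := Finite.exists_max (fun g : cs.parabolic T => cs.length (g : W))
  refine ⟨w, fun t ht => rep_nonpos cs _ t ?_⟩
  by_contra hd
  rw [cs.not_isRightDescent_iff] at hd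
  have := hw ⟨w * cs.simple t, mul_mem w.2 (simple_mem_parabolic ht)⟩
  simp only at this
  omega

lemma posRoots_finite {T : Set B} (h : cs.IsSpherical T) : (posRoots cs T).Finite := by
  obtain ⟨w, hw⟩ := exists_longest h
  refine (inv_finite (cs := cs) w).subset ?_
  rintro β ⟨hr, h0, hT⟩
  refine ⟨hr, h0, ?_⟩
  intro j
  have := nonneg_of_comb (-((LinearMap.proj j).comp (rep cs w).toLinearMap)) h0 (fun i hi => by
    have hiT : i ∈ T := by by_contra h; exact hi (hT i h)
    simpa using hw i hiT j)
  simpa using this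

/-- Every finite subgroup of a Coxeter group is conjugate into a finite standard parabolic
subgroup.  The functional `x` below is the `H`-average of the sum of coordinates (an interior point
of the Tits cone); it is moved into the closed fundamental chamber, where stabilizers are
standard parabolic. -/
theorem finite_subgroup_conj (H : Subgroup W) [Finite H] :
    ∃ (g : W) (T : Set B), cs.IsSpherical T ∧ ∀ h ∈ H, g * h * g⁻¹ ∈ cs.parabolic T := by
  have := Fintype.ofFinite H
  let ρ : (B → ℝ) →ₗ[ℝ] ℝ := ∑ i, LinearMap.proj i
  have hρ : ∀ v, ρ v = ∑ i, v i := by intro v; simp [ρ]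
  have hρ0 : ∀ v, 0 ≤ v → 0 ≤ ρ v := by
    intro v hv; rw [hρ]; exact Finset.sum_nonneg fun i _ => hv i
  have hρpos : ∀ v, 0 ≤ v → v ≠ 0 → 0 < ρ v := by
    intro v hv hne
    rw [hρ]
    refine Finset.sum_pos' (fun i _ => hv i) ?_
    by_contra! hcon
    exact hne (funext fun i => le_antisymm (hcon i (Finset.mem_univ i)) (hv i))
  let x : (B → ℝ) →ₗ[ℝ] ℝ := ∑ h : H, ρ.comp (rep cs (h : W)⁻¹).toLinearMap
  have hx : ∀ v, x v = ∑ h : H, ρ (rep cs (h : W)⁻¹ v) := by intro v; simp [x]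
  have hxinv : ∀ k ∈ H, ∀ v, x (rep cs k v) = x v := by
    intro k hk v
    rw [hx, hx]
    refine Fintype.sum_equiv (Equiv.mulLeft (⟨k, hk⟩⁻¹ : H)) _ _ fun h => ?_
    rw [← rep_mul_apply]
    simp
  let N : W → Set (B → ℝ) := fun w => {β | IsRoot cs β ∧ 0 ≤ β ∧ x (rep cs w⁻¹ β) < 0}
  have hNfin : ∀ w, (N w).Finite := by
    intro w
    refine (Set.finite_iUnion fun h : H => inv_finite (cs := cs) ((h : W)⁻¹ * w⁻¹)).subset ?_
    rintro β ⟨hr, h0, hneg⟩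
    rw [hx] at hneg
    obtain ⟨h, -, hh⟩ := Finset.exists_lt_of_sum_lt
      (show ∑ h : H, ρ (rep cs (h : W)⁻¹ (rep cs w⁻¹ β)) < ∑ h : H, (0 : ℝ) by simpa using hneg)
    refine Set.mem_iUnion.2 ⟨h, hr, h0, ?_⟩
    rw [rep_mul_apply]
    refine (((hr.rep _).rep _).nonneg_or_nonpos).resolve_left fun h2 => ?_
    exact absurd (hρ0 _ h2) (not_le.2 hh)
  obtain ⟨w, hw⟩ : ∃ w, ∀ w', (N w).ncard ≤ (N w').ncard :=
    ⟨Function.argmin (fun w => (N w).ncard), fun v => Function.argmin_le (fun w => (N w).ncard) v⟩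
  -- `x` moved by `w` is dominant: otherwise a simple reflection would shrink `N w`
  have hdom : ∀ i, 0 ≤ x (rep cs w⁻¹ (sroot i)) := by
    intro i
    by_contra! hneg
    have hi : sroot i ∈ N w := ⟨isRoot_sroot i, sroot_nonneg i, hneg⟩
    have hsub : rep cs (cs.simple i) '' N (cs.simple i * w) ⊆ N w \ {sroot i} := by
      rintro _ ⟨β, ⟨hr, h0, hβ⟩, rfl⟩
      rw [mul_inv_rev, cs.inv_simple, rep_mul_apply] at hβ
      have hne : β ≠ sroot i := by
        rintro rfl
        rw [rep_simple_sroot, map_neg, map_neg] at hβ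
        linarith
      refine ⟨⟨hr.rep _, ?_, hβ⟩, ?_⟩
      · exact ((hr.rep _).nonneg_or_nonpos).resolve_right fun h2 => hne (hr.eq_sroot h0 h2)
      · intro he
        rw [Set.mem_singleton_iff] at he
        have h2 : β = -sroot i := by
          rw [← rep_simple_sroot cs i, ← he, ← rep_mul_apply]
          simp
        have := h0 i
        rw [h2] at this
        simp [sroot] at this
        linarith
    have h1 := Set.ncard_le_ncard hsub ((hNfin w).sdiff)
    rw [Set.ncard_image_of_injective _ (rep cs (cs.simple i)).injective] at h1
    have h2 := Set.ncard_sdiff_singleton_lt_of_mem hi (hNfin w)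
    have h3 := hw (cs.simple i * w)
    omega
  let y : (B → ℝ) →ₗ[ℝ] ℝ := x.comp (rep cs w⁻¹).toLinearMap
  have hy : ∀ v, y v = x (rep cs w⁻¹ v) := fun v => rfl
  let T : Set B := {i | y (sroot i) = 0}
  have hstab : ∀ (n : ℕ) (g : W), cs.length g = n → (∀ v, y (rep cs g v) = y v) →
      g ∈ cs.parabolic T := by
    intro n
    induction n with
    | zero => intro g hg _; rw [cs.length_eq_zero_iff.1 hg]; exact one_mem _
    | succ n ih =>
      intro g hg hgy
      have hg1 : g ≠ 1 := by rintro rfl; simp at hg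
      obtain ⟨i, hi⟩ := cs.exists_leftDescent_of_ne_one hg1
      have hneg : rep cs g⁻¹ (sroot i) ≤ 0 :=
        rep_nonpos cs g⁻¹ i (cs.isRightDescent_inv_iff.2 hi)
      have h1 : 0 ≤ y (-rep cs g⁻¹ (sroot i)) :=
        nonneg_of_comb y (neg_nonneg.2 hneg) fun j _ => hdom j
      have h2 := hgy (rep cs g⁻¹ (sroot i))
      rw [rep_apply_inv] at h2
      rw [map_neg, ← h2] at h1
      have hiT : y (sroot i) = 0 := le_antisymm (by linarith) (hdom i)
      have h3 : cs.simple i * g ∈ cs.parabolic T := by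
        refine ih _ ?_ ?_
        · have := cs.isLeftDescent_iff.1 hi; omega
        · intro v
          rw [rep_mul_apply, rep_simple_apply, map_sub, map_smul, hiT, smul_zero, sub_zero, hgy]
      have h4 := mul_mem (simple_mem_parabolic (cs := cs) (T := T) hiT) h3
      rwa [cs.simple_mul_simple_cancel_left] at h4
  refine ⟨w, T, isSpherical_of_finite ?_, fun h hh => hstab _ _ rfl fun v => ?_⟩
  · refine (Set.finite_iUnion fun h : H => inv_finite (cs := cs) ((h : W)⁻¹ * w⁻¹)).subset ?_
    rintro β ⟨hr, h0, hT⟩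
    have hyβ : y β = 0 := by
      rw [eq_sum_sroot β, map_sum]
      refine Finset.sum_eq_zero fun i _ => ?_
      rw [map_smul, smul_eq_mul]
      by_cases hi : i ∈ T
      · rw [show y (sroot i) = 0 from hi, mul_zero]
      · rw [hT i hi, zero_mul]
    by_contra hcon
    simp only [Set.mem_iUnion, not_exists] at hcon
    have hpos : ∀ h : H, 0 < ρ (rep cs (h : W)⁻¹ (rep cs w⁻¹ β)) := by
      intro h
      have hr' := (hr.rep w⁻¹).rep (h : W)⁻¹
      refine hρpos _ (hr'.nonneg_or_nonpos.resolve_right fun h2 => hcon h ⟨hr, h0, ?_⟩) hr'.ne_zero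
      rwa [rep_mul_apply]
    have := Finset.sum_pos (fun h _ => hpos h) (Finset.univ_nonempty (α := H))
    rw [← hx, ← hy, hyβ] at this
    exact lt_irrefl _ this
  · rw [hy, hy, rep_mul_apply, rep_mul_apply, rep_inv_apply, hxinv h hh]

/-- A maximal spherical parabolic subgroup is not conjugate into any other spherical one.  If a
shortest conjugating element `g` had a right descent `s`, then `g` would make negative every positive
root supported on `U ∪ {s}` but not on `U`; as `g` makes only finitely many positive roots negative,
`U ∪ {s}` would be spherical, against maximality.  Hence `g = 1`. -/
theorem maxSpherical_unique {U T : Set B} (hU : cs.IsMaxSpherical U) (hT : cs.IsSpherical T)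
    (g : W) (hg : ∀ u ∈ cs.parabolic U, g * u * g⁻¹ ∈ cs.parabolic T) : U = T := by
  classical
  -- a shortest conjugating element
  let P : W → Prop := fun g => ∀ u ∈ cs.parabolic U, g * u * g⁻¹ ∈ cs.parabolic T
  obtain ⟨g, hgP, hmin⟩ : ∃ g, P g ∧ ∀ g', P g' → cs.length g ≤ cs.length g' := by
    have hex : ∃ n g, P g ∧ cs.length g = n := ⟨_, g, hg, rfl⟩
    obtain ⟨g, hgP, hgl⟩ := Nat.find_spec hex
    exact ⟨g, hgP, fun g' hg' => hgl ▸ Nat.find_min' hex ⟨g', hg', rfl⟩⟩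
  have hl : ∀ t ∈ T, 0 ≤ rep cs g⁻¹ (sroot t) := by
    intro t ht
    refine rep_nonneg cs _ t fun hd => ?_
    rw [cs.isRightDescent_inv_iff] at hd
    refine absurd (hmin (cs.simple t * g) fun u hu => ?_) (not_le.2 hd)
    have hs := simple_mem_parabolic (cs := cs) ht
    have := mul_mem (mul_mem hs (hgP u hu)) (inv_mem hs)
    simpa [mul_assoc] using this
  have hr : ∀ u ∈ U, 0 ≤ rep cs g (sroot u) := by
    intro u hu
    refine rep_nonneg cs _ u fun hd => ?_
    refine absurd (hmin (g * cs.simple u) fun v hv => ?_) (not_le.2 hd)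
    have hs := simple_mem_parabolic (cs := cs) hu
    have := hgP _ (mul_mem (mul_mem hs hv) (inv_mem hs))
    simpa [mul_assoc] using this
  have hsupp : ∀ u ∈ U, ∀ j, j ∉ T → rep cs g (sroot u) j = 0 := by
    intro u hu j hj
    have h1 := parabolic_coord (hgP _ (simple_mem_parabolic hu)) hj (rep cs g (sroot u))
    rw [rep_mul_apply, rep_inv_apply, rep_mul_apply, rep_simple_sroot, map_neg] at h1
    simp only [Pi.neg_apply] at h1
    linarith
  have hg1 : g = 1 := by
    by_contra hne
    obtain ⟨s, hs⟩ := cs.exists_rightDescent_of_ne_one hne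
    have hneg := rep_nonpos cs g s hs
    have hsU : s ∉ U := fun h =>
      rep_ne_zero cs g (sroot_ne_zero s) (le_antisymm hneg (hr s h))
    obtain ⟨j, hjT, hj⟩ : ∃ j, j ∉ T ∧ rep cs g (sroot s) j ≠ 0 := by
      by_contra! hcon
      have h1 : 0 ≤ rep cs g⁻¹ (-rep cs g (sroot s)) := by
        refine rep_nonneg_of_comb _ (neg_nonneg.2 hneg) fun i hi => hl i ?_
        by_contra hiT
        exact hi (by simp [hcon i hiT])
      rw [map_neg, rep_inv_apply] at h1
      have := h1 s
      simp [sroot] at this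
      linarith
    have hjneg : rep cs g (sroot s) j < 0 := lt_of_le_of_ne (hneg j) hj
    have hfin : (posRoots cs (insert s U)).Finite := by
      refine ((inv_finite (cs := cs) g).union (posRoots_finite hU.1)).subset ?_
      rintro β ⟨hβ, h0, hβU⟩
      by_cases hc : β s = 0
      · right
        refine ⟨hβ, h0, fun i hi => ?_⟩
        by_cases his : i = s
        · rw [his, hc]
        · exact hβU i (by simp [his, hi])
      · left
        refine ⟨hβ, h0, ((hβ.rep g).nonneg_or_nonpos).resolve_left fun hpos => ?_⟩
        have h1 : rep cs g β j = β s * rep cs g (sroot s) j := by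
          conv_lhs => rw [eq_sum_sroot β, map_sum, Finset.sum_apply]
          rw [Finset.sum_eq_single s]
          · simp
          · intro i _ his
            rw [map_smul, Pi.smul_apply, smul_eq_mul]
            by_cases hi : i ∈ U
            · rw [hsupp i hi j hjT, mul_zero]
            · rw [hβU i (by simp [his, hi]), zero_mul]
          · simp
        have h2 := hpos j
        rw [h1] at h2
        have h3 : 0 < β s := lt_of_le_of_ne (h0 s) (Ne.symm hc)
        simp only [Pi.zero_apply] at h2
        nlinarith
    have := hU.2 _ (isSpherical_of_finite hfin) (Set.subset_insert s U)
    exact hsU (this ▸ Set.mem_insert s U)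
  refine (hU.2 T hT fun u hu => ?_).symm
  by_contra huT
  have := hsupp u hu u huT
  rw [hg1] at this
  simp [sroot] at this

end Roots

/-! ### Dihedral groups and commuting spherical subsets -/

section Dihedral

variable {W : Type*} [Group W]

/-- Elements of a dihedral group are rotations or reflections. -/
lemma dihedral_form {a b : W} (ha : a * a = 1) (hb : b * b = 1) {x : W}
    (hx : x ∈ Subgroup.closure {a, b}) :
    ∃ k : ℤ, x = (a * b) ^ k ∨ x = (a * b) ^ k * a := by
  have ha' : a⁻¹ = a := inv_eq_of_mul_eq_one_left ha
  have hb' : b⁻¹ = b := inv_eq_of_mul_eq_one_left hb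
  have step : ∀ x y : W, y ∈ ({a, b} : Set W) →
      (∃ k : ℤ, x = (a * b) ^ k ∨ x = (a * b) ^ k * a) →
      ∃ k : ℤ, x * y = (a * b) ^ k ∨ x * y = (a * b) ^ k * a := by
    rintro x y (rfl | rfl) ⟨k, rfl | rfl⟩
    · exact ⟨k, Or.inr rfl⟩
    · exact ⟨k, Or.inl (by rw [mul_assoc, ha, mul_one])⟩
    · refine ⟨k - 1, Or.inr ?_⟩
      rw [zpow_sub_one, mul_inv_rev, ha', hb', mul_assoc, mul_assoc, ha, mul_one]
    · exact ⟨k + 1, Or.inl (by rw [zpow_add_one, mul_assoc])⟩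
  induction hx using Subgroup.closure_induction_right with
  | one => exact ⟨0, Or.inl (by simp)⟩
  | mul_right x _ y hy ih => exact step x y hy ih
  | mul_inv_cancel x _ y hy ih =>
    have : y⁻¹ = y := by rcases hy with rfl | rfl <;> assumption
    rw [this]
    exact step x y hy ih

lemma dihedral_finite {a b : W} (ha : a * a = 1) (hb : b * b = 1) (h : orderOf (a * b) ≠ 0) :
    Finite (Subgroup.closure {a, b}) := by
  have hf : IsOfFinOrder (a * b) := orderOf_ne_zero_iff.1 h
  have hz : ((Subgroup.zpowers (a * b) : Subgroup W) : Set W).Finite := hf.finite_zpowers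
  refine ((hz.union (hz.image (· * a))).subset ?_).to_subtype
  intro x hx
  obtain ⟨k, rfl | rfl⟩ := dihedral_form ha hb hx
  · exact Or.inl ⟨k, rfl⟩
  · exact Or.inr ⟨_, ⟨k, rfl⟩, rfl⟩

/-- In a dihedral group of order `2n` with `n` odd, the product of two involutions is a
rotation. -/
lemma dihedral_mul {a b : W} (ha : a * a = 1) (hb : b * b = 1) (hodd : Odd (orderOf (a * b)))
    {x y : W} (hx : x ∈ Subgroup.closure {a, b}) (hy : y ∈ Subgroup.closure {a, b})
    (hx2 : x * x = 1) (hy2 : y * y = 1) (hx1 : x ≠ 1) (hy1 : y ≠ 1) :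
    x * y ∈ Subgroup.zpowers (a * b) := by
  have refl_form : ∀ z ∈ Subgroup.closure {a, b}, z * z = 1 → z ≠ 1 →
      ∃ k : ℤ, z = (a * b) ^ k * a := by
    intro z hz hz2 hz1
    obtain ⟨k, rfl | rfl⟩ := dihedral_form ha hb hz
    · refine absurd ?_ hz1
      have h1 : orderOf ((a * b) ^ k) ∣ orderOf (a * b) := orderOf_dvd_of_mem_zpowers ⟨k, rfl⟩
      have h2 : orderOf ((a * b) ^ k) ∣ 2 := orderOf_dvd_of_pow_eq_one (by rw [pow_two, hz2])
      rw [← orderOf_eq_one_iff]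
      exact Nat.eq_one_of_dvd_coprimes (Nat.coprime_two_right.2 hodd) h1 h2
    · exact ⟨k, rfl⟩
  have hx' : x⁻¹ = x := inv_eq_of_mul_eq_one_left hx2
  have hy' : y⁻¹ = y := inv_eq_of_mul_eq_one_left hy2
  obtain ⟨k, hk⟩ := refl_form x hx hx2 hx1
  obtain ⟨l, hl⟩ := refl_form y hy hy2 hy1
  refine ⟨k - l, ?_⟩
  rw [← hy', hk, hl]
  simp [zpow_sub]

end Dihedral

section Single

variable {B : Type*} [Fintype B] [DecidableEq B] {M : CoxeterMatrix B} {W : Type*} [Group W]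
  {cs : CoxeterSystem M W}

lemma simple_ne_one (i : B) : cs.simple i ≠ 1 := by
  intro h
  have := cs.length_simple i
  rw [h, cs.length_one] at this
  omega

lemma isSpherical_mono {T U : Set B} (h : T ⊆ U) (hU : cs.IsSpherical U) : cs.IsSpherical T := by
  have : Finite (cs.parabolic U) := hU
  have hle : cs.parabolic T ≤ cs.parabolic U := Subgroup.closure_mono (Set.image_mono h)
  exact Finite.of_injective _ (Subgroup.inclusion_injective hle)

lemma IsSpherical.ne_zero {T : Set B} (hT : cs.IsSpherical T) {i j : B} (hi : i ∈ T) (hj : j ∈ T) :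
    M i j ≠ 0 := by
  have : Finite (cs.parabolic T) := hT
  let x : cs.parabolic T :=
    ⟨cs.simple i * cs.simple j, mul_mem (simple_mem_parabolic hi) (simple_mem_parabolic hj)⟩
  have : orderOf (x : W) ≠ 0 := by
    rw [Subgroup.orderOf_coe]
    exact (orderOf_pos x).ne'
  rwa [← orderOf_simple_mul cs i j]

lemma parabolic_pair (i j : B) :
    cs.parabolic {i, j} = Subgroup.closure {cs.simple i, cs.simple j} := by
  rw [CoxeterSystem.parabolic, Set.image_pair]

lemma isSpherical_pair {i j : B} (h : M i j ≠ 0) : cs.IsSpherical {i, j} := by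
  rw [CoxeterSystem.IsSpherical, parabolic_pair]
  exact dihedral_finite (by simp) (by simp) (by rwa [orderOf_simple_mul])

lemma exists_isMaxSpherical {T : Set B} (hT : cs.IsSpherical T) :
    ∃ U, T ⊆ U ∧ cs.IsMaxSpherical U := by
  obtain ⟨U, hTU, hU⟩ := Finite.exists_le_maximal (p := cs.IsSpherical) hT
  exact ⟨U, hTU, hU.prop, fun V hV hUV => (hU.eq_of_le hV hUV).symm⟩

/-- The pairs in `T` commute. -/
def Comm (M : CoxeterMatrix B) (T : Set B) : Prop := ∀ i ∈ T, ∀ j ∈ T, i ≠ j → M i j = 2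

lemma Comm.commute {T : Set B} (hT : Comm M T) {x y : W} (hx : x ∈ cs.parabolic T)
    (hy : y ∈ cs.parabolic T) : x * y = y * x := by
  refine Subgroup.closure_induction₂ (p := fun x y _ _ => Commute x y) ?_ ?_ ?_ ?_ ?_ ?_ ?_ hx hy
  · rintro _ _ ⟨i, hi, rfl⟩ ⟨j, hj, rfl⟩
    by_cases hij : i = j
    · rw [hij]
    · have h := cs.simple_mul_simple_pow i j
      rw [hT i hi j hj hij, pow_two] at h
      have h' := inv_eq_of_mul_eq_one_left h
      rw [mul_inv_rev, cs.inv_simple, cs.inv_simple] at h'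
      exact h'.symm
  · exact fun x _ => Commute.one_left x
  · exact fun x _ => Commute.one_right x
  · exact fun x y z _ _ _ => Commute.mul_left
  · exact fun x y z _ _ _ => Commute.mul_right
  · exact fun x y _ _ => Commute.inv_left
  · exact fun x y _ _ => Commute.inv_right

lemma eq_two_of_commute {i j : B} (hij : i ≠ j)
    (h : cs.simple i * cs.simple j = cs.simple j * cs.simple i) : M i j = 2 := by
  have h1 : M i j ∣ 2 := by
    rw [← orderOf_simple_mul cs]
    refine orderOf_dvd_of_pow_eq_one ?_
    rw [pow_two]
    nth_rw 2 [h]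
    simp [mul_assoc]
  exact ((Nat.dvd_prime Nat.prime_two).1 h1).resolve_left (M.off_diagonal i j hij)

/-- In an odd dihedral parabolic subgroup, a product of two involutions is a rotation, i.e. a
power of `sᵢ sⱼ`. -/
lemma odd_mul {i j : B} (h : Odd (M i j)) {x y : W} (hx : x ∈ cs.parabolic {i, j})
    (hy : y ∈ cs.parabolic {i, j}) (hx2 : x * x = 1) (hy2 : y * y = 1) (hx1 : x ≠ 1)
    (hy1 : y ≠ 1) : x * y ∈ Subgroup.zpowers (cs.simple i * cs.simple j) := by
  rw [parabolic_pair] at hx hy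
  exact dihedral_mul (by simp) (by simp) (by rwa [orderOf_simple_mul]) hx hy hx2 hy2 hx1 hy1

lemma form_ne_zero {i j : B} (hij : i ≠ j) (h : Odd (M i j)) :
    form M (sroot i) (sroot j) ≠ 0 := by
  rw [form_sroot, neg_ne_zero]
  have h3 : 3 ≤ M i j := by
    have := M.off_diagonal i j hij
    obtain ⟨k, hk⟩ := h
    omega
  have h3' : (3 : ℝ) ≤ M i j := by exact_mod_cast h3
  have hpi := pi_pos
  refine (cos_pos_of_mem_Ioo ⟨by linarith [show 0 < π / M i j by positivity], ?_⟩).ne'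
  rw [div_lt_iff₀ (by linarith)]
  nlinarith

/-- Three distinct simple reflections, two of them with a product of odd order, are not all
reflections of one dihedral group: the rotations `sᵢ sⱼ` and `sᵢ sₖ` do not commute.  If they did, `sⱼ sᵢ sₖ = sₖ sᵢ sⱼ`; this element
makes `αₖ` negative, so `sᵢ sⱼ αₖ` is a positive root made negative by `sₖ`, which forces
`sⱼ αₖ = sᵢ αₖ`, and this is absurd. -/
lemma not_commute_triple {i j k : B} (hij : i ≠ j) (hik : i ≠ k) (hjk : j ≠ k)
    (ho : Odd (M j k))
    (hc : (cs.simple i * cs.simple j) * (cs.simple i * cs.simple k) =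
      (cs.simple i * cs.simple k) * (cs.simple i * cs.simple j)) : False := by
  have hc' : cs.simple j * cs.simple i * cs.simple k = cs.simple k * cs.simple i * cs.simple j := by
    simpa [mul_assoc] using hc
  set β := rep cs (cs.simple i) (rep cs (cs.simple j) (sroot k)) with hβ
  have hβr : IsRoot cs β := ((isRoot_sroot k).rep _).rep _
  have hβk : β k = 1 := by
    rw [hβ, rep_simple_of_ne cs _ _ _ hik.symm, rep_simple_of_ne cs _ _ _ hjk.symm]
    simp [sroot]
  have hβ0 : 0 ≤ β := by
    refine hβr.nonneg_or_nonpos.resolve_right fun h => ?_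
    have := h k
    rw [hβk] at this
    simp at this
    linarith
  have h1 : rep cs (cs.simple k) β = -rep cs (cs.simple j) (rep cs (cs.simple i) (sroot k)) := by
    rw [hβ, ← rep_mul_apply, ← rep_mul_apply, ← hc', rep_mul_apply, rep_mul_apply,
      rep_simple_sroot, map_neg, map_neg]
  have h2 : rep cs (cs.simple k) β ≤ 0 := by
    refine (hβr.rep _).nonneg_or_nonpos.resolve_left fun h => ?_
    have := h k
    rw [h1, Pi.neg_apply, rep_simple_of_ne cs _ _ _ hjk.symm,
      rep_simple_of_ne cs _ _ _ hik.symm] at this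
    simp [sroot] at this
    linarith
  have h3 := hβr.eq_sroot hβ0 h2
  have h4 : rep cs (cs.simple j) (sroot k) = rep cs (cs.simple i) (sroot k) := by
    have := congrArg (rep cs (cs.simple i)) h3
    rwa [hβ, ← rep_mul_apply, cs.simple_mul_simple_self, rep_one_apply] at this
  have h5 := congrFun h4 j
  rw [rep_simple_of_ne cs _ _ _ hij.symm, rep_simple_apply] at h5
  have := form_ne_zero hjk ho
  simp [sroot, hjk] at h5
  exact this (by simpa [sroot] using h5)

end Single

/-! ### Conjugacy of maximal spherical parabolic subgroups for two generating sets -/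

section Good

variable {B : Type*} [Fintype B] [DecidableEq B] {M : CoxeterMatrix B} {W : Type*} [Group W]
  {cs : CoxeterSystem M W}

/-- Conditions (0) and (1), expressed through the Coxeter matrix: finite even exponents
are `2`, and pairs with an odd exponent are maximal spherical. -/
structure Good (cs : CoxeterSystem M W) : Prop where
  even : ∀ i j, M i j ≠ 0 → Even (M i j) → M i j = 2
  odd : ∀ i j, i ≠ j → Odd (M i j) → cs.IsMaxSpherical {i, j}

lemma Good.eq_two (h : Good cs) {i j : B} (h0 : M i j ≠ 0) (ho : ¬ Odd (M i j)) : M i j = 2 :=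
  h.even i j h0 (Nat.not_odd_iff_even.1 ho)

lemma Good.cases (h : Good cs) {T : Set B} (hT : cs.IsMaxSpherical T) :
    (∃ i j, i ≠ j ∧ Odd (M i j) ∧ T = {i, j}) ∨ Comm M T := by
  by_cases hc : ∃ i ∈ T, ∃ j ∈ T, i ≠ j ∧ Odd (M i j)
  · obtain ⟨i, hi, j, hj, hij, ho⟩ := hc
    refine Or.inl ⟨i, j, hij, ho, (h.odd i j hij ho).2 T hT.1 ?_⟩
    rintro x (rfl | rfl) <;> assumption
  · push Not at hc
    exact Or.inr fun i hi j hj hij => h.eq_two (IsSpherical.ne_zero hT.1 hi hj)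
      (Nat.not_odd_iff_even.2 (by simpa using hc i hi j hj hij))

lemma Comm.not_odd {T : Set B} (hT : Comm M T) {i j : B} (hi : i ∈ T) (hj : j ∈ T) (hij : i ≠ j) :
    ¬ Odd (M i j) := by
  rw [hT i hi j hj hij]; decide

end Good

section Two

variable {B B' : Type*} [Fintype B] [DecidableEq B] [Fintype B'] [DecidableEq B']
  {M : CoxeterMatrix B} {M' : CoxeterMatrix B'} {W : Type*} [Group W]
  {cs' : CoxeterSystem M' W} {cs : CoxeterSystem M W}

/-- A finite subgroup of `W` is conjugate into a maximal spherical parabolic subgroup. -/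
lemma finite_subgroup_conj_max (cs : CoxeterSystem M W) (H : Subgroup W) (hH : Finite H) :
    ∃ (g : W) (T : Set B), cs.IsMaxSpherical T ∧ ∀ h ∈ H, g * h * g⁻¹ ∈ cs.parabolic T := by
  obtain ⟨g, T, hT, hg⟩ := finite_subgroup_conj (cs := cs) H
  obtain ⟨U, hTU, hU⟩ := exists_isMaxSpherical hT
  exact ⟨g, U, hU, fun h hh => Subgroup.closure_mono (Set.image_mono hTU) (hg h hh)⟩

lemma conj_mul (g x y : W) : g * (x * y) * g⁻¹ = (g * x * g⁻¹) * (g * y * g⁻¹) := by group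

lemma conj_inj {g x y : W} (h : g * x * g⁻¹ = g * y * g⁻¹) : x = y := by simpa using h

lemma orderOf_conj (g x : W) : orderOf (g * x * g⁻¹) = orderOf x :=
  orderOf_injective (MulAut.conj g).toMonoidHom (MulAut.conj g).injective x

/-- The product of two simple reflections of `cs'` conjugate into an odd dihedral
parabolic subgroup of `cs` is conjugate to a rotation. -/
lemma conj_mem_zpowers {i j : B} (ho : Odd (M i j)) {g : W} {i' j' : B'}
    (hi : g * cs'.simple i' * g⁻¹ ∈ cs.parabolic {i, j})
    (hj : g * cs'.simple j' * g⁻¹ ∈ cs.parabolic {i, j}) :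
    g * (cs'.simple i' * cs'.simple j') * g⁻¹ ∈
      Subgroup.zpowers (cs.simple i * cs.simple j) := by
  rw [conj_mul]
  refine odd_mul ho hi hj ?_ ?_ ?_ ?_
  · rw [← conj_mul]; simp
  · rw [← conj_mul]; simp
  · simpa using simple_ne_one (cs := cs') i'
  · simpa using simple_ne_one (cs := cs') j'

lemma conj_dvd {i j : B} (ho : Odd (M i j)) {g : W} {i' j' : B'}
    (hi : g * cs'.simple i' * g⁻¹ ∈ cs.parabolic {i, j})
    (hj : g * cs'.simple j' * g⁻¹ ∈ cs.parabolic {i, j}) : M' i' j' ∣ M i j := by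
  rw [← orderOf_simple_mul cs, ← orderOf_simple_mul cs', ← orderOf_conj g]
  exact orderOf_dvd_of_mem_zpowers (conj_mem_zpowers ho hi hj)

lemma conj_comm {T : Set B} (hT : Comm M T) {T' : Set B'} {g : W}
    (hg : ∀ x ∈ cs'.parabolic T', g * x * g⁻¹ ∈ cs.parabolic T) : Comm M' T' := by
  intro i hi j hj hij
  refine eq_two_of_commute (cs := cs') hij (conj_inj (g := g) ?_)
  rw [conj_mul, conj_mul]
  exact hT.commute (hg _ (simple_mem_parabolic hi)) (hg _ (simple_mem_parabolic hj))

/-- If `cs` satisfies (0) and (1), the spherical subsets of `cs'` consist of commuting pairs, or are contained in a pair with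
odd exponent. -/
lemma Good.spherical_cases (h : Good cs) {T' : Set B'} (hT' : cs'.IsSpherical T') :
    Comm M' T' ∨ (∀ i ∈ T', ∀ j ∈ T', Odd (M' i j)) ∧
      ∀ i ∈ T', ∀ j ∈ T', ∀ k ∈ T', i ≠ j → k = i ∨ k = j := by
  obtain ⟨g, T, hT, hg⟩ := finite_subgroup_conj_max cs (cs'.parabolic T') hT'
  rcases h.cases hT with ⟨a, b, hab, ho, rfl⟩ | hc
  · right
    have hodd : ∀ i ∈ T', ∀ j ∈ T', Odd (M' i j) := fun i hi j hj =>
      Odd.of_dvd_nat ho (conj_dvd ho (hg _ (simple_mem_parabolic hi))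
        (hg _ (simple_mem_parabolic hj)))
    refine ⟨hodd, fun i hi j hj k hk hij => ?_⟩
    by_contra! hcon
    refine not_commute_triple (cs := cs') hij hcon.1.symm hcon.2.symm (hodd j hj k hk)
      (conj_inj (g := g) ?_)
    obtain ⟨p, hp⟩ :=
      conj_mem_zpowers ho (hg _ (simple_mem_parabolic hi)) (hg _ (simple_mem_parabolic hj))
    obtain ⟨q, hq⟩ :=
      conj_mem_zpowers ho (hg _ (simple_mem_parabolic hi)) (hg _ (simple_mem_parabolic hk))
    rw [conj_mul, conj_mul g (cs'.simple i * cs'.simple k), ← hp, ← hq]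
    exact ((Commute.refl _).zpow_zpow p q).eq
  · exact Or.inl (conj_comm hc hg)

/-- Conditions (0) and (1) do not depend on the Coxeter generating set. -/
lemma Good.transfer (h : Good cs) : Good cs' where
  even i j h0 he := by
    by_cases hij : i = j
    · subst hij; simp at he
    rcases h.spherical_cases (isSpherical_pair (cs := cs') h0) with hc | ⟨ho, -⟩
    · exact hc i (by simp) j (by simp) hij
    · exact absurd he (Nat.not_even_iff_odd.2 (ho i (by simp) j (by simp)))
  odd i j hij ho := by
    have h0 : M' i j ≠ 0 := by rintro h; simp [h] at ho
    refine ⟨isSpherical_pair h0, fun U hU hsub => ?_⟩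
    have hi : i ∈ U := hsub (by simp)
    have hj : j ∈ U := hsub (by simp)
    rcases h.spherical_cases hU with hc | ⟨-, h3⟩
    · exact absurd ho (hc.not_odd hi hj hij)
    · refine Set.Subset.antisymm (fun k hk => ?_) hsub
      simpa using h3 i hi j hj k hk hij

/-- `W_T` and `W'_{T'}` are conjugate. -/
def Conj (cs : CoxeterSystem M W) (cs' : CoxeterSystem M' W) (T : Set B) (T' : Set B') : Prop :=
  ∃ g : W, ∀ x, x ∈ cs.parabolic T ↔ g * x * g⁻¹ ∈ cs'.parabolic T'

lemma Conj.symm {T : Set B} {T' : Set B'} (h : Conj cs cs' T T') : Conj cs' cs T' T := by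
  obtain ⟨g, hg⟩ := h
  refine ⟨g⁻¹, fun x => ?_⟩
  rw [hg]
  simp [mul_assoc]

/-- Every maximal spherical parabolic subgroup of `cs` is one of `cs'`, up to conjugation. -/
lemma exists_conj {T : Set B} (hT : cs.IsMaxSpherical T) (cs' : CoxeterSystem M' W) :
    ∃ T', cs'.IsMaxSpherical T' ∧ Conj cs cs' T T' := by
  obtain ⟨g, T', hT', hg⟩ := finite_subgroup_conj_max cs' (cs.parabolic T) hT.1
  obtain ⟨k, U, hU, hk⟩ := finite_subgroup_conj_max cs (cs'.parabolic T') hT'.1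
  have hkg : ∀ x ∈ cs.parabolic T, k * g * x * (k * g)⁻¹ ∈ cs.parabolic U := by
    intro x hx
    simpa [mul_assoc] using hk _ (hg x hx)
  obtain rfl := maxSpherical_unique hT hU.1 (k * g) hkg
  refine ⟨T', hT', g, fun x => ⟨hg x, fun hx => ?_⟩⟩
  have : Finite (cs.parabolic T) := hT.1
  let φ : cs.parabolic T → cs.parabolic T := fun y => ⟨k * g * y * (k * g)⁻¹, hkg y y.2⟩
  have hφ : Function.Injective φ := fun y z hyz =>
    Subtype.ext (conj_inj (congrArg Subtype.val hyz))
  have hx' : k * g * x * (k * g)⁻¹ ∈ cs.parabolic T := by simpa [mul_assoc] using hk _ hx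
  obtain ⟨y, hy⟩ := (Finite.injective_iff_surjective.1 hφ) ⟨_, hx'⟩
  have : (y : W) = x := conj_inj (congrArg Subtype.val hy)
  exact this ▸ y.2

lemma Conj.unique {T : Set B} {T' U' : Set B'} (hT' : cs'.IsMaxSpherical T')
    (hU' : cs'.IsMaxSpherical U') (h1 : Conj cs cs' T T') (h2 : Conj cs cs' T U') : T' = U' := by
  obtain ⟨g, hg⟩ := h1.symm
  obtain ⟨k, hk⟩ := h2
  refine maxSpherical_unique hT' hU'.1 (k * g) fun x hx => ?_
  simpa [mul_assoc] using (hk _).1 ((hg x).1 hx)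

/-- The bijection between maximal spherical subsets given by conjugacy of the parabolic
subgroups. -/
lemma exists_equiv (cs : CoxeterSystem M W) (cs' : CoxeterSystem M' W) :
    ∃ e : {T // cs.IsMaxSpherical T} ≃ {T' // cs'.IsMaxSpherical T'},
      ∀ T, Conj cs cs' T.1 (e T).1 := by
  choose f hf hfc using fun T : {T // cs.IsMaxSpherical T} => exists_conj T.2 cs'
  choose f' hf' hfc' using fun T' : {T' // cs'.IsMaxSpherical T'} => exists_conj T'.2 cs
  exact ⟨⟨fun T => ⟨f T, hf T⟩, fun T' => ⟨f' T', hf' T'⟩,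
    fun T => Subtype.ext (Conj.unique (hf' _) T.2 (hfc' _) (hfc T).symm),
    fun T' => Subtype.ext (Conj.unique (hf _) T'.2 (hfc _) (hfc' T').symm)⟩, hfc⟩

lemma Conj.comm {T : Set B} {T' : Set B'} (h : Conj cs cs' T T') (hT : Comm M T) : Comm M' T' := by
  obtain ⟨g, hg⟩ := h.symm
  exact conj_comm hT fun x hx => (hg x).1 hx

/-- A maximal spherical subset corresponding to a pair with odd exponent is a pair with the same
exponent: the two exponents divide each other. -/
lemma Conj.odd (hG : Good cs) {i j : B} {T' : Set B'} (hij : i ≠ j) (ho : Odd (M i j))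
    (hT' : cs'.IsMaxSpherical T') (h : Conj cs cs' {i, j} T') :
    ∃ i' j', i' ≠ j' ∧ T' = {i', j'} ∧ M' i' j' = M i j := by
  rcases (hG.transfer (cs' := cs')).cases hT' with ⟨i', j', hij', ho', rfl⟩ | hc
  · refine ⟨i', j', hij', rfl, Nat.dvd_antisymm ?_ ?_⟩
    · obtain ⟨g, hg⟩ := h.symm
      exact conj_dvd ho ((hg _).1 (simple_mem_parabolic (by simp)))
        ((hg _).1 (simple_mem_parabolic (by simp)))
    · obtain ⟨g, hg⟩ := h
      exact conj_dvd ho' ((hg _).1 (simple_mem_parabolic (by simp)))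
        ((hg _).1 (simple_mem_parabolic (by simp)))
  · exact absurd ho ((h.symm.comm hc).not_odd (by simp) (by simp) hij)

end Two

/-! ### Sign characters and conjugacy classes of simple reflections -/

section Counting

lemma card_subset_eq {C X : Type*} [Fintype C] [DecidableEq X] (F : C → Finset X) (D : Finset X) :
    Finset.card {c | F c ⊆ D} =
      Finset.card {c | F c = D} + ∑ E ∈ D.ssubsets, Finset.card {c | F c = E} := by
  rw [Finset.card_eq_sum_card_fiberwise (f := F) (t := D.powerset) (fun c hc => by simpa using hc),
    ← Finset.insert_erase (Finset.mem_powerset_self D), Finset.sum_insert (by simp)]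
  have h : ∀ E ⊆ D, Finset.filter (fun c => F c = E) (Finset.univ.filter fun c => F c ⊆ D) =
      Finset.univ.filter fun c => F c = E := by
    intro E hE
    ext c
    simp only [Finset.mem_filter, Finset.mem_univ, true_and, and_iff_right_iff_imp]
    rintro rfl
    exact hE
  rw [h D subset_rfl]
  congr 1
  refine Finset.sum_congr rfl fun E hE => ?_
  rw [h E (Finset.mem_powerset.1 (Finset.mem_of_mem_erase hE))]

/-- Möbius inversion over the subsets of a finite set: if two families of subsets of `X` have, for
each `A`, equally many members disjoint from `A`, then they agree up to a bijection of the
index sets. -/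
lemma exists_equiv_of_card {C C' X : Type*} [Finite C] [Finite C'] [Finite X]
    (f : C → Set X) (g : C' → Set X)
    (h : ∀ A : Set X, Nat.card {c // ∀ x ∈ A, x ∉ f c} = Nat.card {c // ∀ x ∈ A, x ∉ g c}) :
    ∃ e : C ≃ C', ∀ c, g (e c) = f c := by
  classical
  have := Fintype.ofFinite C
  have := Fintype.ofFinite C'
  have := Fintype.ofFinite X
  let F : C → Finset X := fun c => (f c).toFinset
  let G : C' → Finset X := fun c => (g c).toFinset
  have hsub : ∀ D : Finset X, Finset.card {c | F c ⊆ D} = Finset.card {c | G c ⊆ D} := by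
    intro D
    have := h (↑D)ᶜ
    rw [Nat.card_eq_fintype_card, Nat.card_eq_fintype_card, Fintype.card_subtype,
      Fintype.card_subtype] at this
    convert this using 3
    · simp only [F, Finset.subset_iff, Set.mem_toFinset, Set.mem_compl_iff, Finset.mem_coe]
      exact forall_congr' fun x => not_imp_not.symm
    · simp only [G, Finset.subset_iff, Set.mem_toFinset, Set.mem_compl_iff, Finset.mem_coe]
      exact forall_congr' fun x => not_imp_not.symm
  have heq : ∀ D : Finset X, Finset.card {c | F c = D} = Finset.card {c | G c = D} := by
    intro D
    induction D using Finset.strongInduction with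
    | H D ih =>
      have h1 := hsub D
      rw [card_subset_eq F, card_subset_eq G, Finset.sum_congr rfl fun E hE => ih E (Finset.mem_ssubsets.1 hE)] at h1
      omega
  have hfib : ∀ D : Finset X, Nonempty ({c // F c = D} ≃ {c // G c = D}) := by
    intro D
    refine ⟨Fintype.equivOfCardEq ?_⟩
    rw [Fintype.card_subtype, Fintype.card_subtype, heq]
  let e := fun D => (hfib D).some
  refine ⟨Equiv.ofFiberEquiv (f := F) (g := G) e, fun c => ?_⟩
  have := Equiv.ofFiberEquiv_map (f := F) (g := G) e c
  simpa [F, G] using this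

end Counting

section Classes

variable {B : Type*} [Fintype B] [DecidableEq B] {M : CoxeterMatrix B} {W : Type*} [Group W]

/-- Simple reflections up to the equivalence relation generated by odd exponents, i.e. up to
conjugacy in `W`. -/
def Cls (M : CoxeterMatrix B) : Type _ := Quot fun i j => Odd (M i j)

/-- The class of a simple reflection. -/
def cls (M : CoxeterMatrix B) (i : B) : Cls M := Quot.mk _ i

lemma cls_surj (c : Cls M) : ∃ i, cls M i = c := Quot.exists_rep c

lemma cls_eq {i j : B} (h : Odd (M i j)) : cls M i = cls M j := Quot.sound h

instance : Finite (Cls M) := Finite.of_surjective (cls M) cls_surj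

/-- Sign characters of `W` are the functions from classes to `{1, -1}`. -/
noncomputable def charEquiv (cs : CoxeterSystem M W) : (W →* ℤˣ) ≃ (Cls M → ℤˣ) where
  toFun χ := Quot.lift (fun i => χ (cs.simple i)) fun i j h => by
    have h1 := congrArg χ (cs.simple_mul_simple_pow i j)
    obtain ⟨k, hk⟩ := h
    rw [hk, map_pow, map_one, pow_succ, pow_mul, Int.units_sq, one_pow, one_mul, map_mul] at h1
    exact mul_right_cancel (h1.trans (Int.units_mul_self (χ (cs.simple j))).symm)
  invFun f := cs.lift ⟨fun i => f (cls M i), fun i j => by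
    rcases Nat.even_or_odd (M i j) with h | h
    · obtain ⟨k, hk⟩ := h
      rw [hk, ← two_mul, pow_mul, Int.units_sq, one_pow]
    · change (f (cls M i) * f (cls M j)) ^ M i j = 1
      rw [cls_eq h, Int.units_mul_self, one_pow]⟩
  left_inv χ := cs.ext_simple fun i => by
    exact cs.lift_apply_simple _ i
  right_inv f := by
    funext c
    obtain ⟨i, rfl⟩ := cls_surj c
    exact cs.lift_apply_simple _ i

lemma charEquiv_apply (cs : CoxeterSystem M W) (χ : W →* ℤˣ) (i : B) :
    charEquiv cs χ (cls M i) = χ (cs.simple i) := rfl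

lemma card_supported {C : Type*} [Finite C] (p : C → Prop) :
    Nat.card {f : C → ℤˣ // ∀ c, ¬ p c → f c = 1} = 2 ^ Nat.card {c // p c} := by
  classical
  have := Fintype.ofFinite C
  have h : ∀ f : C → ℤˣ, (∀ c, ¬ p c → f c = 1) ↔
      f ∈ Fintype.piFinset fun c => if p c then (Finset.univ : Finset ℤˣ) else {1} := by
    intro f
    rw [Fintype.mem_piFinset]
    refine forall_congr' fun c => ?_
    by_cases hc : p c <;> simp only [hc, not_true, not_false_iff, false_imp_iff, true_imp_iff,
      if_true, if_false, Finset.mem_univ, Finset.mem_singleton]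
  rw [Nat.card_congr (Equiv.subtypeEquivRight h), Nat.card_eq_fintype_card, Fintype.card_coe,
    Fintype.card_piFinset, Nat.card_eq_fintype_card, Fintype.card_subtype]
  simp only [apply_ite Finset.card, Finset.prod_ite]
  simp

/-- The number of sign characters trivial on the parabolic subgroups `W_{T x}`, `x ∈ A`. -/
lemma card_char (cs : CoxeterSystem M W) {X : Type*} (T : X → Set B) (A : Set X) :
    Nat.card {χ : W →* ℤˣ // ∀ x ∈ A, ∀ w ∈ cs.parabolic (T x), χ w = 1} =
      2 ^ Nat.card {c : Cls M // ∀ x ∈ A, c ∉ cls M '' T x} := by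
  rw [← card_supported]
  refine Nat.card_congr ((charEquiv cs).subtypeEquiv fun χ => ?_)
  constructor
  · intro h c hc
    push Not at hc
    obtain ⟨x, hx, i, hi, rfl⟩ := hc
    exact h x hx _ (simple_mem_parabolic hi)
  · intro h x hx w hw
    have : cs.parabolic (T x) ≤ χ.ker := by
      refine (Subgroup.closure_le _).2 ?_
      rintro _ ⟨i, hi, rfl⟩
      refine h (cls M i) fun h' => h' x hx ⟨i, hi, rfl⟩
    exact this hw

end Classes

section Match

variable {B B' : Type*} [Fintype B] [DecidableEq B] [Fintype B'] [DecidableEq B']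
  {M : CoxeterMatrix B} {M' : CoxeterMatrix B'} {W : Type*} [Group W]
  {cs' : CoxeterSystem M' W} {cs : CoxeterSystem M W}

lemma Conj.char {T : Set B} {T' : Set B'} (h : Conj cs cs' T T') (χ : W →* ℤˣ)
    (hχ : ∀ w ∈ cs.parabolic T, χ w = 1) : ∀ w ∈ cs'.parabolic T', χ w = 1 := by
  obtain ⟨g, hg⟩ := h.symm
  intro w hw
  have := hχ _ ((hg w).1 hw)
  rw [map_mul, map_mul, mul_right_comm, ← map_mul, mul_inv_cancel, map_one, one_mul] at this
  exact this

/-- The classes of `cs` and `cs'` correspond to each other, compatibly with the correspondence of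
maximal spherical subsets. -/
lemma exists_cls_equiv (e : {T // cs.IsMaxSpherical T} ≃ {T' // cs'.IsMaxSpherical T'})
    (he : ∀ T, Conj cs cs' T.1 (e T).1) :
    ∃ φ : Cls M ≃ Cls M', ∀ c T, φ c ∈ cls M' '' (e T).1 ↔ c ∈ cls M '' T.1 := by
  obtain ⟨φ, hφ⟩ := exists_equiv_of_card
    (fun c : Cls M => {T : {T // cs.IsMaxSpherical T} | c ∈ cls M '' T.1})
    (fun c : Cls M' => {T | c ∈ cls M' '' (e T).1}) (fun A => by
      refine Nat.pow_right_injective le_rfl ?_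
      have h1 := card_char cs (fun T : {T // cs.IsMaxSpherical T} => T.1) A
      have h2 := card_char cs' (fun T : {T // cs.IsMaxSpherical T} => (e T).1) A
      refine Eq.trans h1.symm (Eq.trans ?_ h2)
      refine Nat.card_congr (Equiv.subtypeEquivRight fun χ => ?_)
      exact forall₂_congr fun T _ => ⟨(he T).char χ, (he T).symm.char χ⟩)
  exact ⟨φ, fun c T => Set.ext_iff.1 (hφ c) T⟩

end Match

/-! ### From matched classes to matched generators -/

section Final

variable {B : Type*} [Fintype B] [DecidableEq B] {M : CoxeterMatrix B} {W : Type*} [Group W]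
  {cs : CoxeterSystem M W}

/-- Condition (2): odd exponents do not share an index. -/
def NoTriple (M : CoxeterMatrix B) : Prop :=
  ∀ i j k, i ≠ j → j ≠ k → i ≠ k → Odd (M i j) → Odd (M j k) → False

lemma NoTriple.cls_eq_iff (hn : NoTriple M) {i j : B} : cls M i = cls M j ↔ Odd (M i j) := by
  have h : Equivalence fun i j => Odd (M i j) := by
    refine ⟨fun i => by simp, fun {i j} hij => by rwa [M.symmetric], fun {i j k} hij hjk => ?_⟩
    by_cases h1 : i = j
    · rwa [h1]
    by_cases h2 : j = k
    · rwa [← h2]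
    by_cases h3 : i = k
    · simp [h3]
    exact (hn i j k h1 h2 h3 hij hjk).elim
  exact h.quot_mk_eq_iff i j

lemma NoTriple.cls_pair (hn : NoTriple M) {i j k : B} (hij : i ≠ j) (ho : Odd (M i j))
    (hk : cls M k = cls M i) : k = i ∨ k = j := by
  by_contra! hcon
  exact hn k i j hcon.1 hij hcon.2 (hn.cls_eq_iff.1 hk) ho

lemma cls_of_mem_image_pair {i j : B} (ho : Odd (M i j)) {c : Cls M}
    (hc : c ∈ cls M '' {i, j}) : c = cls M i := by
  obtain ⟨k, rfl | rfl, rfl⟩ := hc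
  · rfl
  · exact (cls_eq ho).symm

/-- The form in which condition (3) is used: at most one commuting maximal spherical subset meets a
given pair with odd exponent. -/
def Uniq (cs : CoxeterSystem M W) : Prop :=
  ∀ i j, i ≠ j → Odd (M i j) → ∀ U V, cs.IsMaxSpherical U → cs.IsMaxSpherical V →
    Comm M U → Comm M V → (i ∈ U ∨ j ∈ U) → (i ∈ V ∨ j ∈ V) → U = V

/-- A pair with odd exponent can be ordered so that commuting maximal spherical subsets
avoid its second element. -/
lemma Uniq.order (hu : Uniq cs) {i j : B} (hij : i ≠ j) (ho : Odd (M i j)) :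
    ∃ a b, a ≠ b ∧ Odd (M a b) ∧ cls M a = cls M i ∧
      ∀ U, cs.IsMaxSpherical U → Comm M U → b ∉ U := by
  by_cases h : ∃ U, cs.IsMaxSpherical U ∧ Comm M U ∧ j ∈ U
  · obtain ⟨U, hU, hc, hj⟩ := h
    refine ⟨j, i, hij.symm, by rwa [M.symmetric], (cls_eq ho).symm, fun V hV hVc hi => ?_⟩
    obtain rfl := hu i j hij ho U V hU hV hc hVc (Or.inr hj) (Or.inl hi)
    exact hc.not_odd hi hj hij ho
  · push Not at h
    exact ⟨i, j, hij, ho, rfl, h⟩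

variable {B' : Type*} [Fintype B'] [DecidableEq B'] {M' : CoxeterMatrix B'}
  {cs' : CoxeterSystem M' W}

lemma exists_pair_equiv {α β : Type*} {a b : α} {a' b' : β} (hab : a ≠ b) (hab' : a' ≠ b')
    (h : ∀ x, x = a ∨ x = b) (h' : ∀ x, x = a' ∨ x = b') :
    ∃ f : α ≃ β, f a = a' ∧ f b = b' := by
  classical
  let f : α → β := fun x => if x = a then a' else b'
  have hfa : f a = a' := if_pos rfl
  have hfb : f b = b' := if_neg hab.symm
  refine ⟨Equiv.ofBijective f ⟨fun x y hxy => ?_, fun y => ?_⟩, hfa, hfb⟩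
  · rcases h x with rfl | rfl <;> rcases h y with rfl | rfl
    · rfl
    · exact absurd (hfa.symm.trans (hxy.trans hfb)) hab'
    · exact absurd (hfa.symm.trans (hxy.symm.trans hfb)) hab'
    · rfl
  · rcases h' y with rfl | rfl
    · exact ⟨a, hfa⟩
    · exact ⟨b, hfb⟩

/-- Compatible bijections between the maximal spherical subsets and between the classes of simple
reflections of two Coxeter generating sets of `W`. -/
structure Matching (cs : CoxeterSystem M W) (cs' : CoxeterSystem M' W) where
  /-- The bijection between maximal spherical subsets. -/
  e : {T // cs.IsMaxSpherical T} ≃ {T' // cs'.IsMaxSpherical T'}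
  conj : ∀ T, Conj cs cs' T.1 (e T).1
  /-- The bijection between classes. -/
  φ : Cls M ≃ Cls M'
  mem_iff : ∀ c T, φ c ∈ cls M' '' (e T).1 ↔ c ∈ cls M '' T.1

lemma exists_matching (cs : CoxeterSystem M W) (cs' : CoxeterSystem M' W) :
    Nonempty (Matching cs cs') := by
  obtain ⟨e, he⟩ := exists_equiv cs cs'
  obtain ⟨φ, hφ⟩ := exists_cls_equiv e he
  exact ⟨⟨e, he, φ, hφ⟩⟩

/-- The inverse matching. -/
def Matching.symm (m : Matching cs cs') : Matching cs' cs where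
  e := m.e.symm
  conj T := by
    have := (m.conj (m.e.symm T)).symm
    rwa [Equiv.apply_symm_apply] at this
  φ := m.φ.symm
  mem_iff c T := by
    have := m.mem_iff (m.φ.symm c) (m.e.symm T)
    rwa [Equiv.apply_symm_apply, Equiv.apply_symm_apply, Iff.comm] at this

lemma Matching.comm (m : Matching cs cs') {T : {T // cs.IsMaxSpherical T}} :
    Comm M' (m.e T).1 ↔ Comm M T.1 :=
  ⟨(m.conj T).symm.comm, (m.conj T).comm⟩

/-- A matching takes pairs with odd exponent to pairs with the same exponent. -/
lemma Matching.push (m : Matching cs cs') (h : Good cs) {i j : B} (hij : i ≠ j)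
    (ho : Odd (M i j)) :
    ∃ i' j', i' ≠ j' ∧ M' i' j' = M i j ∧ (m.e ⟨{i, j}, h.odd i j hij ho⟩).1 = {i', j'} ∧
      m.φ (cls M i) = cls M' i' := by
  obtain ⟨i', j', hij', hT, hM⟩ :=
    Conj.odd h hij ho (m.e ⟨{i, j}, h.odd i j hij ho⟩).2 (m.conj ⟨{i, j}, h.odd i j hij ho⟩)
  refine ⟨i', j', hij', hM, hT, cls_of_mem_image_pair (hM ▸ ho) ?_⟩
  rw [← hT, m.mem_iff]
  exact ⟨i, by simp, rfl⟩

/-- Condition (2) transfers along a matching: two overlapping pairs with odd exponents lie in one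
class, so they correspond to the same pair of `cs` and are equal. -/
lemma Matching.noTriple (m : Matching cs cs') (h : Good cs) (hn : NoTriple M) :
    NoTriple M' := by
  intro i' j' k' hij' hjk' hik' ho1 ho2
  have h' : Good cs' := h.transfer
  obtain ⟨i, j, hij, hM1, hT, hφ1⟩ := m.symm.push h' hij' ho1
  obtain ⟨k, l, hkl, hM2, hU, hφ2⟩ := m.symm.push h' hjk' ho2
  rw [← hM1] at ho1
  rw [← hM2] at ho2
  rw [cls_eq (hM1 ▸ ho1), hφ2] at hφ1
  have hsub : ({k, l} : Set B) ⊆ {i, j} := by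
    rintro x (rfl | rfl)
    · exact hn.cls_pair hij ho1 hφ1
    · exact hn.cls_pair hij ho1 ((cls_eq ho2).symm.trans hφ1)
  have hmax := (m.symm.e ⟨{j', k'}, h'.odd j' k' hjk' (hM2 ▸ ho2)⟩).2
  have hmax2 := (m.symm.e ⟨{i', j'}, h'.odd i' j' hij' (hM1 ▸ ho1)⟩).2
  rw [hU] at hmax
  rw [hT] at hmax2
  have heq := hmax.2 _ hmax2.1 hsub
  rw [← hT, ← hU] at heq
  have := congrArg Subtype.val (m.symm.e.injective (Subtype.ext heq))
  have hi : i' ∈ ({j', k'} : Set B') := by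
    simp only at this
    rw [← this]; simp
  rcases hi with hi | hi
  · exact hij' hi
  · exact hik' hi

/-- Condition (3), in the form `Uniq`, transfers along a matching. -/
lemma Matching.uniq (m : Matching cs cs') (h : Good cs) (hn : NoTriple M) (hu : Uniq cs) :
    Uniq cs' := by
  intro i' j' hij' ho U V hU hV hUc hVc hUm hVm
  have h' : Good cs' := h.transfer
  obtain ⟨i, j, hij, hM, -, hφ⟩ := m.symm.push h' hij' ho
  have key : ∀ U (hU : cs'.IsMaxSpherical U), (i' ∈ U ∨ j' ∈ U) →
      (i ∈ (m.symm.e ⟨U, hU⟩).1 ∨ j ∈ (m.symm.e ⟨U, hU⟩).1) := by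
    intro U hU hm
    have hc : cls M' i' ∈ cls M' '' U := by
      rcases hm with hm | hm
      · exact ⟨i', hm, rfl⟩
      · exact ⟨j', hm, (cls_eq ho).symm⟩
    obtain ⟨k, hk, hki⟩ := (m.symm.mem_iff (cls M' i') ⟨U, hU⟩).2 hc
    rw [hφ] at hki
    rcases hn.cls_pair hij (hM ▸ ho) hki with rfl | rfl
    · exact Or.inl hk
    · exact Or.inr hk
  have := hu i j hij (hM ▸ ho) _ _ (m.symm.e ⟨U, hU⟩).2 (m.symm.e ⟨V, hV⟩).2
    (m.symm.comm.2 hUc) (m.symm.comm.2 hVc) (key U hU hUm) (key V hV hVm)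
  exact congrArg Subtype.val (m.symm.e.injective (Subtype.ext this))

/-- If `a` is the only element of its class that may belong to `T`, then its membership in `T`
depends on its class only. -/
lemma mem_iff_cls_mem {a : B} {T : Set B} (h : ∀ k ∈ T, cls M k = cls M a → k = a) :
    a ∈ T ↔ cls M a ∈ cls M '' T :=
  ⟨fun ha => ⟨a, ha, rfl⟩, fun ⟨k, hk, hka⟩ => h k hk hka ▸ hk⟩

/-- Corresponding classes are matched compatibly with all commuting maximal spherical subsets. -/
lemma Matching.exists_fiber_equiv (m : Matching cs cs') (h : Good cs) (hn : NoTriple M)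
    (hu : Uniq cs) (c : Cls M) :
    ∃ f : {i // cls M i = c} ≃ {i' // cls M' i' = m.φ c}, ∀ x T, Comm M T.1 →
      (x.1 ∈ T.1 ↔ (f x).1 ∈ (m.e T).1) := by
  have h' : Good cs' := h.transfer
  have hn' := m.noTriple h hn
  have hu' := m.uniq h hn hu
  by_cases hc : ∃ i j, i ≠ j ∧ cls M i = c ∧ cls M j = c
  · obtain ⟨i, j, hij, hi, hj⟩ := hc
    have ho : Odd (M i j) := hn.cls_eq_iff.1 (hi.trans hj.symm)
    obtain ⟨i', j', hij', hM, -, hφ⟩ := m.push h hij ho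
    obtain ⟨a, b, hab, hoab, hai, hb⟩ := hu.order hij ho
    obtain ⟨a', b', hab', hoab', hai', hb'⟩ := hu'.order hij' (hM ▸ ho)
    have hac : cls M a = c := hai.trans hi
    have hac' : cls M' a' = m.φ c := by rw [hai', ← hφ, hi]
    obtain ⟨f, hfa, hfb⟩ := exists_pair_equiv
      (a := (⟨a, hac⟩ : {i // cls M i = c})) (b := ⟨b, (cls_eq hoab).symm.trans hac⟩)
      (a' := (⟨a', hac'⟩ : {i' // cls M' i' = m.φ c}))
      (b' := ⟨b', (cls_eq hoab').symm.trans hac'⟩) (by simpa using hab) (by simpa using hab')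
      (fun x => by simpa [Subtype.ext_iff] using hn.cls_pair hab hoab (x.2.trans hac.symm))
      (fun x => by simpa [Subtype.ext_iff] using hn'.cls_pair hab' hoab' (x.2.trans hac'.symm))
    refine ⟨f, fun x T hT => ?_⟩
    have hbT := hb T.1 T.2 hT
    have hbT' := hb' (m.e T).1 (m.e T).2 (m.comm.2 hT)
    obtain ⟨x, hx⟩ := x
    rcases hn.cls_pair hab hoab (hx.trans hac.symm) with rfl | rfl
    · rw [hfa, mem_iff_cls_mem (a := x), mem_iff_cls_mem (a := a'), hac, hac', m.mem_iff]
      · intro k hk hka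
        refine (hn'.cls_pair hab' hoab' hka).resolve_right ?_
        rintro rfl; exact hbT' hk
      · intro k hk hka
        refine (hn.cls_pair hab hoab hka).resolve_right ?_
        rintro rfl; exact hbT hk
    · rw [hfb]
      exact iff_of_false hbT hbT'
  · push Not at hc
    have hc' : ∀ i' j', i' ≠ j' → cls M' i' = m.φ c → cls M' j' ≠ m.φ c := by
      intro i' j' hij' hi' hj'
      have ho := hn'.cls_eq_iff.1 (hi'.trans hj'.symm)
      obtain ⟨i, j, hij, hM, -, hφ⟩ := m.symm.push h' hij' ho
      rw [hi', show m.symm.φ (m.φ c) = c from m.φ.symm_apply_apply c] at hφ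
      exact hc i j hij hφ.symm ((cls_eq (hM ▸ ho)).symm.trans hφ.symm)
    have hs : Subsingleton {i // cls M i = c} :=
      ⟨fun x y => by by_contra hxy; exact hc x y (by simpa [Subtype.ext_iff] using hxy) x.2 y.2⟩
    have hs' : Subsingleton {i' // cls M' i' = m.φ c} :=
      ⟨fun x y => by by_contra hxy; exact hc' x y (by simpa [Subtype.ext_iff] using hxy) x.2 y.2⟩
    obtain ⟨i, hi⟩ := cls_surj c
    obtain ⟨i', hi'⟩ := cls_surj (m.φ c)
    let f : {i // cls M i = c} ≃ {i' // cls M' i' = m.φ c} :=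
      equivOfSubsingletonOfSubsingleton (fun _ => ⟨i', hi'⟩) (fun _ => ⟨i, hi⟩)
    refine ⟨f, fun x T _ => ?_⟩
    generalize f x = y
    rw [mem_iff_cls_mem (a := x.1), mem_iff_cls_mem (a := y.1), x.2, y.2, m.mem_iff]
    · intro k _ hk
      exact congrArg Subtype.val (Subsingleton.elim
        (⟨k, hk.trans y.2⟩ : {i' // cls M' i' = m.φ c}) y)
    · intro k _ hk
      exact congrArg Subtype.val (Subsingleton.elim (⟨k, hk.trans x.2⟩ : {i // cls M i = c}) x)

/-- Two distinct simple reflections whose product does not have odd order generate a finite group exactly when they belong to a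
common commuting maximal spherical subset. -/
lemma Good.ne_zero_iff (h : Good cs) {i j : B} (hij : i ≠ j) (ho : ¬ Odd (M i j)) :
    M i j ≠ 0 ↔ ∃ T : {T // cs.IsMaxSpherical T}, Comm M T.1 ∧ i ∈ T.1 ∧ j ∈ T.1 := by
  constructor
  · intro h0
    obtain ⟨T, hsub, hT⟩ := exists_isMaxSpherical (isSpherical_pair (cs := cs) h0)
    have hi : i ∈ T := hsub (by simp)
    have hj : j ∈ T := hsub (by simp)
    rcases h.cases hT with ⟨k, l, hkl, hokl, rfl⟩ | hc
    · refine absurd ?_ ho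
      rcases hi with rfl | rfl <;> rcases hj with rfl | rfl
      · exact absurd rfl hij
      · exact hokl
      · rwa [M.symmetric]
      · exact absurd rfl hij
    · exact ⟨⟨T, hT⟩, hc, hi, hj⟩
  · rintro ⟨T, -, hi, hj⟩
    exact IsSpherical.ne_zero T.2.1 hi hj

/-- Rigidity for systems satisfying (0)–(3).  The bijection is glued from bijections between
corresponding classes; it preserves odd exponents because under (2) these are exponents within a
class, and the remaining exponents, `2` or infinite, are determined by membership in commuting maximal
spherical subsets. -/
theorem rigid_matrix (h : Good cs) (hn : NoTriple M) (hu : Uniq cs) (cs' : CoxeterSystem M' W) :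
    ∃ ψ : B ≃ B', ∀ i j, M i j = M' (ψ i) (ψ j) := by
  obtain ⟨m⟩ := exists_matching cs cs'
  have h' : Good cs' := h.transfer
  have hn' := m.noTriple h hn
  choose f hf using m.exists_fiber_equiv h hn hu
  let ψ : B ≃ B' := (Equiv.sigmaFiberEquiv (cls M)).symm.trans
    ((Equiv.sigmaCongr m.φ f).trans (Equiv.sigmaFiberEquiv (cls M')))
  have hψ : ∀ i, ψ i = (f (cls M i) ⟨i, rfl⟩).1 := fun i => rfl
  have hcls : ∀ i, cls M' (ψ i) = m.φ (cls M i) := fun i => by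
    rw [hψ]; exact (f (cls M i) ⟨i, rfl⟩).2
  have hmem : ∀ i T, Comm M T.1 → (i ∈ T.1 ↔ ψ i ∈ (m.e T).1) := fun i T hT =>
    hf (cls M i) ⟨i, rfl⟩ T hT
  refine ⟨ψ, fun i j => ?_⟩
  by_cases hij : i = j
  · subst hij; simp
  have hij' : ψ i ≠ ψ j := fun h => hij (ψ.injective h)
  by_cases ho : Odd (M i j)
  · obtain ⟨i', j', hne, hM, -, hφ⟩ := m.push h hij ho
    have ho' : Odd (M' i' j') := hM ▸ ho
    have h1 := hn'.cls_pair hne ho' ((hcls i).trans hφ)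
    have h2 := hn'.cls_pair hne ho' ((hcls j).trans ((congrArg m.φ (cls_eq ho).symm).trans hφ))
    rw [← hM]
    rcases h1 with h1 | h1 <;> rcases h2 with h2 | h2
    · exact absurd (h1.trans h2.symm) hij'
    · rw [h1, h2]
    · rw [h1, h2, M'.symmetric]
    · exact absurd (h1.trans h2.symm) hij'
  · have ho' : ¬ Odd (M' (ψ i) (ψ j)) := by
      rw [← hn'.cls_eq_iff, hcls, hcls, m.φ.apply_eq_iff_eq, hn.cls_eq_iff]
      exact ho
    have hiff : M i j ≠ 0 ↔ M' (ψ i) (ψ j) ≠ 0 := by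
      rw [h.ne_zero_iff hij ho, h'.ne_zero_iff hij' ho', ← m.e.exists_congr_right]
      refine exists_congr fun T => ?_
      rw [m.comm]
      exact and_congr_right fun hT => and_congr (hmem i T hT) (hmem j T hT)
    by_cases h0 : M i j = 0
    · rw [h0, eq_comm]
      by_contra hcon
      exact hiff.2 hcon h0
    · rw [h.eq_two h0 ho, h'.eq_two (hiff.1 h0) ho']

/-- The pair `{i, j}` is itself one of the at most two maximal spherical subsets meeting it. -/
lemma uniq_of_ncard
    (h1 : ∀ i j : B, i ≠ j → Odd (M i j) → cs.IsMaxSpherical {i, j})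
    (h3 : ∀ i j : B, i ≠ j → Odd (M i j) →
      {T : Set B | cs.IsMaxSpherical T ∧ (T ∩ {i, j}).Nonempty}.ncard ≤ 2) : Uniq cs := by
  intro i j hij ho U V hU hV hUc hVc hUm hVm
  by_contra hne
  have hTU : ({i, j} : Set B) ≠ U := by
    rintro rfl; exact hUc.not_odd (by simp) (by simp) hij ho
  have hTV : ({i, j} : Set B) ≠ V := by
    rintro rfl; exact hVc.not_odd (by simp) (by simp) hij ho
  have hmeet : ∀ U : Set B, (i ∈ U ∨ j ∈ U) → (U ∩ {i, j}).Nonempty := by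
    rintro U (h | h)
    · exact ⟨i, h, by simp⟩
    · exact ⟨j, h, by simp⟩
  have hsub : ({{i, j}, U, V} : Set (Set B)) ⊆
      {T : Set B | cs.IsMaxSpherical T ∧ (T ∩ {i, j}).Nonempty} := by
    rintro T (rfl | rfl | rfl)
    · exact ⟨h1 i j hij ho, hmeet _ (Or.inl (by simp))⟩
    · exact ⟨hU, hmeet _ hUm⟩
    · exact ⟨hV, hmeet _ hVm⟩
  have hle := (Set.ncard_le_ncard hsub (Set.toFinite _)).trans (h3 i j hij ho)
  have h3' : ({{i, j}, U, V} : Set (Set B)).ncard = 3 :=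
    Set.ncard_eq_three.2 ⟨_, _, _, hTU, hTV, hne, rfl⟩
  omega

end Final
end CoxRigid

/-- **Theorem (Hosaka).** Let `(W,S)` be a Coxeter system satisfying conditions (0)–(3).
Then `W` is rigid: any other Coxeter generating set `S'` of `W` is related to `S` by a
bijection preserving the orders `m(s,t)` of products of pairs of generators.
(Here `orderOf x = 0` encodes infinite order.) -/
theorem rigid_of_conditions {B : Type*} [Fintype B] {W : Type*} [Group W]
    {M : CoxeterMatrix B} (cs : CoxeterSystem M W)
    (h0 : ∀ i j : B, orderOf (cs.simple i * cs.simple j) ≠ 0 →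
      Even (orderOf (cs.simple i * cs.simple j)) → orderOf (cs.simple i * cs.simple j) = 2)
    (h1 : ∀ i j : B, i ≠ j → Odd (orderOf (cs.simple i * cs.simple j)) →
      cs.IsMaxSpherical {i, j})
    (h2 : ¬ ∃ i j k : B, i ≠ j ∧ j ≠ k ∧ i ≠ k ∧
      Odd (orderOf (cs.simple i * cs.simple j)) ∧ Odd (orderOf (cs.simple j * cs.simple k)))
    (h3 : ∀ i j : B, i ≠ j → Odd (orderOf (cs.simple i * cs.simple j)) →
      {T : Set B | cs.IsMaxSpherical T ∧ (T ∩ {i, j}).Nonempty}.ncard ≤ 2) :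
    ∀ (B' : Type*) [Fintype B'] (M' : CoxeterMatrix B') (cs' : CoxeterSystem M' W),
      ∃ ψ : B ≃ B', ∀ i j : B,
        orderOf (cs.simple i * cs.simple j)
          = orderOf (cs'.simple (ψ i) * cs'.simple (ψ j)) := by
  classical
  intro B' _ M' cs'
  simp only [CoxRigid.orderOf_simple_mul] at h0 h1 h2 h3 ⊢
  exact CoxRigid.rigid_matrix ⟨h0, h1⟩
    (fun i j k hij hjk hik ho1 ho2 => h2 ⟨i, j, k, hij, hjk, hik, ho1, ho2⟩)
    (CoxRigid.uniq_of_ncard h1 h3) cs'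
end

section
/- If (W,S) is a right-angled Coxeter system, i.e., m(s,t) ∈ {2, ∞} for all s ≠ t ∈ S, then the Coxeter group W is rigid: for every Coxeter generating set S' for W, there exists a bijection ψ : S → S' such that m(s,t) = m'(ψ(s),ψ(t)) for all s,t ∈ S. -/
/-!
Write `m(i, j) = orderOf (s i * s j)`. The proof has three parts.

**The second system is right-angled too.** For right-angled `(W, S)` consider the action of `W` on
`ℤ^S` (dual to the geometric representation) in which `s i` negates the `i`-th coordinate, adds
twice the `i`-th coordinate to the `j`-th one when `m(i, j) = ∞`, and fixes the `j`-th coordinate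
when `m(i, j) = 2`. Tracking the signs of the coordinates of `w • (1, …, 1)` by induction on the
length shows that the action is faithful (`rep_pos_aux`, `eq_one_of_rep_eq_one`). Every `w` acts as
the identity modulo `2`, so Minkowski's argument shows that every element of finite order in `W`
squares to `1` (`sq_eq_one`). If `(W, S')` is any Coxeter system, the real geometric representation
shows that distinct simple reflections are distinct elements of `W` (`simple_injective'`), hence
`s' i * s' j` has order `2` or infinite order whenever `i ≠ j` (`isRightAngled`).

**A linear invariant.** Let `X` be the set of images in `W^ab ≅ 𝔽₂^S` of the elements with
`w² = 1`. Products of commuting generators show that `X` contains every indicator vector of a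
clique of the graph `{m(i, j) ≠ ∞}`. Conversely, if `m(i, j) = ∞`, killing all generators but `s i`
and `s j` maps `W` onto the infinite dihedral group, where an element with odd parity in both
generators is a nontrivial translation; so `X` is exactly the set of clique vectors. The
identification `𝔽₂^S ≅ W^ab ≅ 𝔽₂^S'` therefore carries clique vectors to clique vectors.

**Recovering the graph.** For `v ∈ X` let `N(v) = {w ∈ X | v + w ∈ X}`, which only depends on `X`
and the addition. For `u ∈ X` the vectors `v ∈ X` with `N(u) ⊆ N(v)` are those supported on the
vertices `i` with `N(u) ⊆ N(eᵢ)`, and the vectors `v ∈ X` with `N(u) ⊂ N(v)` span the space of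
vectors supported on the vertices with `N(u) ⊂ N(eᵢ)`. Counting both determines the number of
vertices `i` with `N(eᵢ) = N(u)`, so there is a bijection of vertices compatible with `N`
(`exists_equiv_of_cliqueVectors`), and adjacency of `i` and `j` only depends on `N(eᵢ)` and
`N(eⱼ)`.
-/

/-! ### Simple reflections of a Coxeter system are distinct -/

section Tits
open Polynomial Module

theorem chebyshevS_mul_sin (k : ℤ) (φ : ℝ) :
    (Chebyshev.S ℝ k).eval (2 * Real.cos φ) * Real.sin φ = Real.sin ((k + 1) * φ) := by
  rw [← Chebyshev.U_real_cos, ← Chebyshev.S_comp_two_mul_X]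
  simp

/-- Two reflections whose roots meet at the angle `π - π / m` generate a dihedral group of order
`2 * m`; only the relation `(r₁ r₂) ^ m = 1` is stated. -/
theorem reflection_mul_reflection_pow_eq_one {V : Type*} [AddCommGroup V] [Module ℝ V]
    {x y : V} {f g : Dual ℝ V} (hf : f x = 2) (hg : g y = 2) (m : ℕ) (hm : 2 ≤ m)
    (hfy : f y = -(2 * Real.cos (Real.pi / m))) (hgx : g x = -(2 * Real.cos (Real.pi / m))) :
    (reflection hf * reflection hg) ^ m = 1 := by
  obtain rfl | hm3 : m = 2 ∨ 3 ≤ m := by omega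
  · have hfy' : f y = 0 := by simpa using hfy
    have hgx' : g x = 0 := by simpa using hgx
    ext z
    simp only [pow_two, LinearEquiv.mul_apply, reflection_apply, map_sub, map_smul, hf, hg, hfy',
      hgx', LinearEquiv.coe_one, id]
    module
  · set φ : ℝ := 2 * (Real.pi / m) with hφ
    have hm0 : (0 : ℝ) < m := by positivity
    have hmφ : m * φ = 2 * Real.pi := by rw [hφ]; field_simp
    have hsin : Real.sin φ ≠ 0 := by
      refine (Real.sin_pos_of_pos_of_lt_pi (by positivity) ?_).ne'
      have : (3 : ℝ) ≤ m := by exact_mod_cast hm3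
      nlinarith [Real.pi_pos]
    have ht : 2 * Real.cos φ = f y * g x - 2 := by
      rw [hfy, hgx, hφ, Real.cos_two_mul]; ring
    -- The coefficients of `(r₁ r₂) ^ m` are Chebyshev values at `2 cos φ`; multiplied by `sin φ`, the
    -- relevant ones become multiples of `sin (m φ / 2) = sin π = 0`.
    have key (k : ℤ) := chebyshevS_mul_sin k φ
    have h1 : Real.sin ((m : ℝ) / 2 * φ) = 0 := by
      rw [show (m : ℝ) / 2 * φ = Real.pi by linarith, Real.sin_pi]
    ext z
    rw [reflection_mul_reflection_pow_apply hf hg m z _ ht]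
    obtain ⟨n, rfl | rfl⟩ := Nat.even_or_odd' m
    · have hS : (Chebyshev.S ℝ ((n : ℤ) - 1)).eval (2 * Real.cos φ) = 0 := by
        refine (mul_eq_zero.mp ((key _).trans ?_)).resolve_right hsin
        rw [← h1]; push_cast; congr 1; ring
      rw [show (((2 * n : ℕ) : ℤ) - 2) / 2 = n - 1 by omega,
        show (((2 * n : ℕ) : ℤ) - 1) / 2 = n - 1 by omega, hS]
      simp
    · have hS : (Chebyshev.S ℝ (n : ℤ)).eval (2 * Real.cos φ) +
          (Chebyshev.S ℝ ((n : ℤ) - 1)).eval (2 * Real.cos φ) = 0 := by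
        refine (mul_eq_zero.mp (?_ : _ * Real.sin φ = 0)).resolve_right hsin
        rw [add_mul, key, key, Real.sin_add_sin]
        have : (((n : ℤ) : ℝ) + 1) * φ + (((n : ℤ) - 1 : ℤ) + 1 : ℝ) * φ = 2 * Real.pi := by
          rw [← hmφ]; push_cast; ring
        rw [this]; simp
      rw [show (((2 * n + 1 : ℕ) : ℤ) - 2) / 2 = n - 1 by omega,
        show (((2 * n + 1 : ℕ) : ℤ) - 1) / 2 = n by omega,
        show (((2 * n + 1 : ℕ) : ℤ) - 3) / 2 = n - 1 by omega,
        show (((2 * n + 1 : ℕ) : ℤ)) / 2 = n by omega, hS]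
      simp

/-- Distinct indices give distinct simple reflections: this is read off from the geometric
representation of `W` on `B → ℝ`. -/
theorem CoxeterSystem.simple_injective' {B : Type*} [Fintype B] {W : Type*} [Group W]
    {M : CoxeterMatrix B} (cs : CoxeterSystem M W) : Function.Injective cs.simple := by
  classical
  -- The coroots. For `M i j = 0` (infinite order) the convention `π / 0 = 0` gives the usual `-2`.
  let f : B → Dual ℝ (B → ℝ) := fun i =>
    ∑ j, (-(2 * Real.cos (Real.pi / M i j))) • LinearMap.proj j
  have hf (i j : B) : f i (Pi.single j 1) = -(2 * Real.cos (Real.pi / M i j)) := by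
    simp [f, Pi.single_apply]
  have hf2 (i : B) : f i (Pi.single i 1) = 2 := by simp [hf]
  have hlift : M.IsLiftable (fun i => reflection (hf2 i)) := by
    intro i j
    by_cases hij : i = j
    · subst hij
      ext1 z
      simpa using involutive_reflection (hf2 i) z
    · by_cases h0 : M i j = 0
      · simp [h0]
      · have h1 := M.off_diagonal i j hij
        exact reflection_mul_reflection_pow_eq_one _ _ _ (by omega) (hf i j)
          (by rw [hf, M.symmetric j i])
  intro i j hij
  by_contra hne
  have h : reflection (hf2 i) = reflection (hf2 j) := by
    rw [← cs.lift_apply_simple hlift i, hij, cs.lift_apply_simple hlift j]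
  have h2 := congrFun (LinearEquiv.congr_fun h (Pi.single i 1)) i
  rw [reflection_apply_self, reflection_apply] at h2
  norm_num [Pi.single_apply, hne] at h2

end Tits

/-! ### A faithful integral representation of a right-angled Coxeter group -/

/-- A Coxeter system is right-angled if the product of two distinct simple reflections has order `2`
or infinite order (encoded by `orderOf _ = 0`). The condition is on orders in `W`, not on the entries
of `M`. -/
def CoxeterSystem.IsRightAngled {B W : Type*} [Group W] {M : CoxeterMatrix B}
    (cs : CoxeterSystem M W) :
    Prop :=
  ∀ i j : B, i ≠ j → orderOf (cs.simple i * cs.simple j) = 2 ∨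
      orderOf (cs.simple i * cs.simple j) = 0

section RightAngled

variable {B W : Type*} [Group W] {M : CoxeterMatrix B} {cs : CoxeterSystem M W}

/-- Universal property of a right-angled Coxeter group. -/
theorem CoxeterSystem.IsRightAngled.isLiftable (hra : cs.IsRightAngled) {G : Type*} [Monoid G]
    {f : B → G}
    (h1 : ∀ i, f i * f i = 1)
    (h2 : ∀ i j, i ≠ j → orderOf (cs.simple i * cs.simple j) = 2 → (f i * f j) ^ 2 = 1) :
    M.IsLiftable f := by
  intro i j
  by_cases hij : i = j
  · subst hij; simp [h1]
  have hd : orderOf (cs.simple i * cs.simple j) ∣ M i j :=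
    orderOf_dvd_of_pow_eq_one (cs.simple_mul_simple_pow i j)
  rcases hra i j hij with h | h
  · obtain ⟨k, hk⟩ := h ▸ hd
    rw [hk, pow_mul, h2 i j hij h, one_pow]
  · rw [h, zero_dvd_iff] at hd
    rw [hd, pow_zero]

theorem CoxeterSystem.orderOf_simple_mul_comm (cs : CoxeterSystem M W) (i j : B) :
    orderOf (cs.simple i * cs.simple j) = orderOf (cs.simple j * cs.simple i) := by
  rw [← orderOf_inv, mul_inv_rev, cs.inv_simple, cs.inv_simple]

theorem CoxeterSystem.commute_simple_of_two {i j : B}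
    (h : orderOf (cs.simple i * cs.simple j) = 2) : Commute (cs.simple i) (cs.simple j) := by
  have h2 := pow_orderOf_eq_one (cs.simple i * cs.simple j)
  rw [h, pow_two, mul_eq_one_iff_eq_inv, mul_inv_rev, cs.inv_simple, cs.inv_simple] at h2
  exact h2

open Classical in
/-- Half of the coefficient with which the `i`-th coordinate is added to the `j`-th one by the
`i`-th generator in `raReflection`. -/
noncomputable def CoxeterSystem.raCoeff (cs : CoxeterSystem M W) (i j : B) : ℤ :=
  if j = i then -1 else if orderOf (cs.simple i * cs.simple j) = 0 then 1 else 0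

/-- The action of the `i`-th generator on `B → ℤ`: it negates the `i`-th coordinate and adds twice
the `i`-th coordinate to each `j`-th coordinate with `s i * s j` of infinite order. -/
noncomputable def CoxeterSystem.raReflection (cs : CoxeterSystem M W) (i : B) :
    Module.End ℤ (B → ℤ) where
  toFun v := fun j => v j + 2 * (cs.raCoeff i j * v i)
  map_add' u v := by ext j; simp only [Pi.add_apply]; ring
  map_smul' a v := by ext j; simp; ring

theorem CoxeterSystem.raReflection_apply (cs : CoxeterSystem M W) (i : B) (v : B → ℤ) (j : B) :
    cs.raReflection i v j = v j + 2 * (cs.raCoeff i j * v i) := rfl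

@[simp]
theorem CoxeterSystem.raCoeff_self (cs : CoxeterSystem M W) (i : B) : cs.raCoeff i i = -1 := by
  simp [raCoeff]

theorem CoxeterSystem.raCoeff_of_two (cs : CoxeterSystem M W) {i j : B} (hij : i ≠ j)
    (h : orderOf (cs.simple i * cs.simple j) = 2) : cs.raCoeff i j = 0 := by
  simp [raCoeff, h, hij.symm]

theorem CoxeterSystem.raCoeff_of_zero (cs : CoxeterSystem M W) {i j : B} (hij : i ≠ j)
    (h : orderOf (cs.simple i * cs.simple j) = 0) : cs.raCoeff i j = 1 := by
  simp [raCoeff, h, hij.symm]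

theorem CoxeterSystem.IsRightAngled.isLiftable_raReflection (hra : cs.IsRightAngled) :
    M.IsLiftable cs.raReflection := by
  apply hra.isLiftable
  · intro i
    ext1 v
    ext j
    simp only [Module.End.mul_apply, cs.raReflection_apply, cs.raCoeff_self, Module.End.one_apply]
    ring
  · intro i j hij h
    have h' : orderOf (cs.simple j * cs.simple i) = 2 := by rw [cs.orderOf_simple_mul_comm, h]
    ext1 v
    ext k
    simp only [pow_two, Module.End.mul_apply, cs.raReflection_apply, cs.raCoeff_self,
      Module.End.one_apply, cs.raCoeff_of_two hij h, cs.raCoeff_of_two hij.symm h']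
    ring

/-- The integral representation of a right-angled Coxeter group by the maps `raReflection`. -/
noncomputable def CoxeterSystem.IsRightAngled.rep (hra : cs.IsRightAngled)
    : W →* Module.End ℤ (B → ℤ) :=
  cs.lift ⟨cs.raReflection, hra.isLiftable_raReflection⟩

theorem CoxeterSystem.IsRightAngled.rep_simple (hra : cs.IsRightAngled) (i : B) :
    hra.rep (cs.simple i) = cs.raReflection i :=
  cs.lift_apply_simple _ i

/-- The coordinates of `w • (1, …, 1)` in terms of those of `(s i * w) • (1, …, 1)`. -/
theorem CoxeterSystem.IsRightAngled.rep_descent (hra : cs.IsRightAngled) (w : W) (i j : B) :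
    hra.rep w 1 j = hra.rep (cs.simple i * w) 1 j +
      2 * (cs.raCoeff i j * hra.rep (cs.simple i * w) 1 i) := by
  rw [← cs.raReflection_apply, ← hra.rep_simple, ← Module.End.mul_apply, ← map_mul,
    cs.simple_mul_simple_cancel_left]

/-- The `i`-th coordinate of `w • (1, …, 1)` is positive unless `i` is a left descent of `w`. The
second conjunct strengthens the induction: for a pair with `m(i, j) = ∞` the sum of the two
coordinates is unchanged by `s i` and by `s j`, so it stays positive as long as `j` is not a
left descent. -/
theorem CoxeterSystem.IsRightAngled.rep_pos_aux (hra : cs.IsRightAngled) (n : ℕ) :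
    ∀ w : W, cs.length w = n →
    (∀ i, ¬ cs.IsLeftDescent w i → 0 < hra.rep w 1 i) ∧
    (∀ i j, i ≠ j → orderOf (cs.simple i * cs.simple j) = 0 → ¬ cs.IsLeftDescent w j →
      0 < hra.rep w 1 i + hra.rep w 1 j) := by
  induction n using Nat.strong_induction_on with
  | _ n ih =>
    intro w hw
    have hP : ∀ i, ¬ cs.IsLeftDescent w i → 0 < hra.rep w 1 i := by
      intro i hi
      by_cases hw1 : w = 1
      · subst hw1; simp
      obtain ⟨t, ht⟩ := cs.exists_leftDescent_of_ne_one hw1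
      have hti : t ≠ i := by rintro rfl; exact hi ht
      have hlen := cs.isLeftDescent_iff.mp ht
      have ht' := cs.isLeftDescent_iff_not_isLeftDescent_mul.mp ht
      obtain ⟨ihP, ihQ⟩ := ih _ (by omega) (cs.simple t * w) rfl
      rw [hra.rep_descent w t i]
      rcases hra t i hti with h | h
      · rw [cs.raCoeff_of_two hti h]
        have hcomm : cs.simple i * (cs.simple t * w) = cs.simple t * (cs.simple i * w) := by
          rw [← mul_assoc, ← mul_assoc, (cs.commute_simple_of_two h).eq]
        have : ¬ cs.IsLeftDescent (cs.simple t * w) i := by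
          rw [CoxeterSystem.IsLeftDescent, hcomm]
          have h3 := cs.not_isLeftDescent_iff.mp hi
          have h4 := cs.length_simple_mul (cs.simple i * w) t
          omega
        have := ihP i this
        simpa using this
      · rw [cs.raCoeff_of_zero hti h]
        have h1 := ihP t ht'
        have h2 := ihQ i t hti.symm (by rw [cs.orderOf_simple_mul_comm, h]) ht'
        linarith
    refine ⟨hP, fun i j hij h hj => ?_⟩
    by_cases hi : cs.IsLeftDescent w i
    · have hlen := cs.isLeftDescent_iff.mp hi
      have hi' := cs.isLeftDescent_iff_not_isLeftDescent_mul.mp hi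
      have h2 := (ih _ (by omega) (cs.simple i * w) rfl).2 j i hij.symm
        (by rw [cs.orderOf_simple_mul_comm, h]) hi'
      rw [hra.rep_descent w i i, hra.rep_descent w i j, cs.raCoeff_self,
        cs.raCoeff_of_zero hij h]
      linarith
    · exact add_pos (hP i hi) (hP j hj)

/-- The representation is faithful: even the stabilizer of `(1, …, 1)` is trivial, since a left
descent `i` of `w` makes the `i`-th coordinate of `w • (1, …, 1)` negative. -/
theorem CoxeterSystem.IsRightAngled.eq_one_of_rep_eq_one (hra : cs.IsRightAngled) {w : W}
    (hw : hra.rep w = 1) : w = 1 := by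
  by_contra hw1
  obtain ⟨i, hi⟩ := cs.exists_leftDescent_of_ne_one hw1
  have hi' := cs.isLeftDescent_iff_not_isLeftDescent_mul.mp hi
  have h1 := (hra.rep_pos_aux _ (cs.simple i * w) rfl).1 i hi'
  have h2 := hra.rep_descent w i i
  rw [hw, cs.raCoeff_self] at h2
  simp only [Module.End.one_apply, Pi.one_apply] at h2
  linarith

theorem CoxeterSystem.IsRightAngled.rep_mod_two (hra : cs.IsRightAngled) (w : W) :
    ∃ A : Module.End ℤ (B → ℤ), hra.rep w = 1 + 2 * A := by
  induction w using cs.simple_induction_left with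
  | one => exact ⟨0, by simp⟩
  | mul_simple_left w i ih =>
    obtain ⟨A, hA⟩ := ih
    obtain ⟨C, hC⟩ : ∃ C : Module.End ℤ (B → ℤ), cs.raReflection i = 1 + 2 * C := by
      refine ⟨{ toFun := fun v j => cs.raCoeff i j * v i, map_add' := ?_, map_smul' := ?_ }, ?_⟩
      · intro u v; ext j; simp only [Pi.add_apply]; ring
      · intro a v; ext j; simp; ring
      · ext1 v
        ext j
        rw [two_mul]
        simp [cs.raReflection_apply]
        ring
    refine ⟨A + C + 2 * (C * A), ?_⟩
    rw [map_mul, hra.rep_simple, hA, hC]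
    noncomm_ring

theorem exists_one_add_pow_eq {R : Type*} [Ring R] (x : R) (p : ℕ) :
    ∃ Q : R, (1 + x) ^ p = 1 + p * x + x * x * Q := by
  induction p with
  | zero => exact ⟨0, by simp⟩
  | succ p ih =>
    obtain ⟨Q, hQ⟩ := ih
    refine ⟨Q + p + Q * x, ?_⟩
    rw [pow_succ, hQ, mul_add, mul_one, add_mul, add_mul, mul_add, mul_add, one_mul,
      Nat.cast_succ, add_mul (p : R), one_mul,
      show (p : R) * x * x = x * x * p by rw [mul_assoc, (Nat.cast_commute p (x * x)).eq],
      mul_assoc (x * x) Q x]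
    abel

/-- Minkowski's argument: an integral matrix `1 + 4 N` of prime order is the identity, because
`p N = -4 N² Q` forces `N` to be divisible by every power of `2`. -/
theorem end_eq_zero_of_one_add_pow_eq_one {B : Type*} (N : Module.End ℤ (B → ℤ)) (p : ℕ)
    (hp : p.Prime) (h : (1 + (4 : ℤ) • N) ^ p = 1) : N = 0 := by
  obtain ⟨Q, hQ⟩ := exists_one_add_pow_eq ((4 : ℤ) • N) p
  rw [h] at hQ
  have h1 : (p : ℤ) • N = (-4 : ℤ) • (N * N * Q) := by
    have h2 : (4 : ℤ) • ((p : ℤ) • N - (-4 : ℤ) • (N * N * Q)) = 0 := by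
      have h3 : (p : Module.End ℤ (B → ℤ)) * ((4 : ℤ) • N) +
          ((4 : ℤ) • N) * ((4 : ℤ) • N) * Q = 0 := by
        rw [add_assoc] at hQ
        exact (left_eq_add.mp hQ)
      rw [← h3, ← nsmul_eq_mul]
      simp only [smul_mul_assoc, mul_smul_comm, ← natCast_zsmul]
      module
    exact sub_eq_zero.mp ((smul_eq_zero.mp h2).resolve_left (by norm_num))
  have key : ∀ k : ℕ, ∃ N', N = (2 ^ k : ℤ) • N' := by
    intro k
    induction k with
    | zero => exact ⟨N, by simp⟩
    | succ k ih =>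
      obtain ⟨N', hN'⟩ := ih
      have h2 : (p : ℤ) • N' = (4 : ℤ) • (-(2 ^ k : ℤ) • (N' * N' * Q)) := by
        have h3 : (2 ^ k : ℤ) • ((p : ℤ) • N' - (4 : ℤ) • (-(2 ^ k : ℤ) • (N' * N' * Q))) = 0 := by
          rw [hN'] at h1
          simp only [smul_mul_assoc, mul_smul_comm] at h1
          rw [smul_sub, smul_comm, h1]
          module
        exact sub_eq_zero.mp ((smul_eq_zero.mp h3).resolve_left (by positivity))
      generalize (-(2 ^ k : ℤ) • (N' * N' * Q)) = Z at h2
      obtain ⟨N'', hN''⟩ : ∃ N'', N' = (2 : ℤ) • N'' := by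
        rcases hp.eq_two_or_odd' with rfl | ⟨r, rfl⟩
        · refine ⟨Z, ?_⟩
          have h3 : (2 : ℤ) • (N' - (2 : ℤ) • Z) = 0 := by
            rw [smul_sub, sub_eq_zero]
            push_cast at h2
            rw [h2]; module
          exact sub_eq_zero.mp ((smul_eq_zero.mp h3).resolve_left (by norm_num))
        · refine ⟨(2 : ℤ) • Z - (r : ℤ) • N', ?_⟩
          push_cast at h2
          have : N' = ((2 * r + 1 : ℤ)) • N' - (2 * r : ℤ) • N' := by module
          rw [h2] at this
          rw [this]; nth_rewrite 2 [← this]; module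
      exact ⟨N'', by rw [hN', hN'', pow_succ, mul_smul]⟩
  ext1 v
  ext i
  obtain ⟨N', hN'⟩ := key (N v i).natAbs
  have hd : (2 ^ (N v i).natAbs : ℤ) ∣ N v i :=
    ⟨N' v i, congrFun (LinearMap.congr_fun hN' v) i⟩
  refine Int.eq_zero_of_abs_lt_dvd hd ?_
  rw [Int.abs_eq_natAbs]
  exact_mod_cast Nat.lt_two_pow_self

/-- Elements of finite order in a right-angled Coxeter group square to `1`. -/
theorem CoxeterSystem.IsRightAngled.sq_eq_one (hra : cs.IsRightAngled)
    {w : W} (hw : IsOfFinOrder w) :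
    w ^ 2 = 1 := by
  by_contra hne
  -- A suitable power `h` of `w ^ 2` has prime order, and as a square it acts as `1` modulo `4`.
  set n := orderOf (w ^ 2) with hn
  have hn0 : n ≠ 0 := (orderOf_pos_iff.mpr hw.pow).ne'
  have hn1 : n ≠ 1 := by rwa [hn, Ne, orderOf_eq_one_iff]
  have hp := Nat.minFac_prime hn1
  set p := n.minFac with hpdef
  set h := (w ^ 2) ^ (n / p) with hh
  have hord : orderOf h = p := orderOf_pow_orderOf_div hn0 (Nat.minFac_dvd n)
  obtain ⟨A, hA⟩ := hra.rep_mod_two (w ^ (n / p))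
  have h4 : hra.rep h = 1 + (4 : ℤ) • (A + A * A) := by
    rw [hh, ← pow_mul, mul_comm 2, pow_mul, map_pow, hA]
    noncomm_ring
  have h5 : A + A * A = 0 := by
    apply end_eq_zero_of_one_add_pow_eq_one _ p hp
    rw [← h4, ← map_pow, ← hord, pow_orderOf_eq_one, map_one]
  have h6 : h = 1 := hra.eq_one_of_rep_eq_one (by rw [h4, h5]; simp)
  rw [h6, orderOf_one] at hord
  exact hp.one_lt.ne hord

end RightAngled

/-! ### Parities of involutions -/

section Parity

variable {B W : Type*} [Group W] {M : CoxeterMatrix B} {cs : CoxeterSystem M W}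

open Classical in
/-- The homomorphism `W → 𝔽₂^B` recording the parity of the number of occurrences of each generator
in a word. -/
noncomputable def CoxeterSystem.IsRightAngled.parity (hra : cs.IsRightAngled)
    : W →* Multiplicative (B → ZMod 2) :=
  cs.lift ⟨fun i => Multiplicative.ofAdd (Pi.single i 1), by
    have h (v : Multiplicative (B → ZMod 2)) : v * v = 1 :=
      congrArg Multiplicative.ofAdd (funext fun k => CharTwo.add_self_eq_zero (v.toAdd k))
    exact hra.isLiftable (fun i => h _) (fun i j _ _ => by rw [pow_two, h])⟩

open Classical in
theorem CoxeterSystem.IsRightAngled.parity_simple (hra : cs.IsRightAngled) (i : B) :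
    hra.parity (cs.simple i) = Multiplicative.ofAdd (Pi.single i 1) :=
  cs.lift_apply_simple _ i

/-- The vectors of `𝔽₂^B` whose support is a clique for `R`. -/
def cliqueVectors (R : B → B → Prop) : Set (B → ZMod 2) :=
  {v | ∀ i j, v i ≠ 0 → v j ≠ 0 → R i j}

/-- If `w² = 1`, the generators occurring an odd number of times in `w` pairwise commute. -/
theorem CoxeterSystem.IsRightAngled.parity_mem (hra : cs.IsRightAngled) {w : W} (hw : w * w = 1) :
    (hra.parity w).toAdd ∈ cliqueVectors
      (fun i j => orderOf (cs.simple i * cs.simple j) ≠ 0) := by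
  classical
  intro i j hi hj ho
  have hij : i ≠ j := by rintro rfl; simp at ho
  -- Killing all generators except `s i` and `s j` maps `W` to the infinite dihedral group.
  let f : B → DihedralGroup 0 := fun k =>
    if k = i then .sr 0 else if k = j then .sr 1 else 1
  have hf : M.IsLiftable f := by
    apply hra.isLiftable
    · intro k
      simp only [f]
      split_ifs <;> simp
    · intro k l hkl hkl2
      have h1 : ¬ (k = i ∧ l = j) := by rintro ⟨rfl, rfl⟩; simp [ho] at hkl2
      have h2 : ¬ (k = j ∧ l = i) := by
        rintro ⟨rfl, rfl⟩; rw [cs.orderOf_simple_mul_comm, ho] at hkl2; simp at hkl2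
      simp only [f, pow_two]
      split_ifs <;> simp_all
  -- The parities at `i` and `j` can be read off from the image `r n` or `sr n`: the parity of `n` is
  -- the one at `j`, and the image is a rotation iff the two parities agree.
  have key : ∀ u : W, ∃ n : ℤ, (n : ZMod 2) = (hra.parity u).toAdd j ∧
      ((cs.lift ⟨f, hf⟩ u = DihedralGroup.r (Int.cast n : ZMod 0) ∧
          (hra.parity u).toAdd i = (hra.parity u).toAdd j) ∨
        (cs.lift ⟨f, hf⟩ u = DihedralGroup.sr (Int.cast n : ZMod 0) ∧
          (hra.parity u).toAdd i = (hra.parity u).toAdd j + 1)) := by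
    intro u
    induction u using cs.simple_induction_left with
    | one => exact ⟨0, by simp, Or.inl ⟨by simp, by simp⟩⟩
    | mul_simple_left u k ih =>
      obtain ⟨n, hn, ih⟩ := ih
      rw [map_mul (cs.lift _), map_mul hra.parity, cs.lift_apply_simple, hra.parity_simple]
      simp only [toAdd_mul, toAdd_ofAdd, Pi.add_apply]
      have h2 : (1 : ZMod 2) + 1 = 0 := by decide
      by_cases hki : k = i
      · subst hki
        have hfk : f k = .sr 0 := by simp [f]
        simp only [hfk, Pi.single_eq_same, Pi.single_eq_of_ne hij.symm, zero_add]
        refine ⟨n, hn, ?_⟩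
        rcases ih with ⟨h, hp⟩ | ⟨h, hp⟩
        · exact Or.inr ⟨by rw [h]; simp,
            by rw [hp, add_comm]⟩
        · exact Or.inl ⟨by rw [h]; simp,
            by rw [hp]; linear_combination h2⟩
      by_cases hkj : k = j
      · subst hkj
        have hfk : f k = .sr 1 := by simp [f, hki]
        simp only [hfk, Pi.single_eq_same, Pi.single_eq_of_ne hij, zero_add]
        rcases ih with ⟨h, hp⟩ | ⟨h, hp⟩
        · exact ⟨1 + n, by simp [hn], Or.inr ⟨by rw [h]; simp,
            by rw [hp]; linear_combination -h2⟩⟩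
        · exact ⟨n - 1, by push_cast; rw [hn]; linear_combination -h2, Or.inl ⟨by rw [h]; simp,
            by rw [hp]; ring⟩⟩
      · have hfk : f k = 1 := by simp [f, hki, hkj]
        have h1 : (Pi.single k (1 : ZMod 2) : B → ZMod 2) i = 0 :=
          Pi.single_eq_of_ne (Ne.symm hki) _
        have h3 : (Pi.single k (1 : ZMod 2) : B → ZMod 2) j = 0 :=
          Pi.single_eq_of_ne (Ne.symm hkj) _
        rw [hfk, h1, h3, one_mul, zero_add, zero_add]
        exact ⟨n, hn, ih⟩
  obtain ⟨n, hn, ⟨h, hp⟩ | ⟨h, hp⟩⟩ := key w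
  · have h1 : DihedralGroup.r (Int.cast n : ZMod 0) * DihedralGroup.r (Int.cast n : ZMod 0) =
        (1 : DihedralGroup 0) := by
      rw [← h, ← map_mul, hw, map_one]
    rw [DihedralGroup.r_mul_r, DihedralGroup.one_def] at h1
    have h2 := DihedralGroup.r.inj h1
    rw [← Int.cast_add, ZMod.intCast_zmod_eq_zero_iff_dvd, Nat.cast_zero, zero_dvd_iff] at h2
    have h3 : n = 0 := by omega
    apply hj
    rw [← hn, h3, Int.cast_zero]
  · have hall : ∀ a b : ZMod 2, a ≠ 0 → b ≠ 0 → a ≠ b + 1 := by decide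
    exact hall _ _ hi hj hp

/-- Every clique vector is the parity of the product of the corresponding commuting generators. -/
theorem CoxeterSystem.IsRightAngled.exists_involution (hra : cs.IsRightAngled)
    [Fintype B] {v : B → ZMod 2}
    (hv : v ∈ cliqueVectors (fun i j => orderOf (cs.simple i * cs.simple j) ≠ 0)) :
    ∃ w : W, w * w = 1 ∧ (hra.parity w).toAdd = v := by
  classical
  have key : ∀ A : Finset B, (∀ i ∈ A, v i ≠ 0) → ∃ w : W, w * w = 1 ∧
      (hra.parity w).toAdd = ∑ i ∈ A, Pi.single i 1 ∧
      ∀ k, (∀ i ∈ A, Commute (cs.simple k) (cs.simple i)) → Commute (cs.simple k) w := by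
    intro A
    induction A using Finset.induction_on with
    | empty => exact fun _ => ⟨1, by simp, by simp, fun _ _ => Commute.one_right _⟩
    | insert a A ha ih =>
      intro hA
      obtain ⟨w, hw, hp, hc⟩ := ih (fun i hi => hA i (Finset.mem_insert_of_mem hi))
      have hcom : Commute (cs.simple a) w := by
        refine hc a fun i hi => ?_
        have hai : a ≠ i := by rintro rfl; exact ha hi
        exact cs.commute_simple_of_two ((hra a i hai).resolve_right
          (hv a i (hA a (Finset.mem_insert_self _ _)) (hA i (Finset.mem_insert_of_mem hi))))
      refine ⟨cs.simple a * w, ?_, ?_, ?_⟩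
      · rw [mul_assoc, ← mul_assoc w, ← hcom.eq, mul_assoc, hw, mul_one,
          cs.simple_mul_simple_self]
      · rw [map_mul, hra.parity_simple, toAdd_mul, hp, Finset.sum_insert ha, toAdd_ofAdd]
      · intro k hk
        exact (hk a (Finset.mem_insert_self _ _)).mul_right
          (hc k fun i hi => hk i (Finset.mem_insert_of_mem hi))
  obtain ⟨w, hw, hp, -⟩ := key {i | v i ≠ 0} (by simp)
  refine ⟨w, hw, hp.trans ?_⟩
  ext k
  have h01 : ∀ a : ZMod 2, a ≠ 0 → 1 = a := by decide
  simp only [Finset.sum_apply, Pi.single_apply, Finset.sum_ite_eq, Finset.mem_filter,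
    Finset.mem_univ, true_and]
  split_ifs with h
  · exact h01 _ h
  · simpa using (not_not.mp h).symm

/-- The linear map `𝔽₂^B → 𝔽₂^B'` sending the basis vector `eᵢ` to the parity vector of `s i` with
respect to the second system. -/
noncomputable def CoxeterSystem.IsRightAngled.compare {B' : Type*} {M' : CoxeterMatrix B'}
    {cs' : CoxeterSystem M' W} [Fintype B] (hra' : cs'.IsRightAngled) (cs : CoxeterSystem M W) :
    (B → ZMod 2) →+ (B' → ZMod 2) :=
  (∑ i, (LinearMap.proj (R := ZMod 2) (φ := fun _ : B => ZMod 2) i).smulRight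
    (hra'.parity (cs.simple i)).toAdd).toAddMonoidHom

theorem CoxeterSystem.IsRightAngled.compare_parity {B' : Type*} {M' : CoxeterMatrix B'}
    {cs' : CoxeterSystem M' W} [Fintype B] (hra : cs.IsRightAngled) (hra' : cs'.IsRightAngled)
    (w : W) :
    hra'.compare cs (hra.parity w).toAdd = (hra'.parity w).toAdd := by
  classical
  have : (AddMonoidHom.toMultiplicative (hra'.compare cs)).comp hra.parity = hra'.parity := by
    apply cs.ext_simple
    intro i
    rw [MonoidHom.comp_apply, hra.parity_simple]
    apply Multiplicative.toAdd.injective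
    simp [compare, Pi.single_apply]
  exact congrArg Multiplicative.toAdd (DFunLike.congr_fun this w)

theorem CoxeterSystem.IsRightAngled.parity_surjective [Fintype B] (hra : cs.IsRightAngled)
    (v : B → ZMod 2) :
    ∃ w, (hra.parity w).toAdd = v := by
  classical
  have h : ∀ A : Finset B, ∃ w, (hra.parity w).toAdd = ∑ i ∈ A, Pi.single i (v i) := by
    intro A
    induction A using Finset.induction_on with
    | empty => exact ⟨1, by simp⟩
    | insert a A ha ih =>
      obtain ⟨w, hw⟩ := ih
      have h01 : ∀ x : ZMod 2, x = 0 ∨ x = 1 := by decide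
      rcases h01 (v a) with h | h
      · exact ⟨w, by simp [Finset.sum_insert ha, hw, h]⟩
      · exact ⟨cs.simple a * w, by simp [Finset.sum_insert ha, hw, h, hra.parity_simple]⟩
  obtain ⟨w, hw⟩ := h Finset.univ
  exact ⟨w, hw.trans (Finset.univ_sum_single v)⟩

/-- The identification `𝔽₂^B ≃ 𝔽₂^B'` compatible with the two parity homomorphisms. -/
noncomputable def CoxeterSystem.IsRightAngled.compareEquiv {B' : Type*} {M' : CoxeterMatrix B'}
    {cs' : CoxeterSystem M' W} [Fintype B] [Fintype B']
    (hra : cs.IsRightAngled) (hra' : cs'.IsRightAngled) :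
    (B → ZMod 2) ≃+ (B' → ZMod 2) where
  toFun := hra'.compare cs
  invFun := hra.compare cs'
  left_inv v := by
    obtain ⟨w, rfl⟩ := hra.parity_surjective v
    rw [hra.compare_parity hra', hra'.compare_parity hra]
  right_inv v := by
    obtain ⟨w, rfl⟩ := hra'.parity_surjective v
    rw [hra'.compare_parity hra, hra.compare_parity hra']
  map_add' := map_add _

theorem CoxeterSystem.IsRightAngled.compareEquiv_mem {B' : Type*} {M' : CoxeterMatrix B'}
    {cs' : CoxeterSystem M' W} [Fintype B] [Fintype B']
    (hra : cs.IsRightAngled) (hra' : cs'.IsRightAngled)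
    (v : B → ZMod 2) :
    hra.compareEquiv hra' v ∈
        cliqueVectors (fun i j => orderOf (cs'.simple i * cs'.simple j) ≠ 0) ↔
      v ∈ cliqueVectors (fun i j => orderOf (cs.simple i * cs.simple j) ≠ 0) := by
  constructor
  · intro h
    obtain ⟨w, hw, hp⟩ := hra'.exists_involution h
    have : v = (hra.parity w).toAdd := by
      apply (hra.compareEquiv hra').injective
      rw [← hp]
      exact (hra.compare_parity hra' w).symm
    rw [this]
    exact hra.parity_mem hw
  · intro h
    obtain ⟨w, hw, rfl⟩ := hra.exists_involution h
    have : hra.compareEquiv hra' (hra.parity w).toAdd = (hra'.parity w).toAdd :=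
      hra.compare_parity hra' w
    rw [this]
    exact hra'.parity_mem hw

end Parity

/-! ### Recovering a graph from its clique vectors -/

section Combinatorics

variable {B : Type*}

/-- The set `N(v)` of those `w ∈ X` with `v + w ∈ X`. If `X` consists of the clique vectors of a
graph and `v ∈ X`, these are the `w ∈ X` such that the union of the supports of `v` and `w` is a
clique. -/
def nbhd (X : Set (B → ZMod 2)) (v : B → ZMod 2) : Set (B → ZMod 2) := {w ∈ X | v + w ∈ X}

variable {R : B → B → Prop}

theorem add_mem_cliqueVectors_iff (hsymm : ∀ i j, R i j → R j i) {v w : B → ZMod 2}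
    (hv : v ∈ cliqueVectors R) (hw : w ∈ cliqueVectors R) :
    v + w ∈ cliqueVectors R ↔ ∀ i j, v i ≠ 0 → w j ≠ 0 → R i j := by
  constructor
  · intro h i j hi hj
    by_cases hwi : w i = 0
    · by_cases hvj : v j = 0
      · exact h i j (by simpa [hwi] using hi) (by simpa [hvj] using hj)
      · exact hv i j hi hvj
    · exact hw i j hwi hj
  · intro h i j hi hj
    have hor : ∀ k, (v + w) k ≠ 0 → v k ≠ 0 ∨ w k ≠ 0 := by
      intro k hk
      by_contra! hcon
      exact hk (by simp [hcon.1, hcon.2])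
    rcases hor i hi with hi | hi <;> rcases hor j hj with hj | hj
    · exact hv i j hi hj
    · exact h i j hi hj
    · exact hsymm _ _ (h j i hj hi)
    · exact hw i j hi hj

theorem mem_nbhd_comm {X : Set (B → ZMod 2)} {v w : B → ZMod 2} (hv : v ∈ X)
    (h : w ∈ nbhd X v) : v ∈ nbhd X w :=
  ⟨hv, by rw [add_comm]; exact h.2⟩

variable [DecidableEq B]

theorem single_mem_cliqueVectors (hrefl : ∀ i, R i i) (i : B) :
    Pi.single i 1 ∈ cliqueVectors R := by
  intro j k hj hk
  obtain rfl : j = i := by by_contra h; simp [h] at hj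
  obtain rfl : k = j := by by_contra h; simp [h] at hk
  exact hrefl _

theorem mem_nbhd_single_iff (hrefl : ∀ i, R i i) (hsymm : ∀ i j, R i j → R j i) {i : B}
    {w : B → ZMod 2} :
    w ∈ nbhd (cliqueVectors R) (Pi.single i 1) ↔
      w ∈ cliqueVectors R ∧ ∀ j, w j ≠ 0 → R i j := by
  refine and_congr_right fun hw => ?_
  rw [add_mem_cliqueVectors_iff hsymm (single_mem_cliqueVectors hrefl i) hw]
  constructor
  · intro h j hj
    exact h i j (by simp) hj
  · intro h k j hk hj
    obtain rfl : k = i := by by_contra h; simp [h] at hk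
    exact h j hj

theorem single_mem_nbhd_single_iff (hrefl : ∀ i, R i i) (hsymm : ∀ i j, R i j → R j i) {i j : B} :
    Pi.single j 1 ∈ nbhd (cliqueVectors R) (Pi.single i 1) ↔ R i j := by
  rw [mem_nbhd_single_iff hrefl hsymm]
  constructor
  · intro h
    exact h.2 j (by simp)
  · intro h
    refine ⟨single_mem_cliqueVectors hrefl j, fun k hk => ?_⟩
    obtain rfl : k = j := by by_contra h; simp [h] at hk
    exact h

theorem mem_nbhd_iff (hrefl : ∀ i, R i i) (hsymm : ∀ i j, R i j → R j i) {v w : B → ZMod 2}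
    (hv : v ∈ cliqueVectors R) :
    w ∈ nbhd (cliqueVectors R) v ↔ w ∈ cliqueVectors R ∧
      ∀ i, v i ≠ 0 → w ∈ nbhd (cliqueVectors R) (Pi.single i 1) := by
  simp only [mem_nbhd_single_iff hrefl hsymm]
  refine and_congr_right fun hw => ?_
  rw [add_mem_cliqueVectors_iff hsymm hv hw]
  exact ⟨fun h i hi => ⟨hw, fun j hj => h i j hi hj⟩, fun h i j hi hj => (h i hi).2 j hj⟩

theorem subset_nbhd_iff (hrefl : ∀ i, R i i) (hsymm : ∀ i j, R i j → R j i) {u v : B → ZMod 2}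
    (hu : u ∈ cliqueVectors R) :
    (v ∈ cliqueVectors R ∧ nbhd (cliqueVectors R) u ⊆ nbhd (cliqueVectors R) v) ↔
      ∀ i, v i ≠ 0 → nbhd (cliqueVectors R) u ⊆ nbhd (cliqueVectors R) (Pi.single i 1) := by
  constructor
  · rintro ⟨hv, h⟩ i hi w hw
    exact ((mem_nbhd_iff hrefl hsymm hv).mp (h hw)).2 i hi
  · intro h
    have huu : u ∈ nbhd (cliqueVectors R) u := ⟨hu, by
      have : u + u = 0 := funext fun k => CharTwo.add_self_eq_zero (u k)
      rw [this]; intro i j hi; simp at hi⟩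
    have hv : v ∈ cliqueVectors R := by
      intro i j hi hj
      have h1 := mem_nbhd_comm (single_mem_cliqueVectors hrefl j) (h j hj huu)
      exact (single_mem_nbhd_single_iff hrefl hsymm).mp (h i hi h1)
    exact ⟨hv, fun w hw => (mem_nbhd_iff hrefl hsymm hv).mpr ⟨hw.1, fun i hi => h i hi hw⟩⟩

/-- The vectors with strictly larger neighbourhood than `u` need not form a subgroup (the
intersection of two strictly larger neighbourhoods may be `N(u)`), but the subgroup they generate
consists of all vectors with a given support condition. -/
theorem mem_closure_ssubset_nbhd_iff [Fintype B] (hrefl : ∀ i, R i i)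
    (hsymm : ∀ i j, R i j → R j i) {u v : B → ZMod 2} :
    v ∈ AddSubgroup.closure
        {v | v ∈ cliqueVectors R ∧ nbhd (cliqueVectors R) u ⊂ nbhd (cliqueVectors R) v} ↔
      ∀ i, v i ≠ 0 → nbhd (cliqueVectors R) u ⊂ nbhd (cliqueVectors R) (Pi.single i 1) := by
  constructor
  · intro h
    induction h using AddSubgroup.closure_induction with
    | mem v hv =>
      intro i hi
      exact hv.2.trans_subset fun w hw => ((mem_nbhd_iff hrefl hsymm hv.1).mp hw).2 i hi
    | zero => intro i hi; simp at hi
    | add v w _ _ hv hw =>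
      intro i hi
      by_cases hvi : v i = 0
      · exact hw i (by simpa [hvi] using hi)
      · exact hv i hvi
    | neg v _ hv => intro i hi; exact hv i (by simpa using hi)
  · intro h
    rw [← Finset.univ_sum_single v]
    refine AddSubgroup.sum_mem _ fun i _ => ?_
    have h01 : ∀ x : ZMod 2, x = 0 ∨ x = 1 := by decide
    rcases h01 (v i) with h0 | h1
    · rw [h0, Pi.single_zero]; exact zero_mem _
    · rw [h1]
      exact AddSubgroup.subset_closure
        ⟨single_mem_cliqueVectors hrefl i, h i (by rw [h1]; exact one_ne_zero)⟩

theorem card_supported [Fintype B] (P : B → Prop) :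
    Nat.card {v : B → ZMod 2 // ∀ i, v i ≠ 0 → P i} = 2 ^ Nat.card {i // P i} := by
  classical
  have h : ∀ v : B → ZMod 2, (∀ i, v i ≠ 0 → P i) ↔
      v ∈ Fintype.piFinset (fun i => if P i then Finset.univ else ({0} : Finset (ZMod 2))) := by
    intro v
    rw [Fintype.mem_piFinset]
    refine forall_congr' fun i => ?_
    by_cases hP : P i <;> simp [hP]
  rw [Nat.card_congr (Equiv.subtypeEquivRight h), Nat.card_eq_fintype_card, Fintype.card_coe,
    Fintype.card_piFinset, Nat.card_eq_fintype_card, Fintype.card_subtype]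
  simp [apply_ite Finset.card, Finset.prod_ite, ZMod.card]

/-- The number of vertices with `N(eᵢ) = N(u)` is determined by cardinalities that only depend on
`cliqueVectors R` and the addition. -/
theorem two_pow_card_mul_card [Fintype B] (hrefl : ∀ i, R i i)
    (hsymm : ∀ i j, R i j → R j i) {u : B → ZMod 2} (hu : u ∈ cliqueVectors R) :
    2 ^ Nat.card {i // nbhd (cliqueVectors R) (Pi.single i 1) = nbhd (cliqueVectors R) u} *
        Nat.card (AddSubgroup.closure
          {v | v ∈ cliqueVectors R ∧ nbhd (cliqueVectors R) u ⊂ nbhd (cliqueVectors R) v}) =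
      Nat.card {v // v ∈ cliqueVectors R ∧
        nbhd (cliqueVectors R) u ⊆ nbhd (cliqueVectors R) v} := by
  classical
  rw [Nat.card_congr (Equiv.subtypeEquivRight fun v => subset_nbhd_iff hrefl hsymm hu),
    Nat.card_congr (Equiv.subtypeEquivRight fun v => mem_closure_ssubset_nbhd_iff hrefl hsymm),
    card_supported, card_supported, ← pow_add]
  congr 1
  simp only [Nat.card_eq_fintype_card, Fintype.card_subtype]
  rw [← Finset.card_union_of_disjoint]
  · congr 1
    ext i
    simp only [Finset.mem_union, Finset.mem_filter, Finset.mem_univ, true_and]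
    rw [eq_comm, or_comm, subset_iff_ssubset_or_eq]
  · rw [Finset.disjoint_filter]
    intro i _ h1 h2
    exact h2.ne h1.symm

/-- A linear isomorphism `𝔽₂^B ≃ 𝔽₂^B'` matching the clique vectors of two graphs yields an
isomorphism of the graphs (which need not induce it). -/
theorem exists_equiv_of_cliqueVectors [Fintype B] {B' : Type*} [Fintype B'] {R' : B' → B' → Prop}
    (hrefl : ∀ i, R i i) (hsymm : ∀ i j, R i j → R j i)
    (hrefl' : ∀ i, R' i i) (hsymm' : ∀ i j, R' i j → R' j i)
    (φ : (B → ZMod 2) ≃+ (B' → ZMod 2))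
    (hφ : ∀ v, φ v ∈ cliqueVectors R' ↔ v ∈ cliqueVectors R) :
    ∃ ψ : B ≃ B', ∀ i j, R i j ↔ R' (ψ i) (ψ j) := by
  classical
  set X := cliqueVectors R with hX
  set X' := cliqueVectors R' with hX'
  have hN : ∀ v, nbhd X v = φ ⁻¹' nbhd X' (φ v) := by
    intro v
    ext w
    simp only [nbhd, Set.mem_preimage, Set.mem_ofPred_eq, ← map_add, hφ]
  have hN' : ∀ v', φ ⁻¹' nbhd X' v' = nbhd X (φ.symm v') := by
    intro v'; rw [hN, φ.apply_symm_apply]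
  have hsurj : Function.Surjective φ := φ.surjective
  have hsub : ∀ u v, nbhd X u ⊆ nbhd X v ↔ nbhd X' (φ u) ⊆ nbhd X' (φ v) := by
    intro u v
    rw [hN u, hN v, hsurj.preimage_subset_preimage_iff]
  have hssub : ∀ u v, nbhd X u ⊂ nbhd X v ↔ nbhd X' (φ u) ⊂ nbhd X' (φ v) := by
    intro u v
    rw [ssubset_iff_subset_not_subset, ssubset_iff_subset_not_subset, hsub, hsub]
  -- The neighbourhoods of the vertices of `B'`, pulled back along `φ`, are the same subsets of
  -- `𝔽₂^B` as those of the vertices of `B`, with the same multiplicities.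
  have hcard : ∀ T : Set (B → ZMod 2),
      Nat.card {i // nbhd X (Pi.single i 1) = T} =
        Nat.card {j // φ ⁻¹' nbhd X' (Pi.single j 1) = T} := by
    intro T
    by_cases hT : ∃ u ∈ X, nbhd X u = T
    · obtain ⟨u, hu, rfl⟩ := hT
      have h1 := two_pow_card_mul_card hrefl hsymm hu
      have h2 := two_pow_card_mul_card hrefl' hsymm' ((hφ u).mpr hu)
      have h3 : Nat.card {v // v ∈ X ∧ nbhd X u ⊆ nbhd X v} =
          Nat.card {v // v ∈ X' ∧ nbhd X' (φ u) ⊆ nbhd X' v} :=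
        Nat.card_congr (φ.toEquiv.subtypeEquiv fun v => by
          rw [hsub, ← hφ v]; rfl)
      have h4 : Nat.card (AddSubgroup.closure {v | v ∈ X ∧ nbhd X u ⊂ nbhd X v}) =
          Nat.card (AddSubgroup.closure {v | v ∈ X' ∧ nbhd X' (φ u) ⊂ nbhd X' v}) := by
        have himg : (φ : (B → ZMod 2) →+ (B' → ZMod 2)) '' {v | v ∈ X ∧ nbhd X u ⊂ nbhd X v} =
            {v | v ∈ X' ∧ nbhd X' (φ u) ⊂ nbhd X' v} := by
          ext v'
          obtain ⟨v, rfl⟩ := hsurj v'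
          simp [hssub, hφ]
        rw [← himg, ← AddMonoidHom.map_closure]
        exact Nat.card_congr (φ.addSubgroupMap _).toEquiv
      have h5 : ∀ j, φ ⁻¹' nbhd X' (Pi.single j 1) = nbhd X u ↔
          nbhd X' (Pi.single j 1) = nbhd X' (φ u) := by
        intro j
        rw [hN u, hsurj.preimage_injective.eq_iff]
      rw [Nat.card_congr (Equiv.subtypeEquivRight h5)]
      rw [← hX, h3, h4, ← h2] at h1
      exact Nat.pow_right_injective le_rfl (Nat.eq_of_mul_eq_mul_right Nat.card_pos h1)
    · have e1 : IsEmpty {i // nbhd X (Pi.single i 1) = T} :=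
        ⟨fun i => hT ⟨_, single_mem_cliqueVectors hrefl i.1, i.2⟩⟩
      have e2 : IsEmpty {j // φ ⁻¹' nbhd X' (Pi.single j 1) = T} := by
        refine ⟨fun j => hT ⟨φ.symm (Pi.single j.1 1), ?_, ?_⟩⟩
        · rw [← hφ, φ.apply_symm_apply]
          exact single_mem_cliqueVectors hrefl' j.1
        · rw [← hN', j.2]
      rw [Nat.card_of_isEmpty, Nat.card_of_isEmpty]
  let ψ : B ≃ B' := Equiv.ofFiberEquiv (f := fun i => nbhd X (Pi.single i 1))
    (g := fun j => φ ⁻¹' nbhd X' (Pi.single j 1)) fun T =>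
      Classical.choice (Finite.card_eq.mp (hcard T))
  have hψ : ∀ i, nbhd X (φ.symm (Pi.single (ψ i) 1)) = nbhd X (Pi.single i 1) := by
    intro i
    rw [← hN']
    exact Equiv.ofFiberEquiv_map (f := fun i => nbhd X (Pi.single i 1))
      (g := fun j => φ ⁻¹' nbhd X' (Pi.single j 1))
      (fun T => Classical.choice (Finite.card_eq.mp (hcard T))) i
  have hsX : ∀ i, Pi.single i 1 ∈ X := single_mem_cliqueVectors hrefl
  have hsX' : ∀ j, φ.symm (Pi.single j 1) ∈ X := by
    intro j
    rw [← hφ, φ.apply_symm_apply]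
    exact single_mem_cliqueVectors hrefl' j
  refine ⟨ψ, fun i j => ?_⟩
  rw [← single_mem_nbhd_single_iff hrefl hsymm, ← single_mem_nbhd_single_iff hrefl' hsymm',
    ← hX, ← hX', ← hψ]
  have h1 : Pi.single (ψ j) 1 ∈ nbhd X' (Pi.single (ψ i) 1) ↔
      φ.symm (Pi.single (ψ j) 1) ∈ nbhd X (φ.symm (Pi.single (ψ i) 1)) := by
    rw [← hN', Set.mem_preimage, φ.apply_symm_apply]
  rw [h1]
  constructor
  · intro h
    have h2 := mem_nbhd_comm (hsX' _) h
    rw [← hψ j] at h2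
    exact mem_nbhd_comm (hsX' _) h2
  · intro h
    have h2 := mem_nbhd_comm (hsX' _) h
    rw [hψ j] at h2
    exact mem_nbhd_comm (hsX j) h2

end Combinatorics

/-! ### Rigidity -/

/-- Every Coxeter system of a right-angled Coxeter group is right-angled. -/
theorem CoxeterSystem.IsRightAngled.isRightAngled {B B' W : Type*} [Group W] {M : CoxeterMatrix B}
    {cs : CoxeterSystem M W} (hra : cs.IsRightAngled) [Fintype B'] {M' : CoxeterMatrix B'}
    (cs' : CoxeterSystem M' W) : cs'.IsRightAngled := by
  intro i j hij
  by_cases h0 : orderOf (cs'.simple i * cs'.simple j) = 0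
  · exact Or.inr h0
  · refine Or.inl (orderOf_eq_prime (hra.sq_eq_one ?_) ?_)
    · exact orderOf_pos_iff.mp (Nat.pos_of_ne_zero h0)
    · rw [Ne, mul_eq_one_iff_eq_inv, cs'.inv_simple]
      exact fun h => hij (cs'.simple_injective' h)

/-- **Theorem (Radcliffe).** If `(W,S)` is a right-angled Coxeter system, i.e.
`m(s,t) ∈ {2, ∞}` for all `s ≠ t` in `S`, then `W` is rigid: for every Coxeter
generating set `S'` of `W` there is a bijection `ψ : S → S'` with
`m(s,t) = m'(ψ s, ψ t)` for all `s, t ∈ S`.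
(Here `orderOf x = 0` encodes infinite order.) -/
theorem rightAngled_rigid {B : Type*} [Fintype B] {W : Type*} [Group W]
    {M : CoxeterMatrix B} (cs : CoxeterSystem M W)
    (hra : ∀ i j : B, i ≠ j → orderOf (cs.simple i * cs.simple j) = 2 ∨
      orderOf (cs.simple i * cs.simple j) = 0) :
    ∀ (B' : Type*) [Fintype B'] (M' : CoxeterMatrix B') (cs' : CoxeterSystem M' W),
      ∃ ψ : B ≃ B', ∀ i j : B,
        orderOf (cs.simple i * cs.simple j)
          = orderOf (cs'.simple (ψ i) * cs'.simple (ψ j)) := by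
  classical
  intro B' _ M' cs'
  have hra1 : cs.IsRightAngled := hra
  have hra2 : cs'.IsRightAngled := hra1.isRightAngled cs'
  obtain ⟨ψ, hψ⟩ := exists_equiv_of_cliqueVectors
    (R := fun i j => orderOf (cs.simple i * cs.simple j) ≠ 0)
    (R' := fun i j => orderOf (cs'.simple i * cs'.simple j) ≠ 0)
    (fun i => by simp) (fun i j h => by rwa [cs.orderOf_simple_mul_comm])
    (fun i => by simp) (fun i j h => by rwa [cs'.orderOf_simple_mul_comm])
    (hra1.compareEquiv hra2) (hra1.compareEquiv_mem hra2)
  refine ⟨ψ, fun i j => ?_⟩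
  by_cases hij : i = j
  · subst hij; simp
  · have h1 := hra1 i j hij
    have h2 := hra2 (ψ i) (ψ j) (ψ.injective.ne hij)
    have h3 := hψ i j
    omega
end

section
/- Let (W,S) be a Coxeter system such that for each s ≠ t ∈ S the order m(s,t) of st lies in {2} ∪ 4ℕ (that is, m(s,t) equals 2 or is a positive multiple of 4) or is infinite. Then the Coxeter group W is rigid: for every Coxeter generating set S' for W, there exists a bijection ψ : S → S' such that m(s,t) = m'(ψ(s),ψ(t)) for all s,t ∈ S. -/
/-!
Write `s i`, `i ∈ B`, and `t x`, `x ∈ B'`, for the two Coxeter generating sets of `W`, and `m`, `m'`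
for the orders of products of two generators, infinite order being `0`, so that divisibility
also makes sense for infinite orders.

*Matching.* Since all `m i j` with `i ≠ j` are even, the characters `W → ℤ/2` have a basis `X i` dual
to the `s i`. They also have a basis dual to the classes of `B'` under the relation generated by
oddness of the order of `t x * t y`. The two base changes are mutually inverse matrices over `ℤ/2`, so a
nonzero term in a determinant expansion gives a bijection `ψ` from `B` to the set of classes such
that `X i (t x) ≠ 0` for every `x` in the class `ψ i` (`exists_matching`).

*Orders of `s` divide orders of `t`.* Let `x`, `y` lie in distinct classes `ψ i`, `ψ j`. If
`n ∣ m i j`, there is a homomorphism `f` from `W` to the dihedral group of order `2 n` that sends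
`s i`, `s j` to the standard reflections and kills the other generators (`exists_dihedral_hom`). For
`n = 2 ^ k` with `k ≥ 2`, the characters `X i`, `X j` factor through `f` and no involution is a
rotation by an odd amount, so `f (t x)` and `f (t y)` are reflections whose product is a rotation by
a unit, of order `n` (`two_pow_dvd`). This also shows that `X i` and `X j` have disjoint supports
on the generators `t z` when `4 ∣ m i j`. For odd `n`, the generators `t z` in the support of `X i` all go to one
reflection, those in the support of `X j` to another one, and the remaining ones to `1`; as `f` is
onto, the product of these two reflections has order `n` (`odd_dvd`). If
`m i j = 2`, the order of `t x * t y` is even because the classes are distinct. Altogether `m i j ∣ m' x y` (`dvd_of_matching`).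

*Converse.* By this divisibility, `t x ↦ f (s (ψ⁻¹ [x]))` extends to a homomorphism for every
homomorphism `f : W → G`. For finite `G` this defines an injective self-map of the finite set
`Hom(W, G)`, which is therefore onto (`exists_hom_transport`). Hence in every finite quotient the order of
`t x * t y` divides `m (ψ⁻¹ [x]) (ψ⁻¹ [y])`. The geometric representation over a finite prime field
with enough roots of unity (`dvd_of_forall_finite`) detects the entries of the Coxeter matrix in finite
quotients, so `M' x y` divides `m (ψ⁻¹ [x]) (ψ⁻¹ [y])`. For `x`, `y` in one class the latter is `1`, so the
classes are singletons, and then the two divisibilities give equality.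
-/

/-! ### Reflection representations over finite fields -/

/-- By the elementary case of Dirichlet's theorem there is a prime `l ≡ 1` modulo `N`; the cyclic
group of units of `ZMod l` then contains all the roots of unity required. -/
theorem exists_prime_primitiveRoots (N : ℕ) (hN : N ≠ 0) :
    ∃ l : ℕ, l.Prime ∧ ∀ d, d ∣ N → ∃ ξ : ZMod l, IsPrimitiveRoot ξ d := by
  obtain ⟨l, hl, -, hmod⟩ := Nat.exists_prime_gt_modEq_one (k := N) 0 hN
  have : Fact l.Prime := ⟨hl⟩
  refine ⟨l, hl, fun d hd => ?_⟩
  obtain ⟨g, hg⟩ := IsCyclic.exists_ofOrder_eq_natCard (α := (ZMod l)ˣ)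
  rw [Nat.card_eq_fintype_card, ZMod.card_units] at hg
  have hdl : d ∣ l - 1 := hd.trans ((Nat.modEq_iff_dvd' hl.one_lt.le).1 hmod.symm)
  obtain ⟨e, he⟩ := hdl
  have hpr : IsPrimitiveRoot g (l - 1) := hg ▸ IsPrimitiveRoot.orderOf g
  have := hpr.pow (Nat.sub_pos_of_lt hl.one_lt) (by rw [he, mul_comm] : l - 1 = e * d)
  exact ⟨((g ^ e : (ZMod l)ˣ) : ZMod l), IsPrimitiveRoot.coe_units_iff.2 this⟩

/-- The product `τ` of the reflections `1 - p` and `1 - q` acts on the span of their two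
roots with determinant `1` and trace `t - 2`, and trivially modulo that span. -/
theorem cubic_relation {R : Type*} [Ring R] {F : Type*} [Field F] [Algebra F R]
    (p q : R) (t : F) (hp : p * p = (2 : F) • p) (hq : q * q = (2 : F) • q)
    (hpqp : p * q * p = t • p) (hqpq : q * p * q = t • q) :
    (((1 - p) * (1 - q)) ^ 2 - (t - 2) • ((1 - p) * (1 - q)) + 1) * ((1 - p) * (1 - q) - 1) = 0 := by
  have h1 : (1 - p) * (1 - q) - 1 = p * q - p - q := by noncomm_ring
  rw [h1]
  set τ := (1 - p) * (1 - q) with hτ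
  have tp : τ * p = (t - 1) • p - q * p := by
    have : τ * p = p - p * p - q * p + p * q * p := by rw [hτ]; noncomm_ring
    rw [this, hp, hpqp]; module
  have tq : τ * q = p * q - q := by
    have : τ * q = q - p * q - q * q + p * (q * q) := by rw [hτ]; noncomm_ring
    rw [this, hq, mul_smul_comm]; module
  have tpq : τ * (p * q) = (t - 1) • (p * q) - t • q := by
    rw [← mul_assoc, tp, sub_mul, smul_mul_assoc, hqpq]
  have tqp : τ * (q * p) = t • p - q * p := by
    rw [← mul_assoc, tq, sub_mul, hpqp]
  have ap : (τ ^ 2 - (t - 2) • τ + 1) * p = 0 := by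
    have : (τ ^ 2 - (t - 2) • τ + 1) * p = τ * (τ * p) - (t - 2) • (τ * p) + p := by
      rw [add_mul, sub_mul, smul_mul_assoc, one_mul, sq, mul_assoc]
    rw [this, tp, mul_sub, mul_smul_comm, tp, tqp]; module
  have aq : (τ ^ 2 - (t - 2) • τ + 1) * q = 0 := by
    have : (τ ^ 2 - (t - 2) • τ + 1) * q = τ * (τ * q) - (t - 2) • (τ * q) + q := by
      rw [add_mul, sub_mul, smul_mul_assoc, one_mul, sq, mul_assoc]
    rw [this, tq, mul_sub, tpq, tq]; module
  rw [mul_sub, mul_sub, ← mul_assoc, ap, aq]; simp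

/-- The cubic has the distinct roots `ζ`, `ζ⁻¹`, `1`, so it divides `X ^ m - 1`. -/
theorem pow_eq_one_of_cubic {R : Type*} [Ring R] {F : Type*} [Field F] [Algebra F R]
    (τ : R) (ζ : F) (m : ℕ) (hm : 3 ≤ m) (hζ : IsPrimitiveRoot ζ m)
    (h : (τ ^ 2 - (ζ + ζ⁻¹) • τ + 1) * (τ - 1) = 0) : τ ^ m = 1 := by
  open Polynomial in
  have hζ0 : ζ ≠ 0 := hζ.ne_zero (by omega)
  have hζ1 : ζ ≠ 1 := hζ.ne_one (by omega)
  have hζi : ζ ≠ ζ⁻¹ := by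
    intro h'
    have : ζ ^ 2 = 1 := by rw [sq]; nth_rw 2 [h']; exact mul_inv_cancel₀ hζ0
    have := Nat.le_of_dvd (by norm_num) (hζ.dvd_of_pow_eq_one 2 this)
    omega
  have hζi1 : ζ⁻¹ ≠ 1 := fun h' => hζ1 (inv_eq_one.1 h')
  have d (a : F) (ha : a ^ m = 1) : (X - C a : F[X]) ∣ X ^ m - 1 := by
    rw [dvd_iff_isRoot]; simp [ha]
  have hdvd : ((X - C ζ) * (X - C ζ⁻¹) * (X - C 1) : F[X]) ∣ X ^ m - 1 := by
    have c (a b : F) (hab : a ≠ b) : IsCoprime (X - C a : F[X]) (X - C b) :=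
      isCoprime_X_sub_C_of_isUnit_sub (sub_ne_zero.2 hab).isUnit
    refine IsCoprime.mul_dvd ((c _ _ hζ1).mul_left (c _ _ hζi1))
      (IsCoprime.mul_dvd (c _ _ hζi) (d _ hζ.pow_eq_one) (d _ ?_)) (d _ (one_pow _))
    rw [inv_pow, hζ.pow_eq_one, inv_one]
  obtain ⟨g, hg⟩ := hdvd
  have h2 := congrArg (aeval τ) hg
  have h3 : aeval τ ((X - C ζ) * (X - C ζ⁻¹) * (X - C 1) : F[X]) = 0 := by
    rw [← h]
    have : ((X - C ζ) * (X - C ζ⁻¹) : F[X]) = X ^ 2 - (ζ + ζ⁻¹) • X + 1 := by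
      rw [smul_eq_C_mul, C_add]
      have : (C ζ * C ζ⁻¹ : F[X]) = 1 := by rw [← C_mul, mul_inv_cancel₀ hζ0, C_1]
      linear_combination this
    rw [this]; simp
  rw [map_mul, h3, zero_mul] at h2
  simpa [sub_eq_zero] using h2

/-- The matrix of the reflection `v ↦ v - (∑ b, c a b * v b) • e_a` in the basis `e` of simple
roots, for a matrix `c` in the role of a generalised Cartan matrix. -/
def reflMatrix {B F : Type*} [DecidableEq B] [Field F] (c : B → B → F) (a : B) : Matrix B B F :=
  1 - Matrix.vecMulVec (Pi.single a 1) (c a)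

theorem vecMulVec_single_mul {B F : Type*} [Fintype B] [DecidableEq B] [Field F]
    (c : B → B → F) (a b : B) (v : B → F) :
    Matrix.vecMulVec (Pi.single a 1) (c a) * Matrix.vecMulVec (Pi.single b 1) v =
      c a b • Matrix.vecMulVec (Pi.single a 1) v := by
  rw [Matrix.vecMulVec_mul_vecMulVec]
  simp

theorem reflMatrix_mul_pow {B F : Type*} [Fintype B] [DecidableEq B] [Field F]
    (c : B → B → F) (a b : B) (m : ℕ) (ξ : F) (hm : m ≠ 0) (hξ : IsPrimitiveRoot ξ (2 * m))
    (hab : m = 1 → a = b)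
    (h1 : c a b = -(ξ + ξ⁻¹)) (h2 : c b a = -(ξ + ξ⁻¹)) (ha : c a a = 2) (hb : c b b = 2) :
    (reflMatrix c a * reflMatrix c b) ^ m = 1 := by
  have hξ0 : ξ ≠ 0 := hξ.ne_zero (by omega)
  have hpa := vecMulVec_single_mul c a a (c a)
  have hpb := vecMulVec_single_mul c b b (c b)
  have hpq := vecMulVec_single_mul c a b (c b)
  have hqp := vecMulVec_single_mul c b a (c a)
  have hpqp : Matrix.vecMulVec (Pi.single a 1) (c a) * Matrix.vecMulVec (Pi.single b 1) (c b) *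
      Matrix.vecMulVec (Pi.single a 1) (c a) =
      (c a b * c b a) • Matrix.vecMulVec (Pi.single a 1) (c a) := by
    rw [mul_assoc, hqp, mul_smul_comm, vecMulVec_single_mul, smul_smul, mul_comm]
  have hqpq : Matrix.vecMulVec (Pi.single b 1) (c b) * Matrix.vecMulVec (Pi.single a 1) (c a) *
      Matrix.vecMulVec (Pi.single b 1) (c b) =
      (c a b * c b a) • Matrix.vecMulVec (Pi.single b 1) (c b) := by
    rw [mul_assoc, hpq, mul_smul_comm, vecMulVec_single_mul, smul_smul]
  rw [ha] at hpa
  rw [hb] at hpb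
  unfold reflMatrix
  set p := Matrix.vecMulVec (Pi.single a 1) (c a) with hp
  set q := Matrix.vecMulVec (Pi.single b 1) (c b) with hq
  have hζ : IsPrimitiveRoot (ξ ^ 2) m := hξ.pow (by omega) rfl
  rcases (by omega : m = 1 ∨ m = 2 ∨ 3 ≤ m) with rfl | rfl | h3
  · obtain rfl := hab rfl
    have : (1 - p) * (1 - p) = 1 - (2 : F) • p + p * p := by
      rw [two_smul]; noncomm_ring
    rw [pow_one, ← hp.trans hq.symm, this, hpa]; simp
  · have h4 : ξ ^ 2 = -1 := hζ.eq_neg_one_of_two_right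
    have h0 : ξ + ξ⁻¹ = 0 := by field_simp; rw [h4]; ring
    rw [h1, h0, neg_zero, zero_smul] at hpq
    rw [h2, h0, neg_zero, zero_smul] at hqp
    have e : (1 - p) * (1 - q) = 1 - p - q := by
      have : (1 - p) * (1 - q) = 1 - p - q + p * q := by noncomm_ring
      rw [this, hpq, add_zero]
    have e2 : (1 - p - q) * (1 - p - q) = 1 - (2 : F) • p - (2 : F) • q + p * p + q * q
        + p * q + q * p := by
      rw [two_smul, two_smul]; noncomm_ring
    rw [sq, e, e2, hpa, hpb, hpq, hqp]; module
  · refine pow_eq_one_of_cubic _ (ξ ^ 2) m h3 hζ ?_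
    have := cubic_relation p q (c a b * c b a) hpa hpb hpqp hqpq
    have e : c a b * c b a - 2 = ξ ^ 2 + (ξ ^ 2)⁻¹ := by
      rw [h1, h2]; field_simp; ring
    rwa [e] at this

/-- The vector `ξ • e_a + e_b` is an eigenvector of the product of the two reflections, with
eigenvalue `ξ ^ 2` of order `m`. -/
theorem dvd_of_reflMatrix_pow {B F : Type*} [Fintype B] [DecidableEq B] [Field F]
    (c : B → B → F) (a b : B) (m n : ℕ) (ξ : F) (hm : m ≠ 0) (hξ : IsPrimitiveRoot ξ (2 * m))
    (hab : a ≠ b)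
    (h1 : c a b = -(ξ + ξ⁻¹)) (h2 : c b a = -(ξ + ξ⁻¹)) (ha : c a a = 2) (hb : c b b = 2)
    (h : (reflMatrix c a * reflMatrix c b) ^ n = 1) : m ∣ n := by
  have hξ0 : ξ ≠ 0 := hξ.ne_zero (by omega)
  set v : B → F := Pi.single a ξ + Pi.single b 1 with hv
  have act (x : B) (u : B → F) :
      (reflMatrix c x).mulVec u = u - Pi.single x (c x ⬝ᵥ u) := by
    rw [reflMatrix, Matrix.sub_mulVec, Matrix.one_mulVec, Matrix.vecMulVec_mulVec]
    congr 1
    ext y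
    by_cases hy : y = x <;> simp [hy]
  have ev : (reflMatrix c a * reflMatrix c b).mulVec v = ξ ^ 2 • v := by
    rw [← Matrix.mulVec_mulVec, act, act, hv]
    ext y
    simp only [dotProduct_add, dotProduct_sub, dotProduct_single, h1, h2, ha, hb, Pi.sub_apply,
      Pi.add_apply, Pi.smul_apply, smul_eq_mul, Pi.single_apply]
    by_cases hya : y = a
    · have : y ≠ b := fun h => hab (hya ▸ h)
      simp only [hya, hab, if_true, if_false]
      field_simp; ring
    · by_cases hyb : y = b
      · simp only [hyb, Ne.symm hab, if_true, if_false]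
        field_simp; ring
      · simp [hya, hyb]
  have evn (k : ℕ) : ((reflMatrix c a * reflMatrix c b) ^ k).mulVec v = (ξ ^ 2) ^ k • v := by
    induction k with
    | zero => simp
    | succ k ih => rw [pow_succ, ← Matrix.mulVec_mulVec, ev, Matrix.mulVec_smul, ih, smul_smul,
        ← pow_succ']
  have hb' := congrFun (evn n) b
  rw [h, Matrix.one_mulVec] at hb'
  simp only [hv, Pi.add_apply, Pi.smul_apply, Pi.single_apply, Ne.symm hab, if_true, if_false,
    smul_eq_mul, zero_add, mul_one] at hb'
  rw [← pow_mul] at hb'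
  exact (Nat.mul_dvd_mul_iff_left two_pos).1 (hξ.dvd_of_pow_eq_one _ hb'.symm)

/-- The entries of a Coxeter matrix are detected by representations over finite rings. -/
theorem dvd_of_forall_finite {B W : Type*} [Finite B] [Group W] {M : CoxeterMatrix B}
    (cs : CoxeterSystem M W) (i j : B) (n : ℕ)
    (h : ∀ (l : ℕ) [NeZero l] (_ : DecidableEq B) (_ : Fintype B) (g : W →* Matrix B B (ZMod l)),
      (g (cs.simple i) * g (cs.simple j)) ^ n = 1) : M i j ∣ n := by
  classical
  have := Fintype.ofFinite B
  rcases eq_or_ne i j with rfl | hij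
  · simp
  -- Infinite entries are replaced by `n + 2`, which divides `n` only when `n = 0`.
  let m : B → B → ℕ := fun a b => if M a b = 0 then n + 2 else M a b
  have hm0 (a b) : m a b ≠ 0 := by
    simp only [m]; split_ifs with h0 <;> omega
  have hm1 (a b) (h1 : m a b = 1) : a = b := by
    by_contra hne
    have := M.off_diagonal a b hne
    simp only [m] at h1; split_ifs at h1 <;> omega
  have hsymm (a b) : m a b = m b a := by simp only [m, M.symmetric a b]
  obtain ⟨l, hl, hroot⟩ := exists_prime_primitiveRoots (∏ x : B × B, 2 * m x.1 x.2)
    (Finset.prod_ne_zero_iff.2 fun x _ => mul_ne_zero two_ne_zero (hm0 _ _))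
  have : Fact l.Prime := ⟨hl⟩
  have hroot' (k : ℕ) : ∃ ξ : ZMod l, (∃ a b, m a b = k) → IsPrimitiveRoot ξ (2 * k) := by
    by_cases hk : ∃ a b, m a b = k
    · obtain ⟨a, b, rfl⟩ := hk
      obtain ⟨ξ, hξ⟩ := hroot (2 * m a b)
        (Finset.dvd_prod_of_mem (fun x : B × B => 2 * m x.1 x.2) (Finset.mem_univ (a, b)))
      exact ⟨ξ, fun _ => hξ⟩
    · exact ⟨0, fun h => absurd h hk⟩
  -- The root of unity is chosen as a function of `m a b`, which makes `c` symmetric.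
  choose ξ hξ using hroot'
  let c : B → B → ZMod l := fun a b => -(ξ (m a b) + (ξ (m a b))⁻¹)
  have hdiag (a) : c a a = 2 := by
    have h1 : m a a = 1 := by simp [m]
    have h2 : ξ 1 = -1 := (hξ 1 ⟨a, a, h1⟩).eq_neg_one_of_two_right
    simp only [c, h1, h2, inv_neg, inv_one]; norm_num
  have hlift : M.IsLiftable (reflMatrix c) := by
    intro a b
    by_cases h0 : M a b = 0
    · rw [h0, pow_zero]
    have hM : M a b = m a b := by simp [m, h0]
    rw [hM]
    exact reflMatrix_mul_pow c a b (m a b) (ξ (m a b)) (hm0 a b) (hξ _ ⟨a, b, rfl⟩) (hm1 a b)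
      rfl (by simp only [c, hsymm b a]) (hdiag a) (hdiag b)
  have hpow := h l _ _ (cs.lift ⟨reflMatrix c, hlift⟩)
  rw [cs.lift_apply_simple, cs.lift_apply_simple] at hpow
  have hdvd := dvd_of_reflMatrix_pow c i j (m i j) n (ξ (m i j)) (hm0 i j) (hξ _ ⟨i, j, rfl⟩) hij
      rfl (by simp only [c, hsymm j i]) (hdiag i) (hdiag j) hpow
  by_cases h0 : M i j = 0
  · simp only [m, h0, if_true] at hdvd
    have : n = 0 := by
      by_contra hn
      have := Nat.le_of_dvd (Nat.pos_of_ne_zero hn) hdvd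
      omega
    simp [this]
  · simpa [m, h0] using hdvd

/-! ### Dihedral groups and dihedral quotients -/

section Dihedral

open DihedralGroup

/-- The relations need only be checked with the actual orders of the products of generators, which
divide the entries of the Coxeter matrix. -/
theorem isLiftable_of_orderOf {B W G : Type*} [Group W] [Monoid G] {M : CoxeterMatrix B}
    (cs : CoxeterSystem M W) (f : B → G)
    (h : ∀ i j, (f i * f j) ^ orderOf (cs.simple i * cs.simple j) = 1) : M.IsLiftable f := by
  intro i j
  obtain ⟨k, hk⟩ := orderOf_dvd_of_pow_eq_one (cs.simple_mul_simple_pow i j)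
  rw [hk, pow_mul, h, one_pow]

/-- The character of the dihedral group with `r k ↦ φ k` and `sr k ↦ e + φ k`, written with values
in `Multiplicative (ZMod 2)`. For `φ = 0`, `e = 1` it distinguishes reflections from rotations. -/
def dihedralChar (n : ℕ) (φ : ZMod n →+ ZMod 2) (e : ZMod 2) :
    DihedralGroup n →* Multiplicative (ZMod 2) :=
  MonoidHom.mk' (fun g => match g with
    | r k => Multiplicative.ofAdd (φ k)
    | sr k => Multiplicative.ofAdd (e + φ k)) (by
    have key : ∀ a b e : ZMod 2, e + (b - a) = a + (e + b) ∧ b - a = e + a + (e + b) ∧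
      e + (a + b) = e + a + b := by decide
    rintro (a | a) (b | b)
    · simp
    · simp only [r_mul_sr, ← ofAdd_add, map_sub]
      rw [(key _ _ _).1]
    · simp only [sr_mul_r, ← ofAdd_add, map_add]
      rw [(key _ _ _).2.2]
    · simp only [sr_mul_sr, ← ofAdd_add, map_sub]
      rw [(key _ _ _).2.1])

theorem dihedralChar_r (n : ℕ) (φ : ZMod n →+ ZMod 2) (e : ZMod 2) (k : ZMod n) :
    dihedralChar n φ e (r k) = Multiplicative.ofAdd (φ k) := rfl

theorem dihedralChar_sr (n : ℕ) (φ : ZMod n →+ ZMod 2) (e : ZMod 2) (k : ZMod n) :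
    dihedralChar n φ e (sr k) = Multiplicative.ofAdd (e + φ k) := rfl

theorem isUnit_of_odd {k : ℕ} (h2 : 2 ∣ 2 ^ k) (a : ZMod (2 ^ k))
    (ha : ZMod.castHom h2 (ZMod 2) a = 1) : IsUnit a := by
  have : NeZero (2 ^ k) := ⟨by positivity⟩
  rw [← ZMod.natCast_zmod_val a] at ha ⊢
  rw [map_natCast] at ha
  rw [ZMod.isUnit_iff_coprime]
  exact Nat.Coprime.pow_right _ (Nat.coprime_two_right.2 (ZMod.natCast_eq_one_iff_odd.1 ha))

theorem dvd_of_r_pow {n : ℕ} {a : ZMod n} (ha : IsUnit a) {k : ℕ}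
    (h : (r a : DihedralGroup n) ^ k = 1) : n ∣ k := by
  rw [r_pow, one_def, r.injEq, ha.mul_right_eq_zero] at h
  exact (ZMod.natCast_eq_zero_iff _ _).1 h

/-- For odd `q`, a rotation of order dividing `2` is trivial. -/
theorem eq_one_of_sgn {q : ℕ} (hq : Odd q) {g : DihedralGroup q}
    (h1 : dihedralChar q 0 1 g = 1) (h2 : g ^ 2 = 1) : g = 1 := by
  rcases g with a | a
  · have hu : IsUnit (2 : ZMod q) := by
      have := (ZMod.isUnit_iff_coprime 2 q).2 (Nat.coprime_two_left.2 hq)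
      exact_mod_cast this
    rw [r_pow, one_def, r.injEq] at h2
    have h3 : a = 0 := hu.mul_left_eq_zero.1 (by exact_mod_cast h2)
    rw [h3, r_zero]
  · rw [dihedralChar_sr] at h1
    exact absurd h1 (by simp)

theorem exists_dihedral_hom {B W : Type*} [Group W] {M : CoxeterMatrix B} (cs : CoxeterSystem M W)
    [DecidableEq B] (heven : ∀ i j, i ≠ j → 2 ∣ orderOf (cs.simple i * cs.simple j))
    {i j : B} (hij : i ≠ j) {n : ℕ} (hdvd : n ∣ orderOf (cs.simple i * cs.simple j)) :
    ∃ f : W →* DihedralGroup n,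
      ∀ l, f (cs.simple l) = if l = i then sr 0 else if l = j then sr 1 else 1 := by
  let f₀ : B → DihedralGroup n := fun l => if l = i then sr 0 else if l = j then sr 1 else 1
  have f₀i : f₀ i = sr 0 := if_pos rfl
  have f₀j : f₀ j = sr 1 := (if_neg hij.symm).trans (if_pos rfl)
  have f₀1 (l) (hi : l ≠ i) (hj : l ≠ j) : f₀ l = 1 := (if_neg hi).trans (if_neg hj)
  have f₀2 (l) : f₀ l * f₀ l = 1 := by
    simp only [f₀]; split_ifs <;> simp
  have f₀4 : (sr 0 * sr 1 : DihedralGroup n) ^ n = 1 := by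
    rw [sr_mul_sr, sub_zero, r_one_pow_n]
  have f₀4' : (sr 1 * sr 0 : DihedralGroup n) ^ n = 1 := by
    rw [sr_mul_sr, zero_sub, ← inv_r, inv_pow, r_one_pow_n, inv_one]
  have hf₀ : M.IsLiftable f₀ := by
    refine isLiftable_of_orderOf cs _ fun a b => ?_
    by_cases hab : a = b
    · rw [hab, f₀2, one_pow]
    have of_one (h : f₀ a = 1 ∨ f₀ b = 1) :
        (f₀ a * f₀ b) ^ orderOf (cs.simple a * cs.simple b) = 1 := by
      obtain ⟨c, hc⟩ := heven a b hab
      rcases h with h | h <;> simp [h, hc, pow_mul, sq, f₀2]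
    obtain ⟨c, hc⟩ := hdvd
    have hc' : orderOf (cs.simple j * cs.simple i) = n * c := by
      rw [← hc, ← orderOf_inv, mul_inv_rev, cs.inv_simple, cs.inv_simple]
    by_cases hai : a = i
    · by_cases hbj : b = j
      · rw [hai, hbj, hc, pow_mul, f₀i, f₀j, f₀4, one_pow]
      · exact of_one (.inr (f₀1 b (fun h => hab (hai.trans h.symm)) hbj))
    · by_cases haj : a = j
      · by_cases hbi : b = i
        · rw [haj, hbi, hc', pow_mul, f₀i, f₀j, f₀4', one_pow]
        · exact of_one (.inr (f₀1 b hbi (fun h => hab (haj.trans h.symm))))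
      · exact of_one (.inl (f₀1 a hai haj))
  exact ⟨cs.lift ⟨f₀, hf₀⟩, fun l => cs.lift_apply_simple hf₀ l⟩

/-! ### The 2-power part of the orders -/

/-- The characters `xi` and `xj` dual to `i` and `j` factor through the quotient onto the dihedral
group of order `2 * 2 ^ k`, where involutions in their supports must be reflections. Reflections
`sr a` in the support of `xi` have `a` even, those in the support of `xj` have `a` odd. -/
theorem two_pow_dvd {B W : Type*} [Group W] {M : CoxeterMatrix B} (cs : CoxeterSystem M W)
    [DecidableEq B] (heven : ∀ i j, i ≠ j → 2 ∣ orderOf (cs.simple i * cs.simple j))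
    {i j : B} (hij : i ≠ j) {k : ℕ} (hk : 2 ≤ k)
    (hdvd : 2 ^ k ∣ orderOf (cs.simple i * cs.simple j))
    (xi xj : W →* Multiplicative (ZMod 2))
    (hxi : ∀ l, xi (cs.simple l) = if l = i then Multiplicative.ofAdd 1 else 1)
    (hxj : ∀ l, xj (cs.simple l) = if l = j then Multiplicative.ofAdd 1 else 1)
    (g : W) (hg : g * g = 1) (hig : xi g = Multiplicative.ofAdd 1) :
    xj g = 1 ∧ ∀ h : W, h * h = 1 → xj h = Multiplicative.ofAdd 1 → 2 ^ k ∣ orderOf (g * h) := by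
  have h2 : 2 ∣ 2 ^ k := dvd_pow_self 2 (by omega)
  let φ : ZMod (2 ^ k) →+ ZMod 2 := (ZMod.castHom h2 (ZMod 2)).toAddMonoidHom
  have φ1 : φ 1 = 1 := map_one (ZMod.castHom h2 (ZMod 2))
  have φ0 : φ 0 = 0 := map_zero φ
  obtain ⟨f, hf⟩ := exists_dihedral_hom cs heven hij hdvd
  have hfi : (dihedralChar _ φ 1).comp f = xi := by
    refine cs.ext_simple fun l => ?_
    rw [MonoidHom.comp_apply, hf, hxi]
    split_ifs with h1 h2
    · rw [dihedralChar_sr, φ0]; rfl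
    · rw [dihedralChar_sr, φ1]; rfl
    · exact map_one _
  have hfj : (dihedralChar _ φ 0).comp f = xj := by
    refine cs.ext_simple fun l => ?_
    rw [MonoidHom.comp_apply, hf, hxj]
    split_ifs with h1 h2 h3
    · exact absurd (h1.symm.trans h2) hij
    · rw [dihedralChar_sr, φ0]; rfl
    · rw [dihedralChar_sr, φ1]; rfl
    · exact map_one _
  -- An involution is not mapped to a rotation by an odd amount, whose order is `2 ^ k > 2`.
  have norot (w : W) (hw : w * w = 1) (a : ZMod (2 ^ k)) (hwa : f w = r a) : φ a = 0 := by
    by_contra hne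
    have h1 : φ a = 1 := (by decide : ∀ z : ZMod 2, z ≠ 0 → z = 1) _ hne
    have h3 : (r a : DihedralGroup (2 ^ k)) ^ 2 = 1 := by
      rw [← hwa, ← map_pow, sq, hw, map_one]
    have := Nat.le_of_dvd two_pos (dvd_of_r_pow (isUnit_of_odd h2 a h1) h3)
    have := Nat.pow_le_pow_right two_pos hk
    omega
  rw [← hfi, MonoidHom.comp_apply] at hig
  rcases hfg : f g with a | a
  · rw [hfg, dihedralChar_r, norot g hg a hfg] at hig
    exact absurd hig (by decide)
  have ha : φ a = 0 := by
    rw [hfg, dihedralChar_sr] at hig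
    exact (by decide : ∀ z : ZMod 2, 1 + z = 1 → z = 0) _ (Multiplicative.ofAdd.injective hig)
  refine ⟨by rw [← hfj, MonoidHom.comp_apply, hfg, dihedralChar_sr, ha]; rfl, fun h hh hjh => ?_⟩
  rw [← hfj, MonoidHom.comp_apply] at hjh
  rcases hfh : f h with b | b
  · rw [hfh, dihedralChar_r, norot h hh b hfh] at hjh
    exact absurd hjh (by decide)
  have hb : φ b = 1 := by
    rw [hfh, dihedralChar_sr, zero_add] at hjh
    exact Multiplicative.ofAdd.injective hjh
  have hu : IsUnit (b - a) := isUnit_of_odd h2 _ (by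
    change φ (b - a) = 1
    rw [map_sub, ha, hb, sub_zero])
  refine dvd_of_r_pow hu ?_
  rw [← sr_mul_sr, ← hfg, ← hfh, ← map_mul, ← map_pow, pow_orderOf_eq_one, map_one]

/-! ### The odd part of the orders -/

/-- Changing `f` to `1` on the generators outside the support of `χ` gives another homomorphism `g`,
because products of a generator in the support and one outside have even order. The reflection
character of `g` is `χ`, so `g` kills all the generators `cs.simple k` with `k ≠ l`, and its image has
order `2`. -/
theorem constant_on_support {B B' W : Type*} [Group W] {M : CoxeterMatrix B}
    (cs : CoxeterSystem M W) {M' : CoxeterMatrix B'} (cs' : CoxeterSystem M' W)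
    [DecidableEq B] {q : ℕ} (hq : Odd q) (l : B) (χ : W →* Multiplicative (ZMod 2))
    (hχ : ∀ k, χ (cs.simple k) = if k = l then Multiplicative.ofAdd 1 else 1)
    (f : W →* DihedralGroup q)
    (hf : ∀ z, χ (cs'.simple z) = Multiplicative.ofAdd 1 → ∃ d, f (cs'.simple z) = sr d) :
    ∃ c, ∀ z, χ (cs'.simple z) = Multiplicative.ofAdd 1 → f (cs'.simple z) = sr c := by
  classical
  have dich : ∀ u : Multiplicative (ZMod 2), u ≠ Multiplicative.ofAdd 1 → u = 1 := by decide
  let g₀ : B' → DihedralGroup q := fun z =>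
    if χ (cs'.simple z) = Multiplicative.ofAdd 1 then f (cs'.simple z) else 1
  have g₀p (z) (h : χ (cs'.simple z) = Multiplicative.ofAdd 1) : g₀ z = f (cs'.simple z) := if_pos h
  have g₀n (z) (h : χ (cs'.simple z) ≠ Multiplicative.ofAdd 1) : g₀ z = 1 := if_neg h
  have even_of_ne (u : Multiplicative (ZMod 2)) (m : ℕ) (hu : u = Multiplicative.ofAdd 1)
      (h : u ^ m = 1) : 2 ∣ m := by
    rw [hu] at h
    have h' : (m • (1 : ZMod 2)) = 0 := h
    rw [nsmul_one] at h'
    exact (ZMod.natCast_eq_zero_iff _ _).1 h'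
  have hpow (z w) : (χ (cs'.simple z) * χ (cs'.simple w)) ^
      orderOf (cs'.simple z * cs'.simple w) = 1 := by
    rw [← map_mul, ← map_pow, pow_orderOf_eq_one, map_one]
  have hg₀ : M'.IsLiftable g₀ := by
    refine isLiftable_of_orderOf cs' _ fun z w => ?_
    have fsq (z) : f (cs'.simple z) ^ 2 = 1 := by rw [← map_pow, cs'.simple_sq, map_one]
    by_cases hz : χ (cs'.simple z) = Multiplicative.ofAdd 1 <;>
      by_cases hw : χ (cs'.simple w) = Multiplicative.ofAdd 1
    · rw [g₀p z hz, g₀p w hw, ← map_mul, ← map_pow, pow_orderOf_eq_one, map_one]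
    · obtain ⟨c, hc⟩ := even_of_ne _ _ (by rw [hz, dich _ hw, mul_one]) (hpow z w)
      rw [g₀p z hz, g₀n w hw, mul_one, hc, pow_mul, fsq, one_pow]
    · obtain ⟨c, hc⟩ := even_of_ne _ _ (by rw [hw, dich _ hz, one_mul]) (hpow z w)
      rw [g₀n z hz, g₀p w hw, one_mul, hc, pow_mul, fsq, one_pow]
    · rw [g₀n z hz, g₀n w hw, one_mul, one_pow]
  let g := cs'.lift ⟨g₀, hg₀⟩
  have hg (z) : g (cs'.simple z) = g₀ z := cs'.lift_apply_simple hg₀ z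
  have hsgn : (dihedralChar q 0 1).comp g = χ := by
    refine cs'.ext_simple fun z => ?_
    rw [MonoidHom.comp_apply, hg]
    by_cases hz : χ (cs'.simple z) = Multiplicative.ofAdd 1
    · obtain ⟨d, hd⟩ := hf z hz
      rw [g₀p z hz, hd, hz, dihedralChar_sr]; simp
    · rw [g₀n z hz, dich _ hz, map_one]
  have hone (k) (hk : k ≠ l) : g (cs.simple k) = 1 := by
    have h1 : dihedralChar q 0 1 (g (cs.simple k)) = 1 := by
      rw [← MonoidHom.comp_apply, hsgn, hχ, if_neg hk]
    have h2 : g (cs.simple k) ^ 2 = 1 := by rw [← map_pow, cs.simple_sq, map_one]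
    exact eq_one_of_sgn hq h1 h2
  obtain ⟨c, hc⟩ : ∃ c, g (cs.simple l) = sr c := by
    have h1 : dihedralChar q 0 1 (g (cs.simple l)) = Multiplicative.ofAdd 1 := by
      rw [← MonoidHom.comp_apply, hsgn, hχ, if_pos rfl]
    rcases hgl : g (cs.simple l) with a | a
    · rw [hgl, dihedralChar_r] at h1
      exact absurd h1 (by rw [AddMonoidHom.zero_apply]; decide)
    · exact ⟨a, rfl⟩
  have himg (w : W) : g w = 1 ∨ g w = sr c := by
    induction w using cs.simple_induction with
    | simple k =>
      by_cases hk : k = l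
      · right; rw [hk, hc]
      · left; exact hone k hk
    | one => left; exact map_one g
    | mul w w' h h' =>
      rw [map_mul]
      rcases h with h | h <;> rcases h' with h' | h' <;> simp [h, h']
  refine ⟨c, fun z hz => ?_⟩
  obtain ⟨d, hd⟩ := hf z hz
  rcases himg (cs'.simple z) with h | h
  · rw [hg, g₀p z hz, hd, one_def] at h
    cases h
  · rwa [hg, g₀p z hz] at h

/-- Generators in the support of `xi` all have the same image `sr c`, those in the support of `xj`
the same image `sr c'`, and the others are killed. Surjectivity of the quotient map onto the dihedral
group of order `2 * q` forces `c' - c` to be a unit. -/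
theorem odd_dvd {B B' W : Type*} [Group W] {M : CoxeterMatrix B}
    (cs : CoxeterSystem M W) {M' : CoxeterMatrix B'} (cs' : CoxeterSystem M' W)
    [DecidableEq B] (heven : ∀ i j, i ≠ j → 2 ∣ orderOf (cs.simple i * cs.simple j))
    {i j : B} (hij : i ≠ j) {q : ℕ} (hq : Odd q)
    (hdvd : q ∣ orderOf (cs.simple i * cs.simple j))
    (xi xj : W →* Multiplicative (ZMod 2))
    (hxi : ∀ l, xi (cs.simple l) = if l = i then Multiplicative.ofAdd 1 else 1)
    (hxj : ∀ l, xj (cs.simple l) = if l = j then Multiplicative.ofAdd 1 else 1)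
    (hdisj : ∀ z, xi (cs'.simple z) = Multiplicative.ofAdd 1 → xj (cs'.simple z) = 1)
    (x y : B') (hx : xi (cs'.simple x) = Multiplicative.ofAdd 1)
    (hy : xj (cs'.simple y) = Multiplicative.ofAdd 1) :
    q ∣ orderOf (cs'.simple x * cs'.simple y) := by
  have dich : ∀ u : Multiplicative (ZMod 2), u = Multiplicative.ofAdd 1 ∨ u = 1 := by decide
  have hne : (1 : Multiplicative (ZMod 2)) ≠ Multiplicative.ofAdd 1 := by decide
  obtain ⟨f, hf⟩ := exists_dihedral_hom cs heven hij hdvd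
  have hsgn : (dihedralChar q 0 1).comp f = xi * xj := by
    refine cs.ext_simple fun l => ?_
    rw [MonoidHom.comp_apply, hf, MonoidHom.mul_apply, hxi, hxj]
    split_ifs with h1 h2 h3
    · exact absurd (h1.symm.trans h2) hij
    · rw [dihedralChar_sr]; simp
    · rw [dihedralChar_sr]; simp
    · rw [map_one, one_mul]
  have hrefl (z) (hz : (xi * xj) (cs'.simple z) = Multiplicative.ofAdd 1) :
      ∃ d, f (cs'.simple z) = sr d := by
    rw [← hsgn, MonoidHom.comp_apply] at hz
    rcases hfz : f (cs'.simple z) with a | a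
    · rw [hfz, dihedralChar_r] at hz
      exact absurd hz (by rw [AddMonoidHom.zero_apply]; decide)
    · exact ⟨a, rfl⟩
  obtain ⟨c, hc⟩ := constant_on_support cs cs' hq i xi hxi f fun z hz =>
    hrefl z (by rw [MonoidHom.mul_apply, hz, hdisj z hz, mul_one])
  obtain ⟨c', hc'⟩ := constant_on_support cs cs' hq j xj hxj f fun z hz => by
    refine hrefl z ?_
    rcases dich (xi (cs'.simple z)) with h | h
    · exact absurd ((hdisj z h).symm.trans hz) hne
    · rw [MonoidHom.mul_apply, hz, h, one_mul]
  -- The image of `f` lies in the dihedral subgroup generated by the two reflections.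
  have himg (w : W) : (∃ t, f w = r (t * (c' - c))) ∨ (∃ t, f w = sr (c + t * (c' - c))) := by
    induction w using cs'.simple_induction with
    | simple z =>
      rcases dich (xi (cs'.simple z)) with h | h
      · exact .inr ⟨0, by rw [hc z h, zero_mul, add_zero]⟩
      rcases dich (xj (cs'.simple z)) with h' | h'
      · exact .inr ⟨1, by rw [hc' z h']; congr 1; ring⟩
      refine .inl ⟨0, ?_⟩
      rw [zero_mul, r_zero]
      refine eq_one_of_sgn hq ?_ (by rw [← map_pow, cs'.simple_sq, map_one])
      rw [← MonoidHom.comp_apply, hsgn, MonoidHom.mul_apply, h, h', one_mul]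
    | one => exact .inl ⟨0, by rw [map_one, zero_mul, r_zero]⟩
    | mul w w' h h' =>
      rw [map_mul]
      rcases h with ⟨t, h⟩ | ⟨t, h⟩ <;> rcases h' with ⟨u, h'⟩ | ⟨u, h'⟩ <;> rw [h, h']
      · exact .inl ⟨t + u, by rw [r_mul_r]; congr 1; ring⟩
      · exact .inr ⟨u - t, by rw [r_mul_sr]; congr 1; ring⟩
      · exact .inr ⟨t + u, by rw [sr_mul_r]; congr 1; ring⟩
      · exact .inl ⟨u - t, by rw [sr_mul_sr]; congr 1; ring⟩
  have hu : IsUnit (c' - c) := by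
    have h1 : f (cs.simple i * cs.simple j) = r 1 := by
      rw [map_mul, hf, hf, if_pos rfl, if_neg hij.symm, if_pos rfl, sr_mul_sr, sub_zero]
    rcases himg (cs.simple i * cs.simple j) with ⟨t, ht⟩ | ⟨t, ht⟩
    · rw [h1, r.injEq] at ht
      exact IsUnit.of_mul_eq_one t (by rw [mul_comm, ← ht])
    · rw [h1] at ht; cases ht
  refine dvd_of_r_pow hu ?_
  rw [← sr_mul_sr, ← hc x hx, ← hc' y hy, ← map_mul, ← map_pow, pow_orderOf_eq_one, map_one]

end Dihedral

/-! ### Characters of order two and the matching of generators -/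

/-- The character that is nontrivial exactly on the generators in the class `O`. -/
theorem exists_char {B P W : Type*} [Group W] {M : CoxeterMatrix B} (cs : CoxeterSystem M W)
    [DecidableEq P] (π : B → P)
    (hπ : ∀ x y, π x ≠ π y → 2 ∣ orderOf (cs.simple x * cs.simple y)) (O : P) :
    ∃ η : W →* Multiplicative (ZMod 2),
      ∀ x, η (cs.simple x) = if π x = O then Multiplicative.ofAdd 1 else 1 := by
  let f : B → Multiplicative (ZMod 2) := fun x => if π x = O then Multiplicative.ofAdd 1 else 1
  have hf : M.IsLiftable f := by
    refine isLiftable_of_orderOf cs _ fun x y => ?_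
    have hsq : ∀ u : Multiplicative (ZMod 2), u ^ 2 = 1 := by decide
    by_cases hxy : π x = π y
    · have : f x = f y := by simp only [f, hxy]
      rw [this, ← sq, hsq, one_pow]
    · obtain ⟨c, hc⟩ := hπ x y hxy
      rw [hc, pow_mul, hsq, one_pow]
  exact ⟨cs.lift ⟨f, hf⟩, fun x => cs.lift_apply_simple hf x⟩

/-- A character constant on classes is a combination of the characters dual to the classes. -/
theorem char_expand {B P W : Type*} [Group W] {M : CoxeterMatrix B} (cs : CoxeterSystem M W)
    [DecidableEq P] [Fintype P] (π : B → P) (rep : P → B) (hrep : ∀ O, π (rep O) = O)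
    (η : P → W →* Multiplicative (ZMod 2))
    (hη : ∀ O x, η O (cs.simple x) = if π x = O then Multiplicative.ofAdd 1 else 1)
    (χ : W →* Multiplicative (ZMod 2))
    (hχ : ∀ x y, π x = π y → χ (cs.simple x) = χ (cs.simple y)) (w : W) :
    Multiplicative.toAdd (χ w) =
      ∑ O, Multiplicative.toAdd (η O w) * Multiplicative.toAdd (χ (cs.simple (rep O))) := by
  induction w using cs.simple_induction with
  | simple x =>
    have (O : P) : Multiplicative.toAdd (η O (cs.simple x)) *
        Multiplicative.toAdd (χ (cs.simple (rep O))) =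
        if π x = O then Multiplicative.toAdd (χ (cs.simple (rep O))) else 0 := by
      rw [hη]; split_ifs <;> simp
    simp_rw [this]
    rw [Finset.sum_ite_eq Finset.univ (π x), if_pos (Finset.mem_univ _)]
    rw [hχ x (rep (π x)) (hrep _).symm]
  | one => simp
  | mul w w' h h' =>
    simp only [map_mul, toAdd_mul, h, h', add_mul, Finset.sum_add_distrib]

/-- An invertible matrix has a nonzero term in the expansion of its determinant. -/
theorem exists_matching {B P F : Type*} [Fintype B] [Fintype P] [DecidableEq B] [DecidableEq P]
    [Field F] (A : Matrix P B F) (A' : Matrix B P F) (h : A' * A = 1) (h' : A * A' = 1) :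
    ∃ ψ : B ≃ P, ∀ i, A (ψ i) i ≠ 0 := by
  have hcard : Fintype.card B = Fintype.card P :=
    Matrix.square_of_invertible A' A h h'
  let e : B ≃ P := Fintype.equivOfCardEq hcard
  have hdet : (A.submatrix e id).det ≠ 0 := by
    have : A'.submatrix id e * A.submatrix e id = 1 := by
      rw [Matrix.submatrix_mul_equiv, h, Matrix.submatrix_id_id]
    intro h0
    have := congrArg Matrix.det this
    rw [Matrix.det_mul, h0, mul_zero, Matrix.det_one] at this
    exact zero_ne_one this
  rw [Matrix.det_apply] at hdet
  obtain ⟨σ, -, hσ⟩ := Finset.exists_ne_zero_of_sum_ne_zero hdet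
  refine ⟨σ.trans e, fun i hi => hσ ?_⟩
  rw [Finset.prod_eq_zero (Finset.mem_univ i) (by simpa using hi), smul_zero]

/-- Combination of the 2-power part and the odd part; an infinite order is treated as divisible by
all powers of `2`. -/
theorem dvd_of_matching {B B' W : Type*} [Group W] {M : CoxeterMatrix B}
    (cs : CoxeterSystem M W) {M' : CoxeterMatrix B'} (cs' : CoxeterSystem M' W) [DecidableEq B]
    (hm : ∀ i j : B, i ≠ j →
      orderOf (cs.simple i * cs.simple j) = 2 ∨
      (∃ k : ℕ, 0 < k ∧ orderOf (cs.simple i * cs.simple j) = 4 * k) ∨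
      orderOf (cs.simple i * cs.simple j) = 0)
    {i j : B} (hij : i ≠ j) (xi xj : W →* Multiplicative (ZMod 2))
    (hxi : ∀ l, xi (cs.simple l) = if l = i then Multiplicative.ofAdd 1 else 1)
    (hxj : ∀ l, xj (cs.simple l) = if l = j then Multiplicative.ofAdd 1 else 1)
    (x y : B') (hx : xi (cs'.simple x) = Multiplicative.ofAdd 1)
    (hy : xj (cs'.simple y) = Multiplicative.ofAdd 1)
    (hxy : 2 ∣ orderOf (cs'.simple x * cs'.simple y)) :
    orderOf (cs.simple i * cs.simple j) ∣ orderOf (cs'.simple x * cs'.simple y) := by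
  have heven (i j) (hij : i ≠ j) : 2 ∣ orderOf (cs.simple i * cs.simple j) := by
    rcases hm i j hij with h | ⟨k, -, h⟩ | h <;> omega
  by_cases h2 : orderOf (cs.simple i * cs.simple j) = 2
  · rwa [h2]
  have h4 : 2 ^ 2 ∣ orderOf (cs.simple i * cs.simple j) := by
    rcases hm i j hij with h | ⟨k, -, h⟩ | h <;> omega
  have htwo (k : ℕ) (hk : 2 ^ k ∣ orderOf (cs.simple i * cs.simple j)) :
      2 ^ k ∣ orderOf (cs'.simple x * cs'.simple y) := by
    rcases lt_or_ge k 2 with hk2 | hk2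
    · exact (pow_dvd_pow 2 (by omega : k ≤ 1)).trans (by rwa [pow_one])
    · exact (two_pow_dvd cs heven hij hk2 hk xi xj hxi hxj _ (cs'.simple_mul_simple_self x) hx).2 _
        (cs'.simple_mul_simple_self y) hy
  have hodd (q : ℕ) (hq : Odd q) (hqd : q ∣ orderOf (cs.simple i * cs.simple j)) :
      q ∣ orderOf (cs'.simple x * cs'.simple y) :=
    odd_dvd cs cs' heven hij hq hqd xi xj hxi hxj (fun z hz =>
      (two_pow_dvd cs heven hij le_rfl h4 xi xj hxi hxj _ (cs'.simple_mul_simple_self z) hz).1)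
      x y hx hy
  by_cases h0 : orderOf (cs.simple i * cs.simple j) = 0
  · rw [h0, zero_dvd_iff]
    by_contra hne
    have := Nat.le_of_dvd (Nat.pos_of_ne_zero hne) (htwo (orderOf (cs'.simple x * cs'.simple y))
      (by rw [h0]; exact dvd_zero _))
    exact absurd Nat.lt_two_pow_self (not_lt.2 this)
  · obtain ⟨k, q, hq, hkq⟩ := Nat.exists_eq_two_pow_mul_odd h0
    rw [hkq] at htwo hodd ⊢
    exact (Nat.Coprime.pow_left k (Nat.coprime_two_left.2 hq)).mul_dvd_of_dvd_of_dvd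
      (htwo k (dvd_mul_right _ _)) (hodd q hq (dvd_mul_left _ _))

/-! ### Transport of finite quotients and rigidity -/

/-- For finite `G`, the self-map of `W →* G` that sends `f` to the homomorphism with
`cs'.simple x ↦ f (cs.simple (ψ.symm (π x)))` is injective, hence surjective. -/
theorem exists_hom_transport {B B' P W G : Type*} [Group W] [Monoid G] [Finite G] [Finite B]
    {M : CoxeterMatrix B}
    (cs : CoxeterSystem M W) {M' : CoxeterMatrix B'} (cs' : CoxeterSystem M' W)
    (π : B' → P) (hsurj : Function.Surjective π) (ψ : B ≃ P)
    (h : ∀ x y, π x ≠ π y → orderOf (cs.simple (ψ.symm (π x)) * cs.simple (ψ.symm (π y))) ∣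
      orderOf (cs'.simple x * cs'.simple y)) (g : W →* G) :
    ∃ f : W →* G, ∀ x, g (cs'.simple x) = f (cs.simple (ψ.symm (π x))) := by
  have hlift (f : W →* G) : M'.IsLiftable fun x => f (cs.simple (ψ.symm (π x))) := by
    refine isLiftable_of_orderOf cs' _ fun x y => ?_
    by_cases hxy : π x = π y
    · rw [hxy, ← map_mul, cs.simple_mul_simple_self, map_one, one_pow]
    · obtain ⟨c, hc⟩ := h x y hxy
      rw [← map_mul, ← map_pow, hc, pow_mul, pow_orderOf_eq_one, one_pow, map_one]
  let Φ : (W →* G) → (W →* G) := fun f => cs'.lift ⟨_, hlift f⟩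
  have hΦ (f : W →* G) (x : B') : Φ f (cs'.simple x) = f (cs.simple (ψ.symm (π x))) :=
    cs'.lift_apply_simple (hlift f) x
  have hinj : Function.Injective Φ := by
    intro f f' hff
    refine cs.ext_simple fun i => ?_
    obtain ⟨x, hx⟩ := hsurj (ψ i)
    have := DFunLike.congr_fun hff (cs'.simple x)
    rwa [hΦ, hΦ, hx, ψ.symm_apply_apply] at this
  have : Finite (W →* G) := Finite.of_injective (fun f : W →* G => fun i => f (cs.simple i))
    fun f f' hff => cs.ext_simple fun i => congrFun hff i
  obtain ⟨f, rfl⟩ := Finite.surjective_of_injective hinj g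
  exact ⟨f, hΦ f⟩

/-- **Theorem (Radcliffe).** If `(W,S)` is a Coxeter system in which, for all `s ≠ t` in `S`,
the order `m(s,t)` of `st` equals `2`, is a positive multiple of `4`, or is infinite,
then `W` is rigid: for every Coxeter generating set `S'` of `W` there is a bijection
`ψ : S → S'` with `m(s,t) = m'(ψ s, ψ t)` for all `s, t ∈ S`.
(Here `orderOf x = 0` encodes infinite order.) -/
theorem rigid_of_even_orders {B : Type*} [Fintype B] {W : Type*} [Group W]
    {M : CoxeterMatrix B} (cs : CoxeterSystem M W)
    (hm : ∀ i j : B, i ≠ j →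
      orderOf (cs.simple i * cs.simple j) = 2 ∨
      (∃ k : ℕ, 0 < k ∧ orderOf (cs.simple i * cs.simple j) = 4 * k) ∨
      orderOf (cs.simple i * cs.simple j) = 0) :
    ∀ (B' : Type*) [Fintype B'] (M' : CoxeterMatrix B') (cs' : CoxeterSystem M' W),
      ∃ ψ : B ≃ B', ∀ i j : B,
        orderOf (cs.simple i * cs.simple j)
          = orderOf (cs'.simple (ψ i) * cs'.simple (ψ j)) := by
  intro B' _ M' cs'
  classical
  let rel : B' → B' → Prop := fun x y => Odd (orderOf (cs'.simple x * cs'.simple y))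
  let π : B' → Quot rel := Quot.mk rel
  have hsurj : Function.Surjective π := Quot.mk_surjective
  have : Finite (Quot rel) := Finite.of_surjective π hsurj
  have : Fintype (Quot rel) := Fintype.ofFinite _
  have hrep (O : Quot rel) : π O.out = O := Quot.out_eq O
  have hπ (x y) (hxy : π x ≠ π y) : 2 ∣ orderOf (cs'.simple x * cs'.simple y) := by
    rw [← even_iff_two_dvd, ← Nat.not_odd_iff_even]
    exact fun hodd => hxy (Quot.sound hodd)
  have heven (i j) (hij : i ≠ j) : 2 ∣ orderOf (cs.simple i * cs.simple j) := by
    rcases hm i j hij with h | ⟨k, -, h⟩ | h <;> omega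
  have hconst (χ : W →* Multiplicative (ZMod 2)) (x y) (hxy : π x = π y) :
      χ (cs'.simple x) = χ (cs'.simple y) := by
    have hlift (x y) (hr : rel x y) : χ (cs'.simple x) = χ (cs'.simple y) := by
      obtain ⟨k, hk⟩ := hr
      have h1 : (χ (cs'.simple x) * χ (cs'.simple y)) ^
          orderOf (cs'.simple x * cs'.simple y) = 1 := by
        rw [← map_mul, ← map_pow, pow_orderOf_eq_one, map_one]
      have hsq : ∀ u : Multiplicative (ZMod 2), u ^ 2 = 1 := by decide
      rw [hk, pow_succ, pow_mul, hsq, one_pow, one_mul] at h1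
      exact (by decide : ∀ u v : Multiplicative (ZMod 2), u * v = 1 → u = v) _ _ h1
    exact congrArg (Quot.lift (fun x => χ (cs'.simple x)) hlift) hxy
  -- The characters dual to the generators of the first system, and to the classes of the second.
  choose X hX using exists_char cs id heven
  choose η hη using exists_char cs' π hπ
  obtain ⟨ψ, hψ⟩ := exists_matching
    (Matrix.of fun (O : Quot rel) (i : B) => Multiplicative.toAdd (X i (cs'.simple O.out)))
    (Matrix.of fun (i : B) (O : Quot rel) => Multiplicative.toAdd (η O (cs.simple i)))
    (by
      ext k i
      rw [Matrix.mul_apply]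
      simp only [Matrix.of_apply]
      rw [← char_expand cs' π Quot.out hrep η hη (X i) (hconst _), hX, Matrix.one_apply]
      simp only [id]
      split_ifs <;> rfl)
    (by
      ext O O'
      rw [Matrix.mul_apply]
      simp only [Matrix.of_apply]
      have := char_expand cs id id (fun _ => rfl) X hX (η O') (fun x y h => by rw [id.eq_1] at h; rw [h]; rfl)
        (cs'.simple O.out)
      simp only [id] at this
      rw [← this, hη, hrep, Matrix.one_apply]
      split_ifs <;> rfl)
  have hXψ (x : B') : X (ψ.symm (π x)) (cs'.simple x) = Multiplicative.ofAdd 1 := by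
    have h1 := hψ (ψ.symm (π x))
    rw [ψ.apply_symm_apply, Matrix.of_apply,
      hconst _ _ x (hrep (π x))] at h1
    exact (by decide : ∀ u : Multiplicative (ZMod 2), Multiplicative.toAdd u ≠ 0 →
      u = Multiplicative.ofAdd 1) _ h1
  have hdvd (x y) (hxy : π x ≠ π y) :
      orderOf (cs.simple (ψ.symm (π x)) * cs.simple (ψ.symm (π y))) ∣
        orderOf (cs'.simple x * cs'.simple y) :=
    dvd_of_matching cs cs' hm (fun h => hxy (ψ.symm.injective h)) _ _ (hX _) (hX _) x y
      (hXψ x) (hXψ y) (hπ x y hxy)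
  have hback (x y) : M' x y ∣ orderOf (cs.simple (ψ.symm (π x)) * cs.simple (ψ.symm (π y))) := by
    refine dvd_of_forall_finite cs' x y _ fun l _ _ _ g => ?_
    obtain ⟨f, hf⟩ := exists_hom_transport cs cs' π hsurj ψ hdvd g
    rw [hf, hf, ← map_mul, ← map_pow, pow_orderOf_eq_one, map_one]
  have hinj : Function.Injective π := by
    intro x y hxy
    by_contra hne
    have h1 := hback x y
    rw [hxy, cs.simple_mul_simple_self, orderOf_one, Nat.dvd_one] at h1
    exact M'.off_diagonal x y hne h1
  let θ : B' ≃ Quot rel := Equiv.ofBijective π ⟨hinj, hsurj⟩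
  refine ⟨ψ.trans θ.symm, fun i j => ?_⟩
  have key (i : B) : ψ.symm (π (θ.symm (ψ i))) = i := by
    have : π (θ.symm (ψ i)) = ψ i := θ.apply_symm_apply (ψ i)
    rw [this, ψ.symm_apply_apply]
  rcases eq_or_ne i j with rfl | hij
  · simp
  have h1 := hdvd (θ.symm (ψ i)) (θ.symm (ψ j))
    (fun h => hij (ψ.injective (θ.symm.injective (hinj h))))
  have h2 := hback (θ.symm (ψ i)) (θ.symm (ψ j))
  rw [key, key] at h1 h2
  exact Nat.dvd_antisymm h1
    ((orderOf_dvd_of_pow_eq_one (cs'.simple_mul_simple_pow _ _)).trans h2)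
end
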